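/- arXiv:1911.06170 — 5 statements merged into one kernel-verified Lean document; each statement's English description precedes it below -/
import Mathlib

section
/- For all integers a ≥ 2 and ℓ ≥ 1 and every real t with 0 < t < 1/2, the Hausdorff dimension of 𝓛(a) ∩ [0, t) is at most log(2⌈a^ℓ·t⌉)/log(a^ℓ). In particular, 𝓛(a) has Lebesgue measure zero. -/
/-- Distance from `x` to the nearest integer. -/
noncomputable def distNearestInt (x : ℝ) : ℝ := |x - round x|

/-- `limsup_{n→∞} ‖ξ·α^n‖`. -/
noncomputable def limsupDist (α ξ : ℝ) : ℝ :=
  Filter.limsup (fun n : ℕ => distNearestInt (ξ * α ^ n)) Filter.atTop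

/-- The multiplicative Markoff–Lagrange spectrum `𝓛(α)`. -/
noncomputable def specL (α : ℝ) : Set ℝ := {l : ℝ | ∃ ξ : ℝ, limsupDist α ξ = l}

lemma dni_le (x : ℝ) (k : ℤ) : distNearestInt x ≤ |x - k| := round_le x k

lemma dni_nonneg (x : ℝ) : 0 ≤ distNearestInt x := abs_nonneg _

lemma dni_le_half (x : ℝ) : distNearestInt x ≤ 1 / 2 := abs_sub_round x

lemma dni_neg_le (x : ℝ) : distNearestInt (-x) ≤ distNearestInt x := by
  have h := dni_le (-x) (-round x)
  have e : |-x - ((-round x : ℤ) : ℝ)| = |x - round x| := by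
    rw [← abs_neg]; congr 1; push_cast; ring
  rw [e] at h
  exact h

lemma dni_neg (x : ℝ) : distNearestInt (-x) = distNearestInt x :=
  le_antisymm (dni_neg_le x) (by simpa using dni_neg_le (-x))

lemma dni_sub_int_le (x : ℝ) (k : ℤ) : distNearestInt (x - k) ≤ distNearestInt x := by
  have h := dni_le (x - k) (round x - k)
  have e : x - k - ((round x - k : ℤ) : ℝ) = x - round x := by
    push_cast; ring
  rw [e] at h
  exact h

lemma dni_sub_int (x : ℝ) (k : ℤ) : distNearestInt (x - k) = distNearestInt x :=
  le_antisymm (dni_sub_int_le x k) (by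
    have := dni_sub_int_le (x - k) (-k)
    simpa using this)

lemma dni_le_add (x y : ℝ) : distNearestInt x ≤ distNearestInt y + |x - y| := by
  have h := dni_le x (round y)
  have h2 := abs_add_le (y - round y) (x - y)
  have e : y - round y + (x - y) = x - round y := by ring
  rw [e] at h2
  exact h.trans h2

lemma dni_mul (z : ℝ) (m : ℕ) :
    distNearestInt (distNearestInt z * m) = distNearestInt (z * m) := by
  have h1 : distNearestInt ((z - round z) * m) = distNearestInt (z * m) := by
    have := dni_sub_int (z * m) (round z * m)
    rw [← this]; congr 1; push_cast; ring
  rw [← h1]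
  rcases abs_choice (z - round z) with h | h
  · conv_lhs => rw [show distNearestInt z = z - round z from h]
  · conv_lhs => rw [show distNearestInt z = -(z - round z) from h]
    rw [neg_mul, dni_neg]

lemma bdd_le (α ξ : ℝ) : Filter.IsBoundedUnder (· ≤ ·) Filter.atTop
    (fun n : ℕ => distNearestInt (ξ * α ^ n)) :=
  Filter.isBoundedUnder_of ⟨1 / 2, fun _ => dni_le_half _⟩

lemma bdd_ge (α ξ : ℝ) : Filter.IsCoboundedUnder (· ≤ ·) Filter.atTop
    (fun n : ℕ => distNearestInt (ξ * α ^ n)) :=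
  Filter.IsBoundedUnder.isCoboundedUnder_le
    (Filter.isBoundedUnder_of ⟨0, fun _ => dni_nonneg _⟩)

lemma spec_nonneg (α L : ℝ) (h : L ∈ specL α) : 0 ≤ L := by
  obtain ⟨ξ, rfl⟩ := h
  exact Filter.le_limsup_of_frequently_le (Filter.Frequently.of_forall fun _ => dni_nonneg _)
    (bdd_le α ξ)

lemma spec_le_half (α L : ℝ) (h : L ∈ specL α) : L ≤ 1 / 2 := by
  obtain ⟨ξ, rfl⟩ := h
  exact Filter.limsup_le_of_le (bdd_ge α ξ) (Filter.Eventually.of_forall fun _ => dni_le_half _)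

lemma spec_inv (a : ℕ) (L : ℝ) (h : L ∈ specL a) (m : ℕ) :
    distNearestInt (L * ((a ^ m : ℕ) : ℝ)) ≤ L := by
  obtain ⟨ξ, hL⟩ := h
  by_contra! hlt
  set g := distNearestInt (L * ((a ^ m : ℕ) : ℝ)) with hg
  set B : ℝ := ((a ^ m : ℕ) : ℝ) with hB
  have hB0 : 0 ≤ B := Nat.cast_nonneg _
  set c := (L + g) / 2 with hc
  set δ := (g - L) / 2 / (B + 1) with hδ
  have hδ0 : 0 < δ := by
    rw [hδ]; apply div_pos <;> linarith
  have hδB : δ * (B + 1) = (g - L) / 2 := by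
    rw [hδ]; field_simp
  have h1 : ∀ᶠ n : ℕ in Filter.atTop, distNearestInt (ξ * (a : ℝ) ^ n) < c :=
    Filter.eventually_lt_of_limsup_lt (f := Filter.atTop)
      (by change limsupDist a ξ < c; rw [hL]; linarith) (bdd_le a ξ)
  have h2 : ∀ᶠ n : ℕ in Filter.atTop, distNearestInt (ξ * (a : ℝ) ^ n) < L + δ :=
    Filter.eventually_lt_of_limsup_lt (f := Filter.atTop)
      (by change limsupDist a ξ < _; rw [hL]; linarith) (bdd_le a ξ)
  have h3 : ∃ᶠ n : ℕ in Filter.atTop, L - δ < distNearestInt (ξ * (a : ℝ) ^ n) :=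
    Filter.frequently_lt_of_lt_limsup (bdd_ge a ξ)
      (by change _ < limsupDist a ξ; rw [hL]; linarith)
  have h4 := (Filter.tendsto_add_atTop_nat m).eventually h1
  obtain ⟨n, hn3, hn2, hn4⟩ := (h3.and_eventually (h2.and h4)).exists
  set f := distNearestInt (ξ * (a : ℝ) ^ n) with hf
  have e : distNearestInt (f * B) = distNearestInt (ξ * (a : ℝ) ^ (n + m)) := by
    rw [hf, hB, dni_mul]; congr 1; push_cast; ring
  rw [← e] at hn4
  have h5 := dni_le_add (L * B) (f * B)
  have h6 : |L * B - f * B| ≤ δ * B := by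
    rw [← sub_mul, abs_mul, abs_of_nonneg hB0]
    apply mul_le_mul_of_nonneg_right _ hB0
    rw [abs_le]; constructor <;> linarith
  linarith [hg]

/-- digit -/
noncomputable def dig (b : ℕ) (x : ℝ) (k : ℕ) : ℤ :=
  ⌊(b : ℝ) ^ (k + 1) * x⌋ - b * ⌊(b : ℝ) ^ k * x⌋

lemma dig_mem (b : ℕ) (hb : 0 < b) (t x : ℝ) (k : ℕ)
    (h : distNearestInt (x * (b : ℝ) ^ k) < t) :
    dig b x k ∈ Finset.Ico (0 : ℤ) ⌈(b : ℝ) * t⌉ ∪ Finset.Ico ((b : ℤ) - ⌈(b : ℝ) * t⌉) b := by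
  have hb' : (0 : ℝ) < b := by exact_mod_cast hb
  have e : dig b x k = ⌊(b : ℝ) * Int.fract ((b : ℝ) ^ k * x)⌋ := by
    unfold dig Int.fract
    rw [mul_sub, ← mul_assoc, ← pow_succ']
    rw [show (b : ℝ) * (⌊(b : ℝ) ^ k * x⌋ : ℝ) = ((b * ⌊(b : ℝ) ^ k * x⌋ : ℤ) : ℝ) by push_cast; rfl,
      Int.floor_sub_intCast]
  rw [mul_comm] at h
  unfold distNearestInt at h
  rw [abs_sub_round_eq_min, min_lt_iff] at h
  rw [e]
  set y := Int.fract ((b : ℝ) ^ k * x)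
  have y0 : 0 ≤ y := Int.fract_nonneg _
  have y1 : y < 1 := Int.fract_lt_one _
  have hc := Int.le_ceil ((b : ℝ) * t)
  rw [Finset.mem_union, Finset.mem_Ico, Finset.mem_Ico]
  rcases h with h | h
  · left
    refine ⟨Int.floor_nonneg.2 (by positivity), Int.floor_lt.2 ?_⟩
    nlinarith
  · right
    refine ⟨Int.le_floor.2 ?_, Int.floor_lt.2 ?_⟩
    · push_cast; nlinarith
    · push_cast; nlinarith

lemma dig_floor (b : ℕ) (x y : ℝ) (hx : x ∈ Set.Ico (0 : ℝ) 1) (hy : y ∈ Set.Ico (0 : ℝ) 1)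
    (n : ℕ) (h : ∀ k < n, dig b x k = dig b y k) :
    ⌊(b : ℝ) ^ n * x⌋ = ⌊(b : ℝ) ^ n * y⌋ := by
  induction n with
  | zero =>
    simp only [pow_zero, one_mul]
    rw [Int.floor_eq_zero_iff.2 hx, Int.floor_eq_zero_iff.2 hy]
  | succ n ih =>
    have h1 := ih fun k hk => h k (by omega)
    have h2 := h n (by omega)
    unfold dig at h2
    rw [h1] at h2
    linarith

open MeasureTheory in
lemma cover_dim (b : ℕ) (hb : 2 ≤ b) (D : Finset ℤ) (M : ℝ) (hM : 1 ≤ M) (hD : (D.card : ℝ) ≤ M)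
    (S : Set ℝ) (hS : S ⊆ Set.Ico 0 1) (hdig : ∀ x ∈ S, ∀ k, dig b x k ∈ D) :
    dimH S ≤ ENNReal.ofReal (Real.log M / Real.log b) := by
  have hb1 : (1 : ℝ) < b := by exact_mod_cast hb
  have hb0 : (0 : ℝ) < b := by linarith
  have hlb : 0 < Real.log b := Real.log_pos hb1
  set d := Real.log M / Real.log b with hd
  have hd0 : 0 ≤ d := div_nonneg (Real.log_nonneg hM) hlb.le
  have hbd : (b : ℝ) ^ d = M := by
    rw [Real.rpow_def_of_pos hb0, hd, mul_div_cancel₀ _ hlb.ne', Real.exp_log (by linarith)]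
  let T : (n : ℕ) → (Fin n → D) → Set ℝ := fun n w =>
    {x | x ∈ Set.Ico (0 : ℝ) 1 ∧ ∀ i : Fin n, dig b x i = w i}
  let r : ℕ → ENNReal := fun n => ENNReal.ofReal (((b : ℝ)⁻¹) ^ n)
  have hr : Filter.Tendsto r Filter.atTop (nhds 0) := by
    have h := tendsto_pow_atTop_nhds_zero_of_lt_one (r := (b : ℝ)⁻¹) (by positivity)
      (inv_lt_one_of_one_lt₀ hb1)
    have h2 := ENNReal.tendsto_ofReal h
    rw [ENNReal.ofReal_zero] at h2
    exact h2
  have hT : ∀ n, ∀ w, Metric.ediam (T n w) ≤ r n := by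
    intro n w
    apply Metric.ediam_le
    rintro x ⟨hx, hxw⟩ y ⟨hy, hyw⟩
    rw [edist_dist]
    apply ENNReal.ofReal_le_ofReal
    have hfl := dig_floor b x y hx hy n fun k hk => by
      rw [hxw ⟨k, hk⟩, hyw ⟨k, hk⟩]
    have := Int.abs_sub_lt_one_of_floor_eq_floor hfl
    rw [← mul_sub, abs_mul, abs_of_pos (by positivity)] at this
    rw [Real.dist_eq, inv_pow, ← one_div, le_div_iff₀ (by positivity)]
    linarith
  have hcov : ∀ n, S ⊆ ⋃ w, T n w := by
    intro n x hx
    rw [Set.mem_iUnion]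
    exact ⟨fun i => ⟨dig b x i, hdig x hx i⟩, hS hx, fun i => rfl⟩
  have hH := Measure.hausdorffMeasure_le_liminf_sum d S r hr T
    (Filter.Eventually.of_forall hT) (Filter.Eventually.of_forall hcov)
  have hsum : ∀ n, ∑ w, Metric.ediam (T n w) ^ d ≤ 1 := by
    intro n
    calc ∑ w, Metric.ediam (T n w) ^ d ≤ ∑ w : Fin n → D, r n ^ d :=
          Finset.sum_le_sum fun w _ => ENNReal.rpow_le_rpow (hT n w) hd0
      _ = ENNReal.ofReal ((D.card : ℝ) ^ n * (M⁻¹) ^ n) := by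
          rw [Finset.sum_const, nsmul_eq_mul, Finset.card_univ, Fintype.card_fun, Fintype.card_fin,
            Fintype.card_coe]
          simp only [r]
          rw [ENNReal.ofReal_rpow_of_nonneg (by positivity) hd0, ENNReal.ofReal_mul (by positivity)]
          congr 1
          · rw [← Nat.cast_pow, ENNReal.ofReal_natCast]
          · congr 1
            rw [← Real.rpow_natCast, ← Real.rpow_mul (by positivity), mul_comm,
              Real.rpow_mul (by positivity), Real.inv_rpow hb0.le, hbd, Real.rpow_natCast]
      _ ≤ 1 := by
          rw [ENNReal.ofReal_le_one, ← mul_pow]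
          apply pow_le_one₀ (by positivity)
          rw [← div_eq_mul_inv, div_le_one (by linarith)]
          exact hD
  have hlim : Filter.liminf (fun n => ∑ w, Metric.ediam (T n w) ^ d) Filter.atTop ≤ 1 := by
    refine (Filter.liminf_le_liminf (v := fun _ => (1 : ENNReal))
      (Filter.Eventually.of_forall hsum)).trans ?_
    simp
  have hfin : μH[(d.toNNReal : ℝ)] S ≠ ⊤ := by
    rw [Real.coe_toNNReal _ hd0]
    exact ne_top_of_le_ne_top ENNReal.one_ne_top (hH.trans hlim)
  exact dimH_le_of_hausdorffMeasure_ne_top hfin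

lemma dim_bound (a : ℕ) (ha : 2 ≤ a) (ℓ : ℕ) (hℓ : 1 ≤ ℓ) (t : ℝ) (ht0 : 0 < t)
    (ht : t < 1 / 2) :
    dimH (specL a ∩ Set.Ico 0 t) ≤
      ENNReal.ofReal
        (Real.log (2 * (⌈(a : ℝ) ^ ℓ * t⌉ : ℝ)) / Real.log ((a : ℝ) ^ ℓ)) := by
  have hb : 2 ≤ a ^ ℓ := ha.trans (Nat.le_self_pow (by omega) a)
  have hbp : (0 : ℝ) < ((a ^ ℓ : ℕ) : ℝ) := by exact_mod_cast (by omega : 0 < a ^ ℓ)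
  rw [← Nat.cast_pow]
  have hc : 0 < ⌈((a ^ ℓ : ℕ) : ℝ) * t⌉ := Int.ceil_pos.2 (by positivity)
  have hc1 : (1 : ℝ) ≤ (⌈((a ^ ℓ : ℕ) : ℝ) * t⌉ : ℝ) := by exact_mod_cast hc
  refine cover_dim (a ^ ℓ) hb (Finset.Ico (0 : ℤ) ⌈((a ^ ℓ : ℕ) : ℝ) * t⌉ ∪
    Finset.Ico (((a ^ ℓ : ℕ) : ℤ) - ⌈((a ^ ℓ : ℕ) : ℝ) * t⌉) ((a ^ ℓ : ℕ) : ℤ)) _ (by linarith) ?_ _ ?_ ?_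
  · have h := Finset.card_union_le (Finset.Ico (0 : ℤ) ⌈((a ^ ℓ : ℕ) : ℝ) * t⌉)
      (Finset.Ico (((a ^ ℓ : ℕ) : ℤ) - ⌈((a ^ ℓ : ℕ) : ℝ) * t⌉) ((a ^ ℓ : ℕ) : ℤ))
    rw [Int.card_Ico, Int.card_Ico] at h
    have h2 : (((Finset.Ico (0 : ℤ) ⌈((a ^ ℓ : ℕ) : ℝ) * t⌉ ∪
      Finset.Ico (((a ^ ℓ : ℕ) : ℤ) - ⌈((a ^ ℓ : ℕ) : ℝ) * t⌉) ((a ^ ℓ : ℕ) : ℤ)).card : ℕ) : ℤ)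
        ≤ 2 * ⌈((a ^ ℓ : ℕ) : ℝ) * t⌉ := by
      generalize ⌈((a ^ ℓ : ℕ) : ℝ) * t⌉ = c at *
      generalize ((a ^ ℓ : ℕ) : ℤ) = z at *
      omega
    exact_mod_cast h2
  · rintro x ⟨_, hx⟩
    exact ⟨hx.1, by linarith [hx.2]⟩
  · rintro x ⟨hx, hxt⟩ k
    apply dig_mem _ (by omega)
    have := spec_inv a x hx (ℓ * k)
    rw [pow_mul, Nat.cast_pow] at this
    exact this.trans_lt hxt.2

open MeasureTheory in
lemma vol_zero_aux (a : ℕ) (ha : 2 ≤ a) (t : ℝ) (ht0 : 0 < t)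
    (ht : t < 1 / 2) : volume (specL a ∩ Set.Ico 0 t) = 0 := by
  have ha1 : (1 : ℝ) < a := by exact_mod_cast ha
  obtain ⟨l, hl⟩ := pow_unbounded_of_one_lt (1 / (1 / 2 - t)) ha1
  have hl' : 1 / (1 / 2 - t) < (a : ℝ) ^ (l + 1) :=
    hl.trans_le (pow_le_pow_right₀ ha1.le (by omega))
  rw [div_lt_iff₀ (by linarith)] at hl'
  have h := dim_bound a ha (l + 1) (by omega) t ht0 ht
  set b : ℝ := (a : ℝ) ^ (l + 1)
  have hb1 : 1 < b := one_lt_pow₀ ha1 (by omega)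
  have hc : 0 < ⌈b * t⌉ := Int.ceil_pos.2 (by positivity)
  have hc1 : (1 : ℝ) ≤ (⌈b * t⌉ : ℝ) := by exact_mod_cast hc
  have hc2 := Int.ceil_lt_add_one (b * t)
  have hlt : dimH (specL a ∩ Set.Ico 0 t) < ((1 : NNReal) : ENNReal) := by
    refine h.trans_lt ?_
    rw [ENNReal.coe_one, ENNReal.ofReal_lt_one, div_lt_one (Real.log_pos hb1)]
    apply Real.log_lt_log (by linarith)
    linarith
  have := hausdorffMeasure_of_dimH_lt hlt
  rw [NNReal.coe_one, hausdorffMeasure_real] at this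
  exact this

theorem stmt1 (a : ℕ) (ha : 2 ≤ a) (ℓ : ℕ) (hℓ : 1 ≤ ℓ) (t : ℝ) (ht0 : 0 < t)
    (ht : t < 1 / 2) :
    dimH (specL a ∩ Set.Ico 0 t) ≤
      ENNReal.ofReal
        (Real.log (2 * (⌈(a : ℝ) ^ ℓ * t⌉ : ℝ)) / Real.log ((a : ℝ) ^ ℓ)) ∧
    MeasureTheory.volume (specL a) = 0 := by
  refine ⟨dim_bound a ha ℓ hℓ t ht0 ht, ?_⟩
  have hsub : specL a ⊆ {1 / 2} ∪ ⋃ n : ℕ, specL a ∩ Set.Ico 0 (1 / 2 - 1 / ((n : ℝ) + 3)) := by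
    intro x hx
    have h0 := spec_nonneg a x hx
    rcases (spec_le_half a x hx).eq_or_lt with h | h
    · left; exact h
    · right
      rw [Set.mem_iUnion]
      obtain ⟨n, hn⟩ := exists_nat_one_div_lt (sub_pos.2 h)
      refine ⟨n, hx, h0, ?_⟩
      have : 1 / ((n : ℝ) + 3) ≤ 1 / ((n : ℝ) + 1) :=
        one_div_le_one_div_of_le (by positivity) (by linarith)
      linarith
  refine MeasureTheory.measure_mono_null hsub (MeasureTheory.measure_union_null (by simp) ?_)
  refine MeasureTheory.measure_iUnion_null fun n => vol_zero_aux a ha _ ?_ ?_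
  · have : 1 / ((n : ℝ) + 3) < 1 / 2 := one_div_lt_one_div_of_lt (by norm_num) (by
      have : (0 : ℝ) ≤ n := Nat.cast_nonneg n
      linarith)
    linarith
  · have : 0 < 1 / ((n : ℝ) + 3) := by positivity
    linarith
end

section
/- Let α be a quadratic Pisot unit, i.e. α = (b+√(b²−4))/2 with an integer b ≥ 3 or α = (b+√(b²+4))/2 with an integer b ≥ 1. For every real t ∈ [0, 1/2], the Hausdorff dimension of 𝓛(α) ∩ [0, t] is at most log(4m+1)/log(α), where m = ⌊(2+b)·t⌋. In particular, 𝓛(α) ∩ [0, t₀] has Lebesgue measure zero, where t₀ = (α−1)/(4(b+2)). -/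
open Filter Topology MeasureTheory in
lemma aux_dim (A : Set ℝ) (α : ℝ) (hα : 1 < α) (K : ℕ) (hK : 1 ≤ K) (C : ℝ) (hC : 0 < C)
    (cover : ∀ N : ℕ, ∃ x : (Fin (N+1) → Fin K) → ℝ, ∀ l ∈ A, ∃ d, |l - x d| ≤ C * (α⁻¹) ^ N) :
    dimH A ≤ ENNReal.ofReal (Real.log K / Real.log α) := by
  choose x hx using cover
  set s : ℝ := Real.log K / Real.log α with hs
  have hlog : 0 < Real.log α := Real.log_pos hα
  have hKr : (1 : ℝ) ≤ K := by exact_mod_cast hK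
  have hs0 : 0 ≤ s := div_nonneg (Real.log_nonneg hKr) hlog.le
  have hα0 : 0 < α := by linarith
  have hαs : α ^ s = K := by
    rw [Real.rpow_def_of_pos hα0, hs, mul_div_cancel₀ _ hlog.ne', Real.exp_log (by linarith)]
  have hdiam : ∀ N d, Metric.ediam (Metric.closedBall (x N d) (C * (α⁻¹) ^ N)) ≤
      ENNReal.ofReal (2 * C * (α⁻¹) ^ N) := by
    intro N d
    apply Metric.ediam_le_of_forall_dist_le
    intro y hy z hz
    have := dist_triangle_right y z (x N d)
    rw [Metric.mem_closedBall] at hy hz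
    linarith
  have key := Measure.hausdorffMeasure_le_liminf_sum (ι := fun N => (Fin (N+1) → Fin K)) (l := atTop) s A
    (fun N => ENNReal.ofReal (2 * C * (α⁻¹) ^ N)) ?_
    (fun N d => Metric.closedBall (x N d) (C * (α⁻¹) ^ N)) (Eventually.of_forall hdiam) ?_
  · have hbd : ∀ N : ℕ, ∑ d : Fin (N+1) → Fin K,
        Metric.ediam (Metric.closedBall (x N d) (C * (α⁻¹) ^ N)) ^ s ≤
          ENNReal.ofReal (K * (2 * C) ^ s) := by
      intro N
      calc _ ≤ ∑ d : Fin (N+1) → Fin K, ENNReal.ofReal ((2 * C * (α⁻¹) ^ N) ^ s) := by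
            apply Finset.sum_le_sum
            intro d _
            rw [← ENNReal.ofReal_rpow_of_nonneg (by positivity) hs0]
            exact ENNReal.rpow_le_rpow (hdiam N d) hs0
        _ = ENNReal.ofReal ((K:ℝ) ^ (N+1) * (2 * C * (α⁻¹) ^ N) ^ s) := by
            rw [Finset.sum_const, Finset.card_univ, nsmul_eq_mul, ENNReal.ofReal_mul (by positivity)]
            simp [ENNReal.ofReal_pow]
        _ = _ := by
            congr 1
            rw [Real.mul_rpow (by positivity) (by positivity), ← Real.rpow_natCast,
              ← Real.rpow_natCast, ← Real.rpow_mul (by positivity), mul_comm (N:ℝ) s,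
              Real.rpow_mul (by positivity), Real.inv_rpow hα0.le, hαs]
            rw [Real.rpow_natCast, Real.rpow_natCast, pow_succ, inv_pow]
            field_simp
    have h2 : μH[s] A ≤ ENNReal.ofReal (K * (2 * C) ^ s) := by
      refine key.trans ?_
      refine (liminf_le_liminf (Eventually.of_forall hbd)).trans ?_
      simp
    rw [ENNReal.ofReal]
    apply dimH_le_of_hausdorffMeasure_ne_top
    rw [Real.coe_toNNReal _ hs0]
    exact ne_top_of_le_ne_top ENNReal.ofReal_ne_top h2
  · have h1 : Tendsto (fun N : ℕ => 2 * C * (α⁻¹) ^ N) atTop (𝓝 (2 * C * 0)) :=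
      (tendsto_pow_atTop_nhds_zero_of_lt_one (by positivity) (inv_lt_one_of_one_lt₀ hα)).const_mul _
    have := ENNReal.tendsto_ofReal h1
    simpa using this
  · refine Eventually.of_forall fun N l hl => ?_
    obtain ⟨d, hd⟩ := hx N l hl
    rw [Set.mem_iUnion]
    exact ⟨d, by rwa [Metric.mem_closedBall, Real.dist_eq]⟩

lemma aux_Q (Q s : ℕ → ℝ) (α : ℝ) (h0 : α ≠ 0) (h : ∀ n, Q (n+1) = α * Q n - s n) (n N : ℕ) :
    Q n = ∑ k ∈ Finset.range N, (α⁻¹) ^ (k+1) * s (n+k) + (α⁻¹) ^ N * Q (n+N) := by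
  induction N with
  | zero => simp
  | succ N ih =>
    rw [Finset.sum_range_succ, ih, ← add_assoc n N 1, h (n+N), pow_succ]
    field_simp
    ring

lemma aux_P (P s : ℕ → ℝ) (β : ℝ) (h : ∀ n, P (n+1) = β * P n - s n) (j N : ℕ) :
    P (j+N) = β ^ N * P j - ∑ k ∈ Finset.range N, β ^ k * s (j+N-1-k) := by
  induction N with
  | zero => simp
  | succ N ih =>
    rw [Finset.sum_range_succ', ← add_assoc, h, ih, mul_sub, Finset.mul_sum]
    have : ∀ k, j + N + 1 - 1 - (k+1) = j + N - 1 - k := by intro k; omega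
    simp only [this, pow_succ]
    simp
    rw [← sub_sub, Finset.sum_congr rfl (fun k _ => show β * (β ^ k * s (j+N-1-k)) = β ^ k * β * s (j+N-1-k) by ring)]
    ring

lemma aux_core (ε s : ℕ → ℝ) (α β σ b : ℝ) (h0 : α ≠ 0) (hσ : α * β = σ) (hb : α + β = b)
    (h : ∀ n, ε (n+2) = b * ε (n+1) - σ * ε n - s n) (j N : ℕ) :
    (α - β) * ε (j+N+1) = s (j+N) + ∑ k ∈ Finset.range N,
      (s (j+N+1+k) + σ ^ (k+1) * s (j+N-1-k)) * (α⁻¹) ^ (k+1)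
      + ((α⁻¹) ^ N * (ε (j+N+1+N+1) - β * ε (j+N+1+N)) - β ^ (N+1) * (ε (j+1) - α * ε j)) := by
  have hQ := aux_Q (fun n => ε (n+1) - β * ε n) s α h0
    (by intro n; simp only [h n, ← hσ, ← hb]; ring) (j+N+1) N
  have hP := aux_P (fun n => ε (n+1) - α * ε n) s β
    (by intro n; simp only [h n, ← hσ, ← hb]; ring) j (N+1)
  rw [Finset.sum_range_succ'] at hP
  have hβ : β = σ * α⁻¹ := by rw [← hσ]; field_simp
  have e1 : ∀ k, j + (N + 1) - 1 - (k+1) = j + N - 1 - k := by intro k; omega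
  have e2 : ∑ k ∈ Finset.range N, β ^ (k+1) * s (j+N-1-k) =
     ∑ k ∈ Finset.range N, σ ^ (k+1) * s (j+N-1-k) * (α⁻¹) ^ (k+1) := by
    apply Finset.sum_congr rfl
    intro k _
    rw [hβ, mul_pow]; ring
  have e3 : ∑ k ∈ Finset.range N, (α⁻¹) ^ (k+1) * s (j+N+1+k) =
     ∑ k ∈ Finset.range N, s (j+N+1+k) * (α⁻¹) ^ (k+1) := 
    Finset.sum_congr rfl (fun k _ => mul_comm _ _)
  simp only [e1, e2] at hP
  rw [e3] at hQ
  simp only [add_mul, Finset.sum_add_distrib]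
  have e4 : j + (N+1) = j + N + 1 := by ring
  simp only [e4] at hP
  simp only [Nat.add_sub_cancel, Nat.sub_zero, pow_zero, one_mul, Nat.add_one_sub_one] at hP hQ
  linarith

lemma aux_cover (α β : ℝ) (σ b : ℤ) (hα : 1 < α) (hσ1 : σ = 1 ∨ σ = -1) (hσ : α * β = σ)
    (hb : α + β = b) (hb1 : 1 ≤ b) (hab : 0 < α - β) (t : ℝ) (m : ℕ) (hm : (2 + (b:ℝ)) * t < m + 1)
    (l : ℝ) (hl : l ∈ specL α) (hlt : l ≤ t) (N : ℕ) :
    ∃ d : Fin (N+1) → Fin (4*m+1),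
      |l - abs ((∑ k : Fin (N+1), (((d k : ℕ) : ℝ) - 2 * m) * (α⁻¹) ^ (k:ℕ)) / (α - β))| ≤
        (1 + (2 + α) / (α - β)) * (α⁻¹) ^ N := by
  obtain ⟨ξ, hξ⟩ := hl
  have hα0 : 0 < α := by linarith
  have ha0 : 0 < α⁻¹ := by positivity
  have hσabs : |(σ:ℝ)| = 1 := by rcases hσ1 with h | h <;> simp [h]
  have hβ : β = σ * α⁻¹ := by rw [← hσ]; field_simp
  have hβabs : |β| = α⁻¹ := by rw [hβ, abs_mul, hσabs, one_mul, abs_of_pos ha0]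
  have ha1 : α⁻¹ < 1 := inv_lt_one_of_one_lt₀ hα
  set u : ℕ → ℤ := fun n => round (ξ * α ^ n) with hu
  set ε : ℕ → ℝ := fun n => ξ * α ^ n - u n with hε
  set S : ℕ → ℤ := fun n => u (n+2) - b * u (n+1) + σ * u n with hS
  have hε2 : ∀ n, |ε n| ≤ 1/2 := fun n => abs_sub_round _
  have hrec : ∀ n, ε (n+2) = b * ε (n+1) - σ * ε n - S n := by
    intro n
    simp only [hε, hS, ← hσ, ← hb]
    push_cast
    rw [← hσ, ← hb]
    ring
  have hlim : Filter.limsup (fun n => |ε n|) Filter.atTop = l := hξ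
  have hbdd : Filter.IsBoundedUnder (· ≤ ·) Filter.atTop (fun n => |ε n|) :=
    Filter.isBoundedUnder_of ⟨1/2, hε2⟩
  have hcob : Filter.IsCoboundedUnder (· ≤ ·) Filter.atTop (fun n => |ε n|) :=
    (Filter.isBoundedUnder_of ⟨0, fun n => abs_nonneg (ε n)⟩ : Filter.IsBoundedUnder (· ≥ ·) Filter.atTop (fun n => |ε n|)).isCoboundedUnder_le
  have hbr : (1:ℝ) ≤ b := by exact_mod_cast hb1
  have hev : ∀ᶠ n in Filter.atTop, |ε n| < (m+1) / (2 + b) := by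
    apply Filter.eventually_lt_of_limsup_lt _ hbdd
    rw [hlim]
    refine hlt.trans_lt ?_
    rw [lt_div_iff₀ (by linarith)]; linarith
  obtain ⟨n0, hn0⟩ := Filter.eventually_atTop.1 hev
  have hSm : ∀ n, n0 ≤ n → |S n| ≤ m := by
    intro n hn
    have h1 := hn0 n hn
    have h2 := hn0 (n+1) (by omega)
    have h3 := hn0 (n+2) (by omega)
    have hSe : (S n : ℝ) = b * ε (n+1) - σ * ε n - ε (n+2) := by rw [hrec]; ring
    have h4 : |(S n : ℝ)| ≤ b * |ε (n+1)| + |ε n| + |ε (n+2)| := by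
      rw [hSe]
      refine (abs_sub _ _).trans ?_
      gcongr
      refine (abs_sub _ _).trans ?_
      rw [abs_mul, abs_mul, hσabs, one_mul, abs_of_nonneg (by linarith : (0:ℝ) ≤ b)]
    have h5 : |(S n : ℝ)| < m + 1 := by
      rw [lt_div_iff₀ (by linarith)] at h1 h2 h3
      have : |(S n : ℝ)| * (2 + b) < (m+1) * (2 + b) := by
        calc _ ≤ (b * |ε (n+1)| + |ε n| + |ε (n+2)|) * (2 + b) := by gcongr
          _ < _ := by nlinarith
      exact lt_of_mul_lt_mul_right this (by linarith)
    have h6 : |S n| < m + 1 := by exact_mod_cast h5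
    omega
  have hδ : 0 < (α⁻¹) ^ N := by positivity
  have hev2 : ∀ᶠ n in Filter.atTop, |ε n| < l + (α⁻¹) ^ N :=
    Filter.eventually_lt_of_limsup_lt (by rw [hlim]; linarith) hbdd
  have hfr : ∃ᶠ n in Filter.atTop, l - (α⁻¹) ^ N < |ε n| :=
    Filter.frequently_lt_of_lt_limsup hcob (by rw [hlim]; linarith)
  obtain ⟨n, hn1, hn2, hn3⟩ := (hfr.and_eventually (hev2.and (Filter.eventually_ge_atTop (n0+N+1)))).exists
  obtain ⟨j, rfl⟩ : ∃ j, n = j + N + 1 := ⟨n - N - 1, by omega⟩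
  have hcore := aux_core ε (fun n => (S n : ℝ)) α β σ b hα0.ne' hσ hb hrec j N
  let e : ℕ → ℤ := fun k => match k with
    | 0 => S (j+N)
    | k+1 => S (j+N+1+k) + σ ^ (k+1) * S (j+N-1-k)
  have he : ∀ k, k ≤ N → |e k| ≤ 2 * m := by
    intro k hk
    cases k with
    | zero =>
      have := hSm (j+N) (by omega)
      have h : e 0 = S (j+N) := rfl
      rw [h]; omega
    | succ k =>
      have h1 := hSm (j+N+1+k) (by omega)
      have h2 := hSm (j+N-1-k) (by omega)
      have h : e (k+1) = S (j+N+1+k) + σ ^ (k+1) * S (j+N-1-k) := rfl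
      have h3 : |σ ^ (k+1) * S (j+N-1-k)| = |S (j+N-1-k)| := by
        rw [abs_mul, abs_pow]
        rcases hσ1 with h | h <;> simp [h]
      rw [h]
      refine (abs_add_le _ _).trans ?_
      rw [h3]; omega
  have hd : ∀ k, k ≤ N → (e k + 2*m).toNat < 4*m+1 := by
    intro k hk
    have := abs_le.1 (he k hk)
    omega
  refine ⟨fun k => ⟨(e k + 2*m).toNat, hd k (by omega)⟩, ?_⟩
  have hsum : (∑ k : Fin (N+1), ((((e k + 2*m).toNat : ℕ) : ℝ) - 2 * m) * (α⁻¹) ^ (k:ℕ)) =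
      S (j+N) + ∑ k ∈ Finset.range N,
      ((S (j+N+1+k) : ℝ) + (σ:ℝ) ^ (k+1) * S (j+N-1-k)) * (α⁻¹) ^ (k+1) := by
    have : ∀ k : Fin (N+1), ((((e k + 2*m).toNat : ℕ) : ℝ) - 2 * m) * (α⁻¹) ^ (k:ℕ) = (e k : ℝ) * (α⁻¹) ^ (k:ℕ) := by
      intro k
      have h1 := abs_le.1 (he k (by omega))
      have h2 : (((e k + 2*m).toNat : ℕ) : ℤ) = e k + 2 * m := Int.toNat_of_nonneg (by omega)
      have h3 : (((e k + 2*m).toNat : ℕ) : ℝ) = e k + 2 * m := by exact_mod_cast h2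
      rw [h3]; ring
    rw [Finset.sum_congr rfl (fun k _ => this k),
      Fin.sum_univ_eq_sum_range (fun k => (e k : ℝ) * (α⁻¹) ^ k) (N+1), Finset.sum_range_succ']
    have h0 : e 0 = S (j+N) := rfl
    have h1 : ∀ k, e (k+1) = S (j+N+1+k) + σ ^ (k+1) * S (j+N-1-k) := fun k => rfl
    simp only [h0, h1]
    push_cast
    ring
  simp only []
  rw [hsum]
  set X : ℝ := S (j+N) + ∑ k ∈ Finset.range N,
      ((S (j+N+1+k) : ℝ) + (σ:ℝ) ^ (k+1) * S (j+N-1-k)) * (α⁻¹) ^ (k+1) with hX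
  have herr : |(α - β) * ε (j+N+1) - X| ≤ (2 + α) * (α⁻¹) ^ N := by
    rw [hcore, add_sub_cancel_left]
    refine (abs_sub _ _).trans ?_
    rw [abs_mul, abs_mul, abs_pow, abs_pow, hβabs, abs_of_pos ha0]
    have h1 : |ε (j+N+1+N+1) - β * ε (j+N+1+N)| ≤ 1 := by
      refine (abs_sub _ _).trans ?_
      rw [abs_mul, hβabs]
      nlinarith [hε2 (j+N+1+N+1), hε2 (j+N+1+N), abs_nonneg (ε (j+N+1+N))]
    have h2 : |ε (j+1) - α * ε j| ≤ 1 + α := by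
      refine (abs_sub _ _).trans ?_
      rw [abs_mul, abs_of_pos hα0]
      nlinarith [hε2 (j+1), hε2 j, abs_nonneg (ε j)]
    have h3 : (α⁻¹)^(N+1) ≤ (α⁻¹)^N := by
      rw [pow_succ]; nlinarith
    calc _ ≤ (α⁻¹)^N * 1 + (α⁻¹)^N * (1 + α) := by gcongr
      _ = _ := by ring
  have herr2 : |ε (j+N+1) - X / (α - β)| ≤ (2 + α) / (α - β) * (α⁻¹) ^ N := by
    have : ε (j+N+1) - X / (α - β) = ((α - β) * ε (j+N+1) - X) / (α - β) := by field_simp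
    rw [this, abs_div, abs_of_pos hab, div_le_iff₀ hab]
    refine herr.trans (le_of_eq ?_)
    field_simp
  have h1 : |l - abs (ε (j+N+1))| ≤ (α⁻¹) ^ N := by rw [abs_le]; constructor <;> linarith
  have h2 := abs_abs_sub_abs_le_abs_sub (ε (j+N+1)) (X / (α - β))
  have h3 := abs_sub_le l (abs (ε (j+N+1))) (abs (X / (α - β)))
  linarith

lemma aux_main (α β : ℝ) (σ b : ℤ) (hα : 1 < α) (hσ1 : σ = 1 ∨ σ = -1) (hσ : α * β = σ)
    (hb : α + β = b) (hb1 : 1 ≤ b) (hab : 0 < α - β) (t : ℝ) (ht : 0 ≤ t) :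
    dimH (specL α ∩ Set.Icc 0 t) ≤
      ENNReal.ofReal
        (Real.log (4 * (⌊(2 + (b : ℝ)) * t⌋ : ℝ) + 1) / Real.log α) := by
  have hbr : (1:ℝ) ≤ b := by exact_mod_cast hb1
  have hm0 : 0 ≤ ⌊(2 + (b : ℝ)) * t⌋ := Int.floor_nonneg.2 (by positivity)
  obtain ⟨m, hm⟩ := Int.eq_ofNat_of_zero_le hm0
  have hlt := Int.lt_floor_add_one ((2 + (b : ℝ)) * t)
  rw [hm] at hlt ⊢
  have hC : 0 < 1 + (2 + α) / (α - β) := by positivity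
  have := aux_dim (specL α ∩ Set.Icc 0 t) α hα (4*m+1) (by omega) _ hC
    (fun N => ⟨_, fun l hl => aux_cover α β σ b hα hσ1 hσ hb hb1 hab t m (by simpa using hlt) l hl.1 hl.2.2 N⟩)
  simpa using this

lemma aux_vol (α β : ℝ) (σ b : ℤ) (hα : 1 < α) (hσ1 : σ = 1 ∨ σ = -1) (hσ : α * β = σ)
    (hb : α + β = b) (hb1 : 1 ≤ b) (hab : 0 < α - β) :
    MeasureTheory.volume (specL α ∩ Set.Icc 0 ((α - 1) / (4 * ((b : ℝ) + 2)))) = 0 := by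
  have hbr : (1:ℝ) ≤ b := by exact_mod_cast hb1
  have hd := aux_main α β σ b hα hσ1 hσ hb hb1 hab ((α - 1) / (4 * ((b : ℝ) + 2)))
    (div_nonneg (by linarith) (by linarith))
  have e : (2 + (b:ℝ)) * ((α - 1) / (4 * ((b : ℝ) + 2))) = (α - 1) / 4 := by
    field_simp
    ring
  rw [e] at hd
  have hfl := Int.floor_le ((α - 1) / 4)
  have hm0 : 0 ≤ ⌊(α - 1) / 4⌋ := Int.floor_nonneg.2 (by linarith)
  set m := ⌊(α - 1) / 4⌋ with hm
  have hm0r : (0:ℝ) ≤ m := by exact_mod_cast hm0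
  have hlt : 4 * (m:ℝ) + 1 < α := by
    refine lt_of_le_of_ne (by linarith) fun heq => ?_
    have h1 : ((4 * m + 1) * (b - (4 * m + 1)) : ℤ) = σ := by
      have : (4 * (m:ℝ) + 1) * (b - (4 * m + 1)) = σ := by rw [heq, ← hσ, ← hb]; ring
      exact_mod_cast this
    have h2 : (4 * m + 1) ∣ (1:ℤ) := by
      rcases hσ1 with h | h
      · exact ⟨b - (4 * m + 1), by rw [h1, h]⟩
      · exact ⟨-(b - (4 * m + 1)), by rw [mul_neg, h1, h]; norm_num⟩
    have h3 := Int.le_of_dvd one_pos h2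
    have h4 : m = 0 := by omega
    rw [h4] at heq
    norm_num at heq
    linarith
  have hlt1 : dimH (specL α ∩ Set.Icc 0 ((α - 1) / (4 * ((b : ℝ) + 2)))) < ((1 : NNReal) : ENNReal) := by
    refine hd.trans_lt ?_
    rw [ENNReal.coe_one, ENNReal.ofReal_lt_one, div_lt_one (Real.log_pos hα)]
    exact Real.log_lt_log (by linarith) hlt
  have := hausdorffMeasure_of_dimH_lt hlt1
  rw [← MeasureTheory.hausdorffMeasure_real]
  simpa using this

theorem stmt2 (b : ℤ) (α : ℝ)
    (h : (3 ≤ b ∧ α = ((b : ℝ) + Real.sqrt ((b : ℝ) ^ 2 - 4)) / 2) ∨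
         (1 ≤ b ∧ α = ((b : ℝ) + Real.sqrt ((b : ℝ) ^ 2 + 4)) / 2))
    (t : ℝ) (ht : t ∈ Set.Icc (0 : ℝ) (1 / 2)) :
    dimH (specL α ∩ Set.Icc 0 t) ≤
      ENNReal.ofReal
        (Real.log (4 * (⌊(2 + (b : ℝ)) * t⌋ : ℝ) + 1) / Real.log α) ∧
    MeasureTheory.volume (specL α ∩ Set.Icc 0 ((α - 1) / (4 * ((b : ℝ) + 2)))) = 0 := by
  rcases h with ⟨hb, hα⟩ | ⟨hb, hα⟩
  · have hbr : (3:ℝ) ≤ b := by exact_mod_cast hb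
    have hp : 0 < (b:ℝ)^2 - 4 := by nlinarith
    have hsq := Real.sq_sqrt hp.le
    have hs := Real.sqrt_pos.2 hp
    set r := Real.sqrt ((b:ℝ)^2 - 4)
    have h1 : 1 < α := by linarith
    have h2 : α * (((b:ℝ) - r) / 2) = (1:ℤ) := by rw [hα]; push_cast; nlinarith
    have h3 : α + (((b:ℝ) - r) / 2) = b := by rw [hα]; ring
    have h4 : 0 < α - (((b:ℝ) - r) / 2) := by rw [hα]; linarith
    exact ⟨aux_main α _ 1 b h1 (Or.inl rfl) h2 h3 (by omega) h4 t ht.1,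
      aux_vol α _ 1 b h1 (Or.inl rfl) h2 h3 (by omega) h4⟩
  · have hbr : (1:ℝ) ≤ b := by exact_mod_cast hb
    have hp : 0 < (b:ℝ)^2 + 4 := by nlinarith
    have hsq := Real.sq_sqrt hp.le
    have hs := Real.sqrt_pos.2 hp
    set r := Real.sqrt ((b:ℝ)^2 + 4)
    have h1 : 1 < α := by nlinarith
    have h2 : α * (((b:ℝ) - r) / 2) = (-1:ℤ) := by rw [hα]; push_cast; nlinarith
    have h3 : α + (((b:ℝ) - r) / 2) = b := by rw [hα]; ring
    have h4 : 0 < α - (((b:ℝ) - r) / 2) := by rw [hα]; linarith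
    exact ⟨aux_main α _ (-1) b h1 (Or.inr rfl) h2 h3 (by omega) h4 t ht.1,
      aux_vol α _ (-1) b h1 (Or.inr rfl) h2 h3 (by omega) h4⟩
end

section
/- For any integer a ≥ 2, 𝓛(a) ∩ (0, (1/a)·E(1/a)] = { (1/a)·E^{(k)}(1/a) : k = 0, 1, 2, … } ∪ { (1/a)·E(1/a) }. That is, the elements of 𝓛(a) lying in (0, (1/a)E(1/a)] are exactly the values (1/a)E^{(k)}(1/a) for k ≥ 0 together with the single limit point (1/a)E(1/a). -/
/-- `E(X) = (1 − (1−X)·∏_{n=0}^{∞}(1−X^{2^n}))/(2X)`. -/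
noncomputable def Efun (X : ℝ) : ℝ :=
  (1 - (1 - X) * ∏' n : ℕ, (1 - X ^ (2 ^ n))) / (2 * X)

/-- `E^{(k)}(X) = (1 + X^{2^k} − (1−X)·∏_{m=0}^{k−1}(1−X^{2^m}))/(2X(1+X^{2^k}))`. -/
noncomputable def Ek (k : ℕ) (X : ℝ) : ℝ :=
  (1 + X ^ (2 ^ k) - (1 - X) * ∏ m ∈ Finset.range k, (1 - X ^ (2 ^ m))) /
    (2 * X * (1 + X ^ (2 ^ k)))

open Filter Topology

/-- elementary limsup -/
def LS (u : ℕ → ℝ) (L : ℝ) : Prop :=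
  ∀ ε > 0, (∃ N, ∀ n ≥ N, u n < L + ε) ∧ (∀ N, ∃ n ≥ N, L - ε < u n)

theorem LS_iff {u : ℕ → ℝ} (h0 : ∀ n, 0 ≤ u n) (h1 : ∀ n, u n ≤ 1) (L : ℝ) :
    limsup u atTop = L ↔ LS u L := by
  have hb : IsBoundedUnder (· ≤ ·) atTop u := ⟨1, by simp; exact ⟨0, fun n _ => h1 n⟩⟩
  have hc : IsCoboundedUnder (· ≤ ·) atTop u :=
    IsBoundedUnder.isCoboundedUnder_le ⟨0, by simp; exact ⟨0, fun n _ => h0 n⟩⟩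
  have key : LS u (limsup u atTop) := by
    intro ε hε
    constructor
    · have := eventually_lt_of_limsup_lt (f := atTop) (u := u) (b := limsup u atTop + ε)
        (by linarith) hb
      exact eventually_atTop.1 this
    · have := frequently_lt_of_lt_limsup (f := atTop) (u := u) (b := limsup u atTop - ε)
        hc (by linarith)
      exact frequently_atTop.1 this
  constructor
  · rintro rfl; exact key
  · intro h
    apply le_antisymm
    · by_contra hlt
      push Not at hlt
      have he : 0 < (limsup u atTop - L) / 2 := by linarith
      obtain ⟨N, hN⟩ := (h _ he).1
      obtain ⟨n, hn, hn'⟩ := (key _ he).2 N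
      have := hN n hn
      linarith
    · by_contra hlt
      push Not at hlt
      have he : 0 < (L - limsup u atTop) / 2 := by linarith
      obtain ⟨N, hN⟩ := (key _ he).1
      obtain ⟨n, hn, hn'⟩ := (h _ he).2 N
      have := hN n hn
      linarith

theorem LS_shift {u : ℕ → ℝ} {L : ℝ} (h : LS u L) (k : ℕ) : LS (fun n => u (k + n)) L := by
  intro ε hε
  obtain ⟨⟨N, hN⟩, h2⟩ := h ε hε
  refine ⟨⟨N, fun n hn => hN _ (by omega)⟩, fun M => ?_⟩
  obtain ⟨n, hn, hn'⟩ := h2 (k + M)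
  refine ⟨n - k, by omega, ?_⟩
  have : k + (n - k) = n := by omega
  simpa [this] using hn'

theorem LS_even {u v : ℕ → ℝ} {A B L : ℝ} (hB : 0 < B) (h1 : ∀ n, u (2 * n + 1) ≤ u (2 * n))
    (h2 : ∀ n, u (2 * n) = A + B * v n) : LS u (A + B * L) ↔ LS v L := by
  constructor
  · intro h ε hε
    obtain ⟨⟨N, hN⟩, h3⟩ := h (B * ε) (by positivity)
    refine ⟨⟨N, fun n hn => ?_⟩, fun M => ?_⟩
    · have := hN (2 * n) (by omega)
      rw [h2] at this
      have : B * v n < B * (L + ε) := by linarith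
      exact lt_of_mul_lt_mul_left this hB.le
    · obtain ⟨n, hn, hn'⟩ := h3 (2 * M)
      refine ⟨n / 2, by omega, ?_⟩
      have h4 : A + B * L - B * ε < u (2 * (n / 2)) := by
        rcases Nat.even_or_odd' n with ⟨c, rfl | rfl⟩
        · simpa using hn'
        · have : (2 * c + 1) / 2 = c := by omega
          rw [this]; exact lt_of_lt_of_le hn' (h1 c)
      rw [h2] at h4
      have : B * (L - ε) < B * v (n / 2) := by linarith
      exact lt_of_mul_lt_mul_left this hB.le
  · intro h ε hε
    have hεB : B * (ε / B) = ε := by field_simp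
    obtain ⟨⟨N, hN⟩, h3⟩ := h (ε / B) (by positivity)
    refine ⟨⟨2 * N, fun n hn => ?_⟩, fun M => ?_⟩
    · have h4 : u n ≤ u (2 * (n / 2)) := by
        rcases Nat.even_or_odd' n with ⟨c, rfl | rfl⟩
        · simp
        · have : (2 * c + 1) / 2 = c := by omega
          rw [this]; exact h1 c
      rw [h2] at h4
      have := mul_lt_mul_of_pos_left (hN (n / 2) (by omega)) hB
      linarith
    · obtain ⟨n, hn, hn'⟩ := h3 M
      refine ⟨2 * n, by omega, ?_⟩
      rw [h2]
      have := mul_lt_mul_of_pos_left hn' hB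
      linarith

structure Orb (X : ℝ) (z t : ℕ → ℝ) : Prop where
  ht : ∀ n, t n = 0 ∨ t n = 1
  hz : ∀ n, z n = (1 - X) * t n + X * z (n + 1)
  h0 : ∀ n, 0 ≤ z n
  h1 : ∀ n, z n ≤ 1

theorem Orb.flip {X : ℝ} {z t : ℕ → ℝ} (h : Orb X z t) :
    Orb X (fun n => 1 - z n) (fun n => 1 - t n) where
  ht n := by rcases h.ht n with h | h <;> simp [h]
  hz n := by have := h.hz n; linarith
  h0 n := by have := h.h1 n; linarith
  h1 n := by have := h.h0 n; linarith

theorem Orb.shift {X : ℝ} {z t : ℕ → ℝ} (h : Orb X z t) (k : ℕ) :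
    Orb X (fun n => z (k + n)) (fun n => t (k + n)) where
  ht n := h.ht _
  hz n := h.hz _
  h0 n := h.h0 _
  h1 n := h.h1 _

theorem nonneg_of_rec {X C : ℝ} (hX : 0 < X) (hX1 : X < 1) {z : ℕ → ℝ}
    (hz : ∀ n, X * z (n + 1) ≤ z n) (hC : ∀ n, -C ≤ z n) (n : ℕ) : 0 ≤ z n := by
  have key : ∀ j n, -C * X ^ j ≤ z n := by
    intro j
    induction j with
    | zero => intro n; simpa using hC n
    | succ j ih =>
      intro n
      have := mul_le_mul_of_nonneg_left (ih (n + 1)) hX.le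
      have h2 := hz n
      calc -C * X ^ (j + 1) = X * (-C * X ^ j) := by ring
        _ ≤ z n := by linarith
  have hl : Tendsto (fun j : ℕ => -C * X ^ j) atTop (𝓝 (-C * 0)) :=
    (tendsto_pow_atTop_nhds_zero_of_lt_one hX.le hX1).const_mul _
  rw [mul_zero] at hl
  exact le_of_tendsto' hl (fun j => key j n)

theorem Orb.mk' {X C : ℝ} (hX : 0 < X) (hX1 : X < 1) {z t : ℕ → ℝ}
    (ht : ∀ n, t n = 0 ∨ t n = 1) (hz : ∀ n, z n = (1 - X) * t n + X * z (n + 1))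
    (hC : ∀ n, |z n| ≤ C) : Orb X z t where
  ht := ht
  hz := hz
  h0 := nonneg_of_rec hX hX1 (C := C) (fun n => by
    rw [hz n]; rcases ht n with h | h <;> rw [h] <;> linarith) (fun n => (abs_le.1 (hC n)).1)
  h1 n := by
    have := nonneg_of_rec hX hX1 (C := C) (z := fun n => 1 - z n) (fun n => by
      rw [hz n]; rcases ht n with h | h <;> rw [h] <;> linarith)
      (fun n => by have := (abs_le.1 (hC n)).2; linarith) n
    linarith

/-- distance sequence -/
def U (z t : ℕ → ℝ) : ℕ → ℝ := fun n => |z n - t n|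

theorem Orb.U_eq {X : ℝ} {z t : ℕ → ℝ} (h : Orb X z t) (n : ℕ) :
    U z t n = if t n = 0 then z n else 1 - z n := by
  unfold U
  have h0 := h.h0 n
  have h1 := h.h1 n
  rcases h.ht n with h | h
  · simp [h, abs_of_nonneg h0]
  · simp [h]; rw [abs_of_nonpos (by linarith)]; ring

theorem Orb.U_le {X : ℝ} {z t : ℕ → ℝ} (hX : 0 < X) (h : Orb X z t) (n : ℕ) :
    U z t n ≤ X := by
  rw [h.U_eq]
  have h0 := h.h0 (n + 1)
  have h1 := h.h1 (n + 1)
  have h2 := h.hz n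
  split_ifs with h3
  · rw [h2, h3]; nlinarith
  · have h3 : t n = 1 := by rcases h.ht n with h | h <;> simp_all
    rw [h2, h3]; nlinarith

theorem U_nonneg (z t : ℕ → ℝ) (n : ℕ) : 0 ≤ U z t n := abs_nonneg _

theorem LS_nonneg {u : ℕ → ℝ} {L : ℝ} (h : LS u L) (h0 : ∀ n, 0 ≤ u n) : 0 ≤ L := by
  by_contra hL
  push Not at hL
  obtain ⟨N, hN⟩ := (h (-L) (by linarith)).1
  have := hN N le_rfl
  have := h0 N
  linarith

theorem LS_le {u : ℕ → ℝ} {L M : ℝ} (h : LS u L) (h0 : ∀ n, u n ≤ M) : L ≤ M := by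
  by_contra hL
  push Not at hL
  obtain ⟨n, -, hn⟩ := (h (L - M) (by linarith)).2 0
  have := h0 n
  linarith

/-- renormalisation of orbits -/
theorem renorm {X : ℝ} (hX : 0 < X) (hX1 : X < 1) {z t z' t' : ℕ → ℝ}
    (h : Orb X z t) (h' : Orb (X ^ 2) z' t') (e : ∀ n, t (2 * n) = t' n)
    (o : ∀ n, t (2 * n + 1) = 1 - t' n)
    (hz : ∀ n, z (2 * n) = X / (1 + X) + (1 - X) / (1 + X) * z' n) (L : ℝ) :
    LS (U z t) (X / (1 + X) + (1 - X) / (1 + X) * L) ↔ LS (U z' t') L := by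
  have hB : 0 < (1 - X) / (1 + X) := div_pos (by linarith) (by linarith)
  have ev : ∀ n, U z t (2 * n) = X / (1 + X) + (1 - X) / (1 + X) * U z' t' n := by
    intro n
    rw [h.U_eq, h'.U_eq, e, hz]
    split_ifs
    · rfl
    · field_simp; ring
  apply LS_even hB _ ev
  intro n
  rw [ev]
  have h1 : U z t (2 * n + 1) ≤ X / (1 + X) := by
    rw [h.U_eq, o, h.hz (2 * n + 1), o, show 2 * n + 1 + 1 = 2 * (n + 1) by ring, hz]
    have a0 := h'.h0 (n + 1)
    have a1 := h'.h1 (n + 1)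
    rcases h'.ht n with h | h
    · simp only [h, sub_zero, one_ne_zero, if_false]
      rw [le_div_iff₀ (by linarith)]
      field_simp
      nlinarith [mul_nonneg hX.le a0, mul_nonneg (mul_nonneg hX.le a0) (sub_pos.2 hX1).le]
    · simp only [h, sub_self, if_true]
      rw [le_div_iff₀ (by linarith)]
      field_simp
      nlinarith [mul_nonneg hX.le a0, mul_nonneg (sub_pos.2 hX1).le (sub_nonneg.2 a1)]
  have := mul_nonneg hB.le (U_nonneg z' t' n)
  linarith

theorem lift {X : ℝ} (hX : 0 < X) (hX1 : X < 1) {z' t' : ℕ → ℝ} (h' : Orb (X ^ 2) z' t') {L : ℝ}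
    (hL : LS (U z' t') L) :
    ∃ z t, Orb X z t ∧ LS (U z t) (X / (1 + X) + (1 - X) / (1 + X) * L) := by
  let t : ℕ → ℝ := fun n => if n % 2 = 0 then t' (n / 2) else 1 - t' (n / 2)
  let w : ℕ → ℝ := fun n => X / (1 + X) + (1 - X) / (1 + X) * z' n
  let z : ℕ → ℝ := fun n => if n % 2 = 0 then w (n / 2)
    else (1 - X) * (1 - t' (n / 2)) + X * w (n / 2 + 1)
  have e : ∀ n, t (2 * n) = t' n := by intro n; simp [t]
  have o : ∀ n, t (2 * n + 1) = 1 - t' n := by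
    intro n
    have : (2 * n + 1) / 2 = n := by omega
    simp [t, this]
  have ze : ∀ n, z (2 * n) = w n := by intro n; simp [z]
  have zo : ∀ n, z (2 * n + 1) = (1 - X) * (1 - t' n) + X * w (n + 1) := by
    intro n
    have : (2 * n + 1) / 2 = n := by omega
    simp [z, this]
  have w0 : ∀ n, 0 ≤ w n ∧ w n ≤ 1 := by
    intro n
    have a0 := h'.h0 n
    have a1 := h'.h1 n
    have : w n = (X + (1 - X) * z' n) / (1 + X) := by simp only [w]; field_simp
    rw [this, le_div_iff₀ (by linarith), div_le_iff₀ (by linarith)]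
    constructor <;> nlinarith
  have H : Orb X z t := by
    constructor
    · intro n
      rcases Nat.even_or_odd' n with ⟨c, rfl | rfl⟩
      · rw [e]; exact h'.ht c
      · rw [o]; rcases h'.ht c with h | h <;> simp [h]
    · intro n
      rcases Nat.even_or_odd' n with ⟨c, rfl | rfl⟩
      · rw [e, ze, zo]
        simp only [w]
        rw [h'.hz c]
        field_simp
        ring
      · rw [o, zo, show 2 * c + 1 + 1 = 2 * (c + 1) by ring, ze]
    all_goals
      intro n
      rcases Nat.even_or_odd' n with ⟨c, rfl | rfl⟩
      · rw [ze]; first | exact (w0 c).1 | exact (w0 c).2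
      · rw [zo]
        have := w0 (c + 1)
        rcases h'.ht c with h | h <;> rw [h] <;> nlinarith
  exact ⟨z, t, H, (renorm hX hX1 H h' e o ze L).2 hL⟩

theorem desc {X : ℝ} (hX : 0 < X) (hX1 : X < 1) {z t : ℕ → ℝ} (h : Orb X z t) {L : ℝ}
    (hL : LS (U z t) L) (o : ∀ n, t (2 * n + 1) = 1 - t (2 * n)) :
    ∃ z' L', Orb (X ^ 2) z' (fun n => t (2 * n)) ∧ LS (U z' (fun n => t (2 * n))) L' ∧
      L = X / (1 + X) + (1 - X) / (1 + X) * L' := by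
  have hX' : 0 < 1 - X := by linarith
  let z' : ℕ → ℝ := fun n => ((1 + X) * z (2 * n) - X) / (1 - X)
  have hz : ∀ n, z (2 * n) = X / (1 + X) + (1 - X) / (1 + X) * z' n := by
    intro n; simp only [z']; field_simp; ring
  have H : Orb (X ^ 2) z' (fun n => t (2 * n)) := by
    apply Orb.mk' (C := 3 / (1 - X)) (by positivity) (by nlinarith)
    · intro n; exact h.ht _
    · intro n
      simp only [z']
      rw [h.hz (2 * n), h.hz (2 * n + 1), o, show 2 * n + 1 + 1 = 2 * (n + 1) by ring]
      field_simp
      ring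
    · intro n
      simp only [z']
      rw [abs_div, abs_of_pos hX']
      apply div_le_div_of_nonneg_right _ hX'.le
      have a0 := h.h0 (2 * n)
      have a1 := h.h1 (2 * n)
      rw [abs_le]; constructor <;> nlinarith
  let L' := ((1 + X) * L - X) / (1 - X)
  have e : L = X / (1 + X) + (1 - X) / (1 + X) * L' := by
    simp only [L']; field_simp; ring
  refine ⟨z', L', H, ?_, e⟩
  rw [← renorm hX hX1 h H (fun _ => rfl) o hz, ← e]
  exact hL

/-- infinite product -/
noncomputable def PP (X : ℝ) : ℝ := ∏' n : ℕ, (1 - X ^ (2 ^ n))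

noncomputable def CC (X : ℝ) : ℝ := (1 - (1 - X) * PP X) / 2

noncomputable def ck (k : ℕ) (X : ℝ) : ℝ :=
  (1 + X ^ (2 ^ k) - (1 - X) * ∏ m ∈ Finset.range k, (1 - X ^ (2 ^ m))) / (2 * (1 + X ^ (2 ^ k)))

theorem PP_mult {X : ℝ} (hX : 0 < X) (hX1 : X < 1) : Multipliable (fun n : ℕ => 1 - X ^ (2 ^ n)) := by
  have : Summable (fun n : ℕ => -X ^ (2 ^ n)) := by
    apply Summable.neg
    apply Summable.of_nonneg_of_le (fun n => by positivity) (fun n => ?_)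
      (summable_geometric_of_lt_one hX.le hX1)
    exact pow_le_pow_of_le_one hX.le hX1.le (Nat.lt_two_pow_self).le
  simpa [sub_eq_add_neg] using Real.multipliable_one_add_of_summable this

theorem PP_tendsto {X : ℝ} (hX : 0 < X) (hX1 : X < 1) :
    Tendsto (fun N => ∏ n ∈ Finset.range N, (1 - X ^ (2 ^ n))) atTop (𝓝 (PP X)) :=
  (PP_mult hX hX1).hasProd.tendsto_prod_nat

theorem fin_rec (X : ℝ) (N : ℕ) : ∏ n ∈ Finset.range (N + 1), (1 - X ^ (2 ^ n)) =
    (1 - X) * ∏ n ∈ Finset.range N, (1 - (X ^ 2) ^ (2 ^ n)) := by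
  rw [Finset.prod_range_succ', mul_comm]
  simp only [pow_zero, pow_one]
  congr 1
  apply Finset.prod_congr rfl
  intro n _
  rw [← pow_mul, pow_succ, mul_comm]

theorem PP_rec {X : ℝ} (hX : 0 < X) (hX1 : X < 1) : PP X = (1 - X) * PP (X ^ 2) := by
  have h1 := (PP_tendsto hX hX1).comp (tendsto_add_atTop_nat 1)
  have h2 := (PP_tendsto (X := X ^ 2) (by positivity) (by nlinarith)).const_mul (1 - X)
  refine tendsto_nhds_unique h1 (h2.congr fun N => ?_)
  simp [fin_rec]

theorem PP_le {X : ℝ} (hX : 0 < X) (hX1 : X < 1) : PP X ≤ 1 := by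
  apply le_of_tendsto' (PP_tendsto hX hX1)
  intro N
  apply Finset.prod_le_one
  · intro i _; have := pow_le_one₀ hX.le hX1.le (n := 2 ^ i); linarith
  · intro i _; have : 0 < X ^ 2 ^ i := by positivity
    linarith

theorem fin_ge (N : ℕ) : ∀ X : ℝ, 0 < X → X < 1 →
    1 - 2 * X ≤ (1 - X) * ∏ n ∈ Finset.range N, (1 - X ^ (2 ^ n)) := by
  induction N with
  | zero => intro X h0 h1; simp; linarith
  | succ N ih =>
    intro X h0 h1
    rw [fin_rec]
    have := ih (X ^ 2) (by positivity) (by nlinarith)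
    set Q := ∏ n ∈ Finset.range N, (1 - (X ^ 2) ^ (2 ^ n))
    have h3 := mul_le_mul_of_nonneg_left this (sub_pos.2 h1).le
    have h4 : (1 - 2 * X) * (1 + X) ≤ ((1 - X) * ((1 - X) * Q)) * (1 + X) := by
      have : 0 < X ^ 3 := by positivity
      nlinarith
    exact le_of_mul_le_mul_right h4 (by linarith)

theorem PP_ge {X : ℝ} (hX : 0 < X) (hX1 : X < 1) : 1 - 2 * X ≤ (1 - X) * PP X :=
  ge_of_tendsto' ((PP_tendsto hX hX1).const_mul (1 - X)) (fun N => fin_ge N X hX hX1)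

theorem CC_le {X : ℝ} (hX : 0 < X) (hX1 : X < 1) : CC X ≤ X := by
  have := PP_ge hX hX1
  unfold CC; linarith

theorem CC_nonneg {X : ℝ} (hX : 0 < X) (hX1 : X < 1) : 0 ≤ CC X := by
  have := PP_le hX hX1
  unfold CC
  nlinarith

theorem CC_rec {X : ℝ} (hX : 0 < X) (hX1 : X < 1) :
    CC X = X / (1 + X) + (1 - X) / (1 + X) * CC (X ^ 2) := by
  unfold CC
  rw [PP_rec hX hX1]
  field_simp
  ring

theorem CC_W {X : ℝ} (hX : 0 < X) (hX1 : X ≤ 1 / 2) :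
    CC X ≤ X - X ^ 3 + X ^ 4 - X ^ 5 + X ^ 7 := by
  have hx : X < 1 := by linarith
  have h2 : X ^ 2 < 1 := by nlinarith
  have h4 : (X ^ 2) ^ 2 < 1 := by nlinarith [sq_nonneg X]
  have h8 : X ^ 8 ≤ X := by
    simpa using pow_le_pow_of_le_one hX.le hx.le (show 1 ≤ 8 by norm_num)
  have e := PP_rec hX hx
  rw [PP_rec (by positivity) h2, PP_rec (by positivity) h4] at e
  have e8 : ((X ^ 2) ^ 2) ^ 2 = X ^ 8 := by ring
  rw [e8] at e
  have hp8 : (0:ℝ) < X ^ 8 := by positivity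
  have g := PP_ge hp8 (by linarith)
  have l := PP_le hp8 (by linarith)
  unfold CC
  rw [e]
  set p := PP (X ^ 8)
  set Y := X ^ 8 with hY
  -- (1-X)Q (1-p) ≤ Y
  have q : (1 - X ^ 2) * (1 - X ^ 4) ≤ 1 := by
    have a1 : 0 ≤ X ^ 2 := by positivity
    have a2 : 0 ≤ X ^ 4 := by positivity
    have a3 : X ^ 4 ≤ 1 := by nlinarith
    nlinarith
  have m1 : (1 - X) ^ 2 * (1 - p) ≤ Y := by
    have : (1 - X) ^ 2 ≤ 1 - Y := by nlinarith
    nlinarith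
  have m0 : 0 ≤ (1 - X) ^ 2 * (1 - p) := mul_nonneg (sq_nonneg _) (by linarith)
  have m2 : ((1 - X) ^ 2 * (1 - p)) * ((1 - X ^ 2) * (1 - X ^ 4)) ≤ Y := by
    nlinarith
  have id : (1 - X) * ((1 - X) * ((1 - X ^ 2) * ((1 - (X ^ 2) ^ 2) * p))) =
    (1 - 2 * X + 2 * X ^ 3 - 2 * X ^ 4 + 2 * X ^ 5 - 2 * X ^ 7 + Y)
     - ((1 - X) ^ 2 * (1 - p)) * ((1 - X ^ 2) * (1 - X ^ 4)) := by
    rw [hY]; ring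
  rw [id]
  linarith

theorem ck_zero {X : ℝ} (hX : 0 < X) : ck 0 X = X / (1 + X) := by
  unfold ck; simp; field_simp; ring

theorem ck_succ {X : ℝ} (hX : 0 < X) (k : ℕ) :
    ck (k + 1) X = X / (1 + X) + (1 - X) / (1 + X) * ck k (X ^ 2) := by
  unfold ck
  rw [fin_rec]
  have : (X ^ 2) ^ 2 ^ k = X ^ 2 ^ (k + 1) := by rw [← pow_mul, pow_succ, mul_comm]
  rw [this]
  have h : 0 < X ^ 2 ^ (k + 1) := by positivity
  set Y := X ^ 2 ^ (k + 1)
  field_simp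
  ring

theorem ck_bounds (k : ℕ) : ∀ X : ℝ, 0 < X → X < 1 → 0 < ck k X ∧ ck k X ≤ CC X := by
  induction k with
  | zero =>
    intro X h0 h1
    have hB : 0 < (1 - X) / (1 + X) := div_pos (by linarith) (by linarith)
    have := CC_nonneg (X := X ^ 2) (by positivity) (by nlinarith)
    rw [ck_zero h0, CC_rec h0 h1]
    exact ⟨by positivity, by nlinarith⟩
  | succ k ih =>
    intro X h0 h1
    have hB : 0 < (1 - X) / (1 + X) := div_pos (by linarith) (by linarith)
    obtain ⟨i1, i2⟩ := ih (X ^ 2) (by positivity) (by nlinarith)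
    rw [ck_succ h0, CC_rec h0 h1]
    have : 0 < X / (1 + X) := by positivity
    exact ⟨by positivity, by nlinarith⟩

theorem ck_real (k : ℕ) : ∀ X : ℝ, 0 < X → X < 1 → ∃ z t, Orb X z t ∧ LS (U z t) (ck k X) := by
  induction k with
  | zero =>
    intro X h0 h1
    have H : Orb (X ^ 2) (fun _ => 0) (fun _ => 0) := by constructor <;> simp
    have hL : LS (U (fun _ => 0) (fun _ => 0)) 0 := by
      intro ε hε
      exact ⟨⟨0, fun n _ => by simpa [U] using hε⟩, fun N => ⟨N, le_rfl, by simpa [U] using hε⟩⟩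
    have := lift h0 h1 H hL
    rw [ck_zero h0]
    simpa using this
  | succ k ih =>
    intro X h0 h1
    obtain ⟨z, t, H, hL⟩ := ih (X ^ 2) (by positivity) (by nlinarith)
    rw [ck_succ h0]
    exact lift h0 h1 H hL

/-- Thue–Morse -/
noncomputable def tm (n : ℕ) : ℝ :=
  if h : n = 0 then 0 else if n % 2 = 0 then tm (n / 2) else 1 - tm (n / 2)
termination_by n
decreasing_by all_goals omega

theorem tm_even (n : ℕ) : tm (2 * n) = tm n := by
  rcases Nat.eq_zero_or_pos n with rfl | h
  · rfl
  · rw [tm, dif_neg (by omega), if_pos (by omega)]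
    congr 1
    omega

theorem tm_odd (n : ℕ) : tm (2 * n + 1) = 1 - tm n := by
  rw [tm, dif_neg (by omega), if_neg (by omega)]
  congr 2
  omega

theorem tm_01 (n : ℕ) : tm n = 0 ∨ tm n = 1 := by
  induction n using Nat.strong_induction_on with
  | _ n ih =>
    rcases Nat.eq_zero_or_pos n with rfl | h
    · left; rw [tm]; simp
    · rcases Nat.even_or_odd' n with ⟨c, rfl | rfl⟩
      · rw [tm_even]; exact ih c (by omega)
      · rw [tm_odd]; rcases ih c (by omega) with h | h <;> simp [h]

theorem tm_orb {X : ℝ} (hX : 0 < X) (hX1 : X < 1) : ∃ z, Orb X z tm := by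
  have hs : ∀ n, Summable (fun j : ℕ => tm (n + j) * X ^ j) := by
    intro n
    apply Summable.of_nonneg_of_le _ _ (summable_geometric_of_lt_one hX.le hX1)
    · intro j; rcases tm_01 (n + j) with h | h <;> rw [h] <;> simp; positivity
    · intro j
      have : 0 < X ^ j := by positivity
      rcases tm_01 (n + j) with h | h <;> rw [h] <;> simp; positivity
  refine ⟨fun n => (1 - X) * ∑' j : ℕ, tm (n + j) * X ^ j, ?_⟩
  apply Orb.mk' (C := 1) hX hX1 tm_01
  · intro n
    rw [(hs n).tsum_eq_zero_add]
    have : ∑' j : ℕ, tm (n + (j + 1)) * X ^ (j + 1) = X * ∑' j : ℕ, tm (n + 1 + j) * X ^ j := by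
      rw [← tsum_mul_left]
      congr 1; ext j
      rw [show n + (j + 1) = n + 1 + j by ring]; ring
    rw [this]; simp; ring
  · intro n
    have h0 : 0 ≤ ∑' j : ℕ, tm (n + j) * X ^ j := tsum_nonneg fun j => by
      rcases tm_01 (n + j) with h | h <;> rw [h] <;> simp; positivity
    have h1 : ∑' j : ℕ, tm (n + j) * X ^ j ≤ (1 - X)⁻¹ := by
      rw [← tsum_geometric_of_lt_one hX.le hX1]
      apply (hs n).tsum_le_tsum _ (summable_geometric_of_lt_one hX.le hX1)
      intro j
      have : 0 < X ^ j := by positivity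
      rcases tm_01 (n + j) with h | h <;> rw [h] <;> simp; positivity
    have hp : 0 < 1 - X := by linarith
    rw [abs_of_nonneg (by positivity)]
    calc _ ≤ (1 - X) * (1 - X)⁻¹ := mul_le_mul_of_nonneg_left h1 hp.le
      _ = 1 := mul_inv_cancel₀ hp.ne'

theorem tm_approx (k : ℕ) : ∀ X : ℝ, 0 < X → X < 1 → ∀ z L, Orb X z tm → LS (U z tm) L →
    |CC X - L| ≤ X ^ 2 ^ k := by
  induction k with
  | zero =>
    intro X h0 h1 z L H hL
    have a := LS_nonneg hL (U_nonneg _ _)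
    have b := LS_le hL (H.U_le h0)
    have c := CC_le h0 h1
    have d := CC_nonneg h0 h1
    rw [abs_le]; constructor <;> simp <;> linarith
  | succ k ih =>
    intro X h0 h1 z L H hL
    obtain ⟨z', L', H', hL', e⟩ := desc h0 h1 H hL (fun n => by rw [tm_odd, tm_even])
    simp only [tm_even] at H' hL'
    have := ih (X ^ 2) (by positivity) (by nlinarith) z' L' H' hL'
    rw [← pow_mul, mul_comm, ← pow_succ] at this
    rw [CC_rec h0 h1, e]
    have hB : 0 < (1 - X) / (1 + X) := div_pos (by linarith) (by linarith)
    have hB1 : (1 - X) / (1 + X) ≤ 1 := by rw [div_le_one (by linarith)]; linarith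
    rw [show X / (1 + X) + (1 - X) / (1 + X) * CC (X ^ 2) - (X / (1 + X) + (1 - X) / (1 + X) * L')
      = (1 - X) / (1 + X) * (CC (X ^ 2) - L') by ring, abs_mul, abs_of_pos hB]
    calc _ ≤ 1 * |CC (X ^ 2) - L'| := mul_le_mul_of_nonneg_right hB1 (abs_nonneg _)
      _ ≤ _ := by simpa using this

theorem pow_small {X ε : ℝ} (hX : 0 < X) (hX1 : X < 1) (hε : 0 < ε) : ∃ k : ℕ, X ^ 2 ^ k < ε := by
  obtain ⟨n, hn⟩ := exists_pow_lt_of_lt_one hε hX1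
  exact ⟨n, lt_of_le_of_lt (pow_le_pow_of_le_one hX.le hX1.le (Nat.lt_two_pow_self).le) hn⟩

theorem CC_real {X : ℝ} (hX : 0 < X) (hX1 : X < 1) : ∃ z t, Orb X z t ∧ LS (U z t) (CC X) := by
  obtain ⟨z, H⟩ := tm_orb hX hX1
  have hL := (LS_iff (U_nonneg z tm) (fun n => (H.U_le hX n).trans hX1.le) _).1 rfl
  refine ⟨z, tm, H, ?_⟩
  set L := limsup (U z tm) atTop
  have : CC X = L := by
    by_contra hne
    have : 0 < |CC X - L| := abs_pos.2 (sub_ne_zero.2 hne)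
    obtain ⟨k, hk⟩ := pow_small hX hX1 this
    have := tm_approx k X hX hX1 z L H hL
    linarith
  rw [this]; exact hL

theorem forb_aux {X : ℝ} (hX : 0 < X) (hX1 : X ≤ 1 / 2) {z t : ℕ → ℝ} (h : Orb X z t)
    (hW : ∀ n, U z t n < X - X ^ 3 + X ^ 4 - X ^ 5 + X ^ 7) (m : ℕ) (t0 : t m = 0)
    (t1 : t (m + 1) = 1) (t2 : t (m + 2) = 1) :
    t (m + 3) = 0 ∧ (t (m + 4) = 1 → t (m + 5) = 0 ∧ t (m + 6) = 0) := by
  have hw := hW m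
  rw [h.U_eq, if_pos t0] at hw
  have z0 := h.hz m
  have z1 := h.hz (m + 1)
  have z2 := h.hz (m + 2)
  have z3 := h.hz (m + 3)
  have z4 := h.hz (m + 4)
  have z5 := h.hz (m + 5)
  have z6 := h.hz (m + 6)
  simp only [add_assoc, Nat.reduceAdd] at z1 z2 z3 z4 z5 z6
  rw [t0] at z0
  rw [t1] at z1
  rw [t2] at z2
  have t3 : t (m + 3) = 0 := by
    rcases h.ht (m + 3) with h3 | h3
    · exact h3
    · exfalso
      rw [h3] at z3
      rw [z0, z1, z2, z3] at hw
      have a : 0 ≤ X ^ 4 * z (m + 4) := mul_nonneg (by positivity) (h.h0 _)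
      have b : 0 ≤ X ^ 3 * ((1 - X) ^ 2 - X ^ 4) := by
        apply mul_nonneg (by positivity)
        have : X ^ 2 ≤ 1 - X := by nlinarith
        nlinarith [sq_nonneg X]
      nlinarith
  refine ⟨t3, fun t4 => ?_⟩
  rw [t3] at z3
  rw [t4] at z4
  have t5 : t (m + 5) = 0 := by
    rcases h.ht (m + 5) with h3 | h3
    · exact h3
    · exfalso
      rw [h3] at z5
      rw [z0, z1, z2, z3, z4, z5] at hw
      have a : 0 ≤ X ^ 6 * z (m + 6) := mul_nonneg (by positivity) (h.h0 _)
      have b : 0 ≤ X ^ 5 * (1 - X - X ^ 2) := by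
        apply mul_nonneg (by positivity)
        nlinarith
      nlinarith
  refine ⟨t5, ?_⟩
  rw [t5] at z5
  rcases h.ht (m + 6) with h3 | h3
  · exact h3
  · exfalso
    rw [h3] at z6
    rw [z0, z1, z2, z3, z4, z5, z6] at hw
    have a : 0 ≤ X ^ 7 * z (m + 7) := mul_nonneg (by positivity) (h.h0 _)
    have b : 0 ≤ X ^ 6 * (1 - 2 * X) := by
      apply mul_nonneg (by positivity)
      nlinarith
    nlinarith

theorem U_flip (z t : ℕ → ℝ) (n : ℕ) : U (fun n => 1 - z n) (fun n => 1 - t n) n = U z t n := by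
  unfold U
  rw [abs_sub_comm]; congr 1; ring

theorem forb {X : ℝ} (hX : 0 < X) (hX1 : X ≤ 1 / 2) {z t : ℕ → ℝ} (h : Orb X z t)
    (hW : ∀ n, U z t n < X - X ^ 3 + X ^ 4 - X ^ 5 + X ^ 7) (m : ℕ)
    (t1 : t (m + 1) = 1 - t m) (t2 : t (m + 2) = t (m + 1)) :
    t (m + 3) = 1 - t (m + 2) ∧ (t (m + 4) = t (m + 3) ∨
      (t (m + 5) = 1 - t (m + 4) ∧ t (m + 6) = t (m + 5))) := by
  rcases h.ht m with t0 | t0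
  · rw [t0] at t1
    obtain ⟨a, b⟩ := forb_aux hX hX1 h hW m t0 (by simpa using t1) (by rw [t2, t1]; simp)
    refine ⟨by rw [a, t2, t1]; simp, ?_⟩
    rcases h.ht (m + 4) with t4 | t4
    · left; rw [t4, a]
    · right
      obtain ⟨c, d⟩ := b t4
      rw [c, d, t4]; simp
  · rw [t0] at t1
    obtain ⟨a, b⟩ := forb_aux hX hX1 h.flip (fun n => by rw [U_flip]; exact hW n) m (by simp [t0])
      (by simp [t1]) (by rw [t2, t1]; simp)
    refine ⟨by rw [t2, t1]; linarith, ?_⟩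
    rcases h.ht (m + 4) with t4 | t4
    · right
      obtain ⟨c, d⟩ := b (by simp [t4])
      rw [t4]
      constructor <;> linarith
    · left; rw [t4]; linarith

theorem struct {X : ℝ} (hX : 0 < X) (hX1 : X ≤ 1 / 2) {z t : ℕ → ℝ} (h : Orb X z t)
    (hW : ∀ n, U z t n < X - X ^ 3 + X ^ 4 - X ^ 5 + X ^ 7) :
    (∀ n, t (n + 1) = t n) ∨ ∃ k, ∀ n, t (k + (2 * n + 1)) = 1 - t (k + 2 * n) := by
  have dich : ∀ i j, t i = t j ∨ t i = 1 - t j := by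
    intro i j
    rcases h.ht i with a | a <;> rcases h.ht j with b | b <;> simp [a, b]
  by_cases hS : ∃ m, t (m + 1) = 1 - t m ∧ t (m + 2) = t (m + 1)
  · right
    obtain ⟨k, hk⟩ := hS
    refine ⟨k, ?_⟩
    let S : ℕ → Prop := fun m => t (m + 1) = 1 - t m ∧ t (m + 2) = t (m + 1)
    have key : ∀ n, S (k + 2 * n) ∨ (t (k + 2 * n + 1) = 1 - t (k + 2 * n) ∧ S (k + 2 * n + 2)) := by
      intro n
      induction n with
      | zero => left; exact hk
      | succ n ih =>
        rw [show k + 2 * (n + 1) = k + 2 * n + 2 by ring]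
        generalize k + 2 * n = m at ih
        rcases ih with ih | ih
        · obtain ⟨a, b⟩ := forb hX hX1 h hW m ih.1 ih.2
          rcases b with b | b
          · left; exact ⟨a, b⟩
          · right; exact ⟨a, b⟩
        · left; exact ih.2
    intro n
    rcases key n with a | a
    · exact a.1
    · exact a.1
  · push Not at hS
    by_cases hc : ∀ n, t (n + 1) = t n
    · left; exact hc
    · right
      push Not at hc
      obtain ⟨k, hk⟩ := hc
      have key : ∀ n, t (k + n + 1) = 1 - t (k + n) := by
        intro n
        induction n with
        | zero => exact (dich _ _).resolve_left hk
        | succ n ih => exact (dich _ _).resolve_left (hS _ ih)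
      exact ⟨k, fun n => key (2 * n)⟩

theorem const_zero {X : ℝ} (hX : 0 < X) (hX1 : X < 1) {z t : ℕ → ℝ} (h : Orb X z t)
    (hc : ∀ n, t (n + 1) = t n) (n : ℕ) : U z t n = 0 := by
  apply le_antisymm _ (U_nonneg _ _ _)
  have := nonneg_of_rec hX hX1 (C := 1) (z := fun n => -U z t n) (fun n => by
    have e : z n - t n = X * (z (n + 1) - t (n + 1)) := by rw [hc, h.hz n]; ring
    have : U z t n = X * U z t (n + 1) := by
      unfold U; rw [e, abs_mul, abs_of_pos hX]
    rw [this]; linarith) (fun n => by have := h.U_le hX n; linarith) n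
  linarith

theorem core (N : ℕ) : ∀ X δ L : ℝ, 0 < X → X ≤ 1 / 2 → 0 < δ → X ^ 2 ^ N < δ → ∀ z t, Orb X z t →
    LS (U z t) L → 0 < L → L ≤ CC X - δ → ∃ k, L = ck k X := by
  induction N with
  | zero =>
    intro X δ L h0 h1 hδ hN z t H hL hL0 hLC
    have := CC_le h0 (by linarith)
    simp at hN
    linarith
  | succ N ih =>
    intro X δ L h0 h1 hδ hN z t H hL hL0 hLC
    have hx : X < 1 := by linarith
    obtain ⟨M, hM⟩ := (hL δ hδ).1
    have H2 := H.shift M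
    have hL2 : LS (U (fun n => z (M + n)) (fun n => t (M + n))) L := LS_shift hL M
    have hW : ∀ n, U (fun n => z (M + n)) (fun n => t (M + n)) n
        < X - X ^ 3 + X ^ 4 - X ^ 5 + X ^ 7 := by
      intro n
      have a : U z t (M + n) < L + δ := hM (M + n) (by omega)
      have b := CC_W h0 h1
      change U z t (M + n) < _
      linarith
    rcases struct h0 h1 H2 hW with hc | ⟨k, hk⟩
    · have := LS_le hL2 (fun n => (const_zero h0 hx H2 hc n).le)
      linarith
    · obtain ⟨z', L', H', hL', e⟩ := desc h0 hx (H2.shift k) (LS_shift hL2 k) hk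
      have hB : 0 < (1 - X) / (1 + X) := div_pos (by linarith) (by linarith)
      have hB1 : (1 - X) / (1 + X) ≤ 1 := by rw [div_le_one (by linarith)]; linarith
      have n0 := LS_nonneg hL' (U_nonneg _ _)
      rcases n0.eq_or_lt with n0 | n0
      · refine ⟨0, ?_⟩
        rw [ck_zero h0, e, ← n0]; simp
      · rw [CC_rec h0 hx, e] at hLC
        obtain ⟨j, hj⟩ := ih (X ^ 2) δ L' (by positivity) (by nlinarith) hδ
          (by rw [← pow_mul, mul_comm, ← pow_succ]; exact hN) z' _ H' hL' n0 (by
            have : δ ≤ (1 - X) / (1 + X) * (CC (X ^ 2) - L') := by linarith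
            have h3 : 0 ≤ CC (X ^ 2) - L' := by
              by_contra h4
              push Not at h4
              have := mul_neg_of_pos_of_neg hB h4
              linarith
            nlinarith)
        exact ⟨j + 1, by rw [ck_succ h0, ← hj, e]⟩

theorem dist_eq {y : ℝ} (hy : |y| ≤ 1 / 2) (m : ℤ) : distNearestInt (y + m) = |y| := by
  unfold distNearestInt
  rw [round_add_intCast]
  push_cast
  rw [add_sub_add_right_eq_sub]
  apply le_antisymm
  · simpa using round_le y 0
  · by_cases h : round y = 0
    · simp [h]
    · have h1 : 1 ≤ |round y| := Int.one_le_abs h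
      have h2 : (1 : ℝ) ≤ |(round y : ℝ)| := by exact_mod_cast h1
      have h3 := abs_sub_abs_le_abs_sub (round y : ℝ) y
      rw [abs_sub_comm] at h3
      linarith

theorem realize {a : ℕ} (ha : 2 ≤ a) {z t : ℕ → ℝ} (h : Orb (1 / (a : ℝ)) z t) {L : ℝ}
    (hL : LS (U z t) L) : L ∈ specL a := by
  have ha' : (2 : ℝ) ≤ a := by exact_mod_cast ha
  have hX : 0 < 1 / (a : ℝ) := by positivity
  have hX1 : 1 / (a : ℝ) ≤ 1 / 2 := one_div_le_one_div_of_le (by norm_num) ha'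
  refine ⟨z 0 - t 0, ?_⟩
  have key : ∀ n, ∃ m : ℤ, (z 0 - t 0) * (a : ℝ) ^ n = (z n - t n) + m := by
    intro n
    induction n with
    | zero => exact ⟨0, by simp⟩
    | succ n ih =>
      obtain ⟨m, hm⟩ := ih
      have tz : ∀ n, ∃ i : ℤ, t n = i := by
        intro n
        rcases h.ht n with h | h
        · exact ⟨0, by simp [h]⟩
        · exact ⟨1, by simp [h]⟩
      obtain ⟨i, hi⟩ := tz n
      obtain ⟨j, hj⟩ := tz (n + 1)
      refine ⟨m * a + j - i, ?_⟩
      rw [pow_succ, ← mul_assoc, hm, h.hz n, hi, hj]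
      push_cast
      field_simp
      ring
  have e : (fun n : ℕ => distNearestInt ((z 0 - t 0) * (a : ℝ) ^ n)) = U z t := by
    ext n
    obtain ⟨m, hm⟩ := key n
    rw [hm]
    have hu := h.U_le hX n
    exact dist_eq (hu.trans hX1) m
  unfold limsupDist
  rw [e, LS_iff (U_nonneg z t) (fun n => (h.U_le hX n).trans (by linarith))]
  exact hL

theorem EE (a : ℕ) (ha : 2 ≤ a) : (1 / (a : ℝ)) * Efun (1 / (a : ℝ)) = CC (1 / (a : ℝ)) := by
  have ha' : (2 : ℝ) ≤ a := by exact_mod_cast ha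
  have hX : 0 < 1 / (a : ℝ) := by positivity
  unfold Efun CC PP
  generalize 1 / (a : ℝ) = X at *
  field_simp

theorem EkE (a : ℕ) (ha : 2 ≤ a) (k : ℕ) :
    (1 / (a : ℝ)) * Ek k (1 / (a : ℝ)) = ck k (1 / (a : ℝ)) := by
  have ha' : (2 : ℝ) ≤ a := by exact_mod_cast ha
  have hX : 0 < 1 / (a : ℝ) := by positivity
  unfold Ek ck
  generalize 1 / (a : ℝ) = X at *
  have : 0 < X ^ 2 ^ k := by positivity
  field_simp

theorem extract {a : ℕ} (ha : 2 ≤ a) {L : ℝ} (h : L ∈ specL a) (h0 : 0 < L)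
    (hC : L < CC (1 / (a : ℝ))) : ∃ z t, Orb (1 / (a : ℝ)) z t ∧ LS (U z t) L := by
  have ha' : (2 : ℝ) ≤ a := by exact_mod_cast ha
  have hX : 0 < 1 / (a : ℝ) := by positivity
  have hX1 : 1 / (a : ℝ) ≤ 1 / 2 := one_div_le_one_div_of_le (by norm_num) ha'
  obtain ⟨ξ, hξ⟩ := h
  unfold limsupDist at hξ
  replace hξ := (LS_iff (u := fun n : ℕ => distNearestInt (ξ * (a : ℝ) ^ n))
    (fun n => abs_nonneg _) (fun n => (abs_sub_round _).trans (by norm_num)) L).1 hξ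
  obtain ⟨N, hN⟩ := (hξ _ (sub_pos.2 hC)).1
  have hξ' := LS_shift hξ N
  let x : ℕ → ℝ := fun n => ξ * (a : ℝ) ^ (N + n) - round (ξ * (a : ℝ) ^ (N + n))
  have hLS : LS (fun n => |x n|) L := hξ'
  have hx : ∀ n, |x n| < 1 / (a : ℝ) := by
    intro n
    have a1 := hN (N + n) (by omega)
    have a2 := CC_le hX (by linarith)
    change |x n| < _ at a1
    linarith
  have hd : ∀ n, ∃ d : ℤ, x (n + 1) = a * x n - d := by
    intro n
    refine ⟨round (ξ * (a : ℝ) ^ (N + (n + 1))) - a * round (ξ * (a : ℝ) ^ (N + n)), ?_⟩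
    simp only [x]
    push_cast
    ring
  have hax : ∀ n, |a * x n| < 1 := by
    intro n
    rw [abs_mul, Nat.abs_cast]
    have := mul_lt_mul_of_pos_left (hx n) (show (0:ℝ) < a by linarith)
    rwa [mul_one_div_cancel (by linarith)] at this
  have hstep0 : ∀ n, x n = 0 → x (n + 1) = 0 := by
    intro n hn
    obtain ⟨d, hd⟩ := hd n
    rw [hn, mul_zero, zero_sub] at hd
    have h3 := hx (n + 1)
    rw [hd, abs_neg] at h3
    have h4 : |(d : ℝ)| < 1 := by linarith
    have h5 : |d| < 1 := by exact_mod_cast h4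
    rw [Int.abs_lt_one_iff] at h5
    rw [hd, h5]; simp
  have hne : ∀ n, x n ≠ 0 := by
    intro n hn
    have all : ∀ m, x (n + m) = 0 := by
      intro m
      induction m with
      | zero => exact hn
      | succ m ih => exact hstep0 _ ih
    have := LS_le (LS_shift hLS n) (M := 0) (fun m => by simp [all m])
    linarith
  let t : ℕ → ℝ := fun n => if x n < 0 then 1 else 0
  have hrec : ∀ n, x (n + 1) = a * x n - (t (n + 1) - t n) := by
    intro n
    obtain ⟨d, hd⟩ := hd n
    have b1 := abs_lt.1 (hax n)
    have b2 := abs_lt.1 (hx (n + 1))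
    have b3 := hne n
    have b4 := hne (n + 1)
    have ap : (0 : ℝ) < a := by linarith
    simp only [t]
    rcases lt_or_gt_of_ne b3 with c | c
    · have c' : a * x n < 0 := mul_neg_of_pos_of_neg ap c
      have d1 : (-2 : ℝ) < d := by linarith
      have d2 : (d : ℝ) < 1 := by linarith
      have d1' : -2 < d := by exact_mod_cast d1
      have d2' : d < 1 := by exact_mod_cast d2
      have : d = -1 ∨ d = 0 := by omega
      rcases this with rfl | rfl
      · push_cast at hd
        rw [if_pos c, if_neg (by linarith), hd]; ring
      · push_cast at hd
        rw [if_pos c, if_pos (by linarith), hd]; ring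
    · have c' : 0 < a * x n := mul_pos ap c
      have d1 : (-1 : ℝ) < d := by linarith
      have d2 : (d : ℝ) < 2 := by linarith
      have d1' : -1 < d := by exact_mod_cast d1
      have d2' : d < 2 := by exact_mod_cast d2
      have : d = 0 ∨ d = 1 := by omega
      rcases this with rfl | rfl
      · push_cast at hd
        rw [if_neg (by linarith), if_neg (by linarith), hd]; ring
      · push_cast at hd
        rw [if_neg (not_lt.2 c.le), if_pos (by linarith), hd]; ring
  have ht : ∀ n, t n = 0 ∨ t n = 1 := by
    intro n; simp only [t]; split_ifs <;> simp
  refine ⟨fun n => x n + t n, t, ?_, ?_⟩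
  · apply Orb.mk' (C := 2) hX (by linarith) ht
    · intro n
      rw [hrec n]
      field_simp
      ring
    · intro n
      have := abs_lt.1 (hx n)
      rcases ht n with h | h <;> rw [h, abs_le] <;> constructor <;> linarith
  · have : U (fun n => x n + t n) t = fun n => |x n| := by
      ext n; simp [U]
    rw [this]; exact hLS

theorem stmt3 (a : ℕ) (ha : 2 ≤ a) :
    specL a ∩ Set.Ioc 0 ((1 / (a : ℝ)) * Efun (1 / (a : ℝ))) =
      {x : ℝ | ∃ k : ℕ, x = (1 / (a : ℝ)) * Ek k (1 / (a : ℝ))} ∪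
        {(1 / (a : ℝ)) * Efun (1 / (a : ℝ))} := by
  have ha' : (2 : ℝ) ≤ a := by exact_mod_cast ha
  have hX : 0 < 1 / (a : ℝ) := by positivity
  have hX1 : 1 / (a : ℝ) ≤ 1 / 2 := one_div_le_one_div_of_le (by norm_num) ha'
  have hx : 1 / (a : ℝ) < 1 := by linarith
  simp only [EE a ha, EkE a ha]
  ext L
  constructor
  · rintro ⟨hL, h0, h1⟩
    rcases h1.eq_or_lt with h1 | h1
    · right; exact h1
    · left
      obtain ⟨z, t, H, hLS⟩ := extract ha hL h0 h1
      obtain ⟨N, hN⟩ := pow_small hX hx (sub_pos.2 h1)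
      exact core N _ _ L hX hX1 (sub_pos.2 h1) hN z t H hLS h0 (by linarith)
  · rintro (⟨k, rfl⟩ | rfl)
    · obtain ⟨z, t, H, hLS⟩ := ck_real k _ hX hx
      exact ⟨realize ha H hLS, ck_bounds k _ hX hx⟩
    · obtain ⟨z, t, H, hLS⟩ := CC_real hX hx
      have := ck_bounds 0 _ hX hx
      exact ⟨realize ha H hLS, by linarith, le_rfl⟩
end

section
/- Let b ≥ 4 be an integer and α = (b+√(b²−4))/2, so that α > 3 is a quadratic unit with conjugate α₂ = 1/α > 0. Define integer sequences (p_n) and (q_n) by p₀ = 0, p₂ = 1, p_{2n+2} = b·p_{2n} − p_{2n−2}, p_{2n−1} = p_{2n−2} + p_{2n}, and q₀ = 1, q₂ = 1+b, q_{2n+2} = b·q_{2n} − q_{2n−2}, q_{2n−1} = q_{2n−2} + q_{2n} for n ≥ 1. Then the sequence (p_n/q_n)_{n≥0} is strictly increasing and converges to 1/(1+α), and 𝓛(α) ∩ [0, 1/(1+α)] = { p_n/q_n : n = 0, 1, 2, … } ∪ { 1/(1+α) }. Moreover the set X_∞ = { ξ ∈ ℝ : limsup_{n→∞} ‖ξ·α^n‖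 = 1/(1+α) } is uncountable. -/
theorem bal_core (t H : ℤ → ℤ) (ht : ∀ k, t k = 0 ∨ t k = 1)
    (hH : ∀ k, H (k+1) = H k + t (k+1))
    (M : ∀ j, t j ≠ t (j+1) → ∃ r0 : ℤ, 1 ≤ r0 ∧ t (j+1+r0) = t j ∧ t (j-r0) = t (j+1) ∧
      ∀ r, 1 ≤ r → r < r0 → t (j+1+r) = t (j-r))
    (n : ℤ) (hn : 1 ≤ n)
    (B : ∀ m : ℤ, 0 ≤ m → m < n → ∀ i j, H (j+m) - H j ≤ H (i+m) - H i + 1)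
    (i j : ℤ) (hij : i < j) (hc : H (i+n) - H i + 2 ≤ H (j+n) - H j)
    (hmin : ∀ i' j', |j' - i'| < j - i → H (j'+n) - H j' ≤ H (i'+n) - H i' + 1) : False := by
  have hH' : ∀ k, H k = H (k-1) + t k := by
    intro k; have := hH (k-1); simpa using this
  -- first and last letters
  have e1 : H (j+n) - H j = H (i+n) - H i + 2 ∧ t (j+1) = 1 ∧ t (i+1) = 0 := by
    have := B (n-1) (by omega) (by omega) (i+1) (j+1)
    rw [show j+1+(n-1) = j+n by ring, show i+1+(n-1) = i+n by ring, hH j, hH i] at this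
    rcases ht (j+1) with h | h <;> rcases ht (i+1) with h' | h' <;> omega
  obtain ⟨hc2, tj1, ti1⟩ := e1
  have e2 : t (j+n) = 1 ∧ t (i+n) = 0 := by
    have := B (n-1) (by omega) (by omega) i j
    have a1 := hH' (j+n)
    have a2 := hH' (i+n)
    rw [show j+n-1 = j+(n-1) by ring] at a1
    rw [show i+n-1 = i+(n-1) by ring] at a2
    rcases ht (j+n) with h | h <;> rcases ht (i+n) with h' | h' <;> omega
  obtain ⟨tjn, tin⟩ := e2
  have hn2 : 2 ≤ n := by
    by_contra h
    have : n = 1 := by omega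
    subst this
    have := hH j; have := hH i; omega
  -- prefix heights
  have pre : ∀ r, 1 ≤ r → r ≤ n-1 → H (j+r) - H j = H (i+r) - H i + 1 := by
    intro r h1 h2
    have a := B r (by omega) (by omega) i j
    have b := B (n-r) (by omega) (by omega) (i+r) (j+r)
    rw [show j+r+(n-r) = j+n by ring, show i+r+(n-r) = i+n by ring] at b
    omega
  have inner : ∀ r, 1 ≤ r → r ≤ n-2 → t (j+1+r) = t (i+1+r) := by
    intro r h1 h2
    have a := pre r h1 (by omega)
    have b := pre (r+1) (by omega) (by omega)
    have c := hH (j+r)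
    have d := hH (i+r)
    rw [show j + (r+1) = j+r+1 by ring, show i+(r+1) = i+r+1 by ring] at b
    rw [show j+1+r = j+r+1 by ring, show i+1+r = i+r+1 by ring]
    omega
  have mid : ∀ k, i < k → k < j → H (k+n) - H k = H (i+n) - H i + 1 := by
    intro k h1 h2
    have a := hmin i k (by rw [abs_of_pos] <;> omega)
    have b := hmin k j (by rw [abs_of_pos] <;> omega)
    omega
  have hd : n ≤ j - i := by
    by_contra h
    have := B (j-i) (by omega) (by omega) i (i+n)
    rw [show i+n+(j-i) = j+n by ring, show i+(j-i) = j by ring] at this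
    omega
  have per : ∀ k, i+2 ≤ k → k < j → t (k+n) = t k := by
    intro k h1 h2
    have a := mid k (by omega) h2
    have b := mid (k-1) (by omega) (by omega)
    have c := hH' (k+n)
    have d := hH' k
    rw [show k-1+n = k+n-1 by ring] at b
    omega
  have tj : t j = 0 := by
    have b := mid (j-1) (by omega) (by omega)
    have c := hH' (j+n)
    have d := hH' j
    rw [show j-1+n = j+n-1 by ring] at b
    omega
  obtain ⟨r0, hr0, x0, y0, hxy⟩ := M j (by omega)
  rw [tj] at x0
  rw [tj1] at y0
  -- mirror
  have mir : ∀ r : ℕ, (r:ℤ) < r0 → H (j+1+r) - H (j+1) = H (j-1) - H (j-1-r) := by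
    intro r
    induction r with
    | zero => intro _; simp
    | succ r ih =>
      intro h
      push_cast at h ⊢
      have a := ih (by omega)
      have b := hxy (r+1) (by omega) h
      have c := hH (j+1+r)
      have d := hH' (j-1-r)
      rw [show j+1+((r:ℤ)+1) = j+1+r+1 by ring, show j - ((r:ℤ)+1) = j-1-r by ring] at b
      rw [show j+1+((r:ℤ)+1) = j+1+r+1 by ring, show j - 1 - ((r:ℤ)+1) = j-1-r-1 by ring]
      omega
  have mir' : ∀ r : ℤ, 0 ≤ r → r < r0 → H (j+1+r) - H (j+1) = H (j-1) - H (j-1-r) := by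
    intro r h1 h2
    lift r to ℕ using h1
    exact mir r h2
  by_cases ha : j - i ≤ r0
  · by_cases hb : j - i = n
    · have := hxy (n-1) (by omega) (by omega)
      rw [show j+1+(n-1) = j+n by ring, show j-(n-1) = i+1 by omega] at this
      omega
    · have a := hmin (2*j-i-n) j (by rw [abs_lt]; omega)
      have b := mir' (j-1-i) (by omega) (by omega)
      have c := mir' (j-1-i-n) (by omega) (by omega)
      rw [show j+1+(j-1-i) = 2*j-i-n+n by ring, show j-1-(j-1-i) = i by ring] at b
      rw [show j+1+(j-1-i-n) = 2*j-i-n by ring, show j-1-(j-1-i-n) = i+n by ring] at c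
      omega
  · by_cases hb : n ≤ r0
    · have hne : j - r0 ≠ i+1 := by intro h; rw [h] at y0; omega
      have a := hmin (j+1+r0-n) j (by rw [abs_lt]; omega)
      have b := mir' (r0-1) (by omega) (by omega)
      have c := mir' (r0-n) (by omega) (by omega)
      have d := mid (j-r0-1) (by omega) (by omega)
      have e := hH (j+r0)
      have f := hH' (j-r0)
      rw [show j+1+(r0-1) = j+r0 by ring, show j-1-(r0-1) = j-r0 by ring] at b
      rw [show j+1+(r0-n) = j+1+r0-n by ring, show j-1-(r0-n) = j-r0-1+n by ring] at c
      rw [show j+1+r0-n+n = j+r0+1 by ring] at a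
      rw [show j+1+r0 = j+r0+1 by ring] at x0
      omega
    · have hne : j - r0 ≠ i+1 := by intro h; rw [h] at y0; omega
      have hne2 : r0 ≠ n-1 := by
        intro h; rw [h, show j+1+(n-1) = j+n by ring] at x0; omega
      -- H over shifted periodic part
      have pp : ∀ r : ℕ, (r:ℤ) ≤ r0 → H (j-1+n) - H (j-1-r+n) = H (j-1) - H (j-1-r) := by
        intro r
        induction r with
        | zero => intro _; simp
        | succ r ih =>
          intro h
          push_cast at h ⊢
          have a := ih (by omega)
          have b := per (j-1-r) (by omega) (by omega)
          have c := hH' (j-1-r+n)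
          have d := hH' (j-1-r)
          rw [show j-1-((r:ℤ)+1)+n = j-1-r+n-1 by ring, show j-1-((r:ℤ)+1) = j-1-r-1 by ring]
          omega
      have pp' := pp r0.toNat (by omega)
      rw [Int.toNat_of_nonneg (by omega)] at pp'
      have qq := pre (r0+1) (by omega) (by omega)
      have a := B (r0+1) (by omega) (by omega) i (j-1-r0+n)
      have b := mir' (r0-1) (by omega) (by omega)
      have c := hH' (j-r0)
      have d := hH' (j+n)
      have e := hH (j+r0)
      have f := hH j
      have g := hH' j
      rw [show j+1+(r0-1) = j+r0 by ring, show j-1-(r0-1) = j-r0 by ring] at b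
      rw [show j-1-r0+n+(r0+1) = j+n by ring] at a
      rw [show j+1+r0 = j+r0+1 by ring] at x0
      rw [show j+(r0+1) = j+r0+1 by ring] at qq
      rw [show j-1-r0 = j-r0-1 by ring] at pp' a
      rw [show j-1+n = j+n-1 by ring] at pp'
      omega

theorem bal_all (t H : ℤ → ℤ) (ht : ∀ k, t k = 0 ∨ t k = 1)
    (hH : ∀ k, H (k+1) = H k + t (k+1))
    (M : ∀ j, t j ≠ t (j+1) → ∃ r0 : ℤ, 1 ≤ r0 ∧ t (j+1+r0) = t j ∧ t (j-r0) = t (j+1) ∧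
      ∀ r, 1 ≤ r → r < r0 → t (j+1+r) = t (j-r)) :
    ∀ n : ℕ, ∀ i j, H (j+n) - H j ≤ H (i+n) - H i + 1 := by
  intro n
  induction n using Nat.strong_induction_on with
  | _ n ih =>
  rcases Nat.eq_zero_or_pos n with h0 | hpos
  · subst h0; simp
  by_contra hcon
  push Not at hcon
  have ex : ∃ d : ℕ, ∃ i j : ℤ, (j - i).natAbs = d ∧ H (i+n) - H i + 1 < H (j+n) - H j := by
    obtain ⟨i, j, h⟩ := hcon
    exact ⟨_, i, j, rfl, h⟩
  classical
  obtain ⟨i, j, hd, h⟩ := Nat.find_spec ex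
  have hmin : ∀ i' j', |j' - i'| < |j - i| → H (j'+n) - H j' ≤ H (i'+n) - H i' + 1 := by
    intro i' j' hlt
    by_contra hh
    push Not at hh
    refine Nat.find_min ex (m := (j'-i').natAbs) ?_ ⟨i', j', rfl, hh⟩
    rw [← hd]; zify; exact hlt
  have B : ∀ m : ℤ, 0 ≤ m → m < n → ∀ i j, H (j+m) - H j ≤ H (i+m) - H i + 1 := by
    intro m h1 h2
    lift m to ℕ using h1
    exact ih m (by exact_mod_cast h2)
  rcases lt_trichotomy i j with hij | hij | hij
  · refine bal_core t H ht hH M n (by exact_mod_cast hpos) B i j hij (by omega) ?_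
    intro i' j' hh
    exact hmin i' j' (by rwa [abs_of_pos (by omega : 0 < j - i)])
  · subst hij; omega
  · refine bal_core (fun k => t (-k)) (fun k => - H (-k-1)) (fun k => ht _) ?_ ?_ n
      (by exact_mod_cast hpos) ?_ (-i-n-1) (-j-n-1) (by omega) ?_ ?_
    · intro k
      have := hH (-k-2)
      rw [show -(k+1)-1 = -k-2 by ring, show -(k+1) = -k-2+1 by ring, show -k-1 = -k-2+1 by ring]
      omega
    · intro k hk
      obtain ⟨r0, h1, h2, h3, h4⟩ := M (-(k+1)) (by rw [show -(k+1)+1 = -k by ring]; exact hk.symm)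
      refine ⟨r0, h1, ?_, ?_, ?_⟩
      · rw [show -(k+1+r0) = -(k+1)-r0 by ring, h3]; congr 1; ring
      · rw [show -(k-r0) = -(k+1)+1+r0 by ring, h2]
      · intro r hr1 hr2
        rw [show -(k+1+r) = -(k+1)-r by ring, show -(k-r) = -(k+1)+1+r by ring]
        exact (h4 r hr1 hr2).symm
    · intro m h1 h2 i j
      have := B m h1 h2 (-i-m-1) (-j-m-1)
      rw [show -(j+m)-1 = -j-m-1 by ring, show -(i+m)-1 = -i-m-1 by ring]
      rw [show -j-m-1+m = -j-1 by ring, show -i-m-1+m = -i-1 by ring] at this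
      omega
    · rw [show -(-i-n-1+n)-1 = i by ring, show -(-i-n-1)-1 = i+n by ring,
        show -(-j-n-1+n)-1 = j by ring, show -(-j-n-1)-1 = j+n by ring]
      omega
    · intro i' j' hh
      have := hmin (-i'-n-1) (-j'-n-1) (by
        rw [show (-j'-n-1) - (-i'-n-1) = -(j' - i') by ring, abs_neg, abs_sub_comm j i, abs_of_pos (by omega : 0 < i - j)]
        omega)
      rw [show -(j'+n)-1 = -j'-n-1 by ring, show -(i'+n)-1 = -i'-n-1 by ring]
      rw [show -j'-n-1+n = -j'-1 by ring, show -i'-n-1+n = -i'-1 by ring] at this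
      omega

theorem exists_H (t : ℤ → ℤ) : ∃ H : ℤ → ℤ, ∀ k, H (k+1) = H k + t (k+1) := by
  refine ⟨fun k => (∑ r ∈ Finset.range k.toNat, t (r+1)) - ∑ r ∈ Finset.range (-k).toNat, t (-r), ?_⟩
  intro k
  simp only
  rcases le_or_gt 0 k with h | h
  · rw [show (-(k+1)).toNat = 0 by omega, show (-k).toNat = 0 by omega,
      show (k+1).toNat = k.toNat + 1 by omega, Finset.sum_range_succ, Int.toNat_of_nonneg h]
    simp
  · rw [show (k+1).toNat = 0 by omega, show k.toNat = 0 by omega,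
      show (-k).toNat = (-(k+1)).toNat + 1 by omega, Finset.sum_range_succ,
      Int.toNat_of_nonneg (by omega : 0 ≤ -(k+1)), neg_neg]
    ring


theorem le_zero_of_pow_bd (a : ℝ) (ha : 1 < a) (x C : ℝ) (h : ∀ k : ℕ, a^k * x ≤ C) : x ≤ 0 := by
  by_contra hx
  push Not at hx
  obtain ⟨k, hk⟩ := pow_unbounded_of_one_lt (C / x) ha
  have := h k
  rw [div_lt_iff₀ hx] at hk
  linarith

theorem rec_diff (a : ℝ) (u v : ℕ → ℤ) (F G : ℕ → ℝ)
    (hF : ∀ k, a * F k = u k + F (k+1)) (hG : ∀ k, a * G k = v k + G (k+1)) :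
    ∀ c : ℕ, (∀ r < c, u r = v r) → a^c * (F 0 - G 0) = F c - G c := by
  intro c
  induction c with
  | zero => intro _; simp
  | succ c ih =>
    intro h
    have h1 := ih (fun r hr => h r (by omega))
    have h2 := h c (by omega)
    have := hF c
    have h3 := hG c
    rw [h2] at this
    rw [pow_succ]
    linear_combination a * h1 + this - h3

theorem lex_lt (a : ℝ) (ha : 1 < a) (u v : ℕ → ℤ) (hu : ∀ k, u k = 0 ∨ u k = 1)
    (hv : ∀ k, v k = 0 ∨ v k = 1) (F G : ℕ → ℝ)
    (hF : ∀ k, a * F k = u k + F (k+1)) (hG : ∀ k, a * G k = v k + G (k+1))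
    (bF : ∀ k, 0 ≤ F k ∧ F k < 1) (bG : ∀ k, 0 ≤ G k ∧ G k < 1) (h : F 0 < G 0) :
    ∃ c : ℕ, u c = 0 ∧ v c = 1 ∧ ∀ r < c, u r = v r := by
  classical
  have ex : ∃ c, u c ≠ v c := by
    by_contra hc
    push Not at hc
    have := le_zero_of_pow_bd a ha (G 0 - F 0) 1 (fun k => by
      have h1 := rec_diff a u v F G hF hG k (fun r _ => hc r)
      have := bF k
      have := bG k
      nlinarith)
    linarith
  refine ⟨Nat.find ex, ?_⟩
  have h1 := Nat.find_spec ex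
  have h2 : ∀ r < Nat.find ex, u r = v r := fun r hr => by simpa using Nat.find_min ex hr
  set c := Nat.find ex
  have h3 := rec_diff a u v F G hF hG c h2
  have h4 : F c < G c := by
    have : 0 < a^c := by positivity
    nlinarith
  have := hF c
  have := hG c
  have := bF (c+1)
  have := bG (c+1)
  rcases hu c with hh | hh <;> rcases hv c with hh' | hh'
  · exact absurd (hh.trans hh'.symm) h1
  · exact ⟨hh, hh', h2⟩
  · exfalso
    simp only [hh, hh', Int.cast_one, Int.cast_zero] at *
    nlinarith
  · exact absurd (hh.trans hh'.symm) h1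

theorem core2 (a : ℝ) (ha : 1 < a) (t : ℤ → ℤ) (ht : ∀ k, t k = 0 ∨ t k = 1) (f g : ℤ → ℝ)
    (hf : ∀ n, a * f n = t (n+1) + f (n+1)) (hg : ∀ n, a * g n = t n + g (n-1))
    (bf : ∀ k, 0 ≤ f k ∧ f k < 1) (bg : ∀ k, 0 ≤ g k ∧ g k < 1)
    (hM : ∀ n, |f n - g n| < 1 / a) (hmax : ∀ n, |f n - g n| ≤ f 0 - g 0)
    (t0 : t 0 = 0) (t1 : t 1 = 1) :
    ∃ m : ℕ, (f 0 - g 0) * (a^(m+2) - 1) = a^(m+1) - 1 := by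
  have a0 : 0 < a := by linarith
  have hM1 : ∀ n, a * (f n - g n) < 1 ∧ -1 < a * (f n - g n) := by
    intro n
    have := hM n
    rw [abs_lt] at this
    have h2 : a * (1/a) = 1 := by field_simp
    constructor <;> nlinarith
  -- lexicographic comparisons
  have Rf : ∀ i, ∀ k : ℕ, a * f (i+k) = (t (i+1+k) : ℤ) + f (i+(k+1:ℕ)) := by
    intro i k
    rw [hf]; push_cast
    rw [show i+1+(k:ℤ) = i+k+1 by ring, show i+((k:ℤ)+1) = i+k+1 by ring]
  have Rg : ∀ i, ∀ k : ℕ, a * g (i-k) = (t (i-k) : ℤ) + g (i-(k+1:ℕ)) := by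
    intro i k
    rw [hg]; push_cast
    rw [show i-((k:ℤ)+1) = i-k-1 by ring]
  have lff : ∀ i j, f i < f j → ∃ c : ℕ, t (i+1+c) = 0 ∧ t (j+1+c) = 1 ∧ ∀ r : ℕ, r < c → t (i+1+r) = t (j+1+r) := by
    intro i j h
    exact lex_lt a ha (fun k => t (i+1+k)) (fun k => t (j+1+k)) (fun _ => ht _) (fun _ => ht _)
      (fun k => f (i+k)) (fun k => f (j+k)) (Rf i) (Rf j) (fun _ => bf _) (fun _ => bf _) (by simpa using h)
  have lgg : ∀ i j, g i < g j → ∃ c : ℕ, t (i-c) = 0 ∧ t (j-c) = 1 ∧ ∀ r : ℕ, r < c → t (i-r) = t (j-r) := by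
    intro i j h
    exact lex_lt a ha (fun k => t (i-k)) (fun k => t (j-k)) (fun _ => ht _) (fun _ => ht _)
      (fun k => g (i-k)) (fun k => g (j-k)) (Rg i) (Rg j) (fun _ => bg _) (fun _ => bg _) (by simpa using h)
  have lfg : ∀ i j, f i < g j → ∃ c : ℕ, t (i+1+c) = 0 ∧ t (j-c) = 1 ∧ ∀ r : ℕ, r < c → t (i+1+r) = t (j-r) := by
    intro i j h
    exact lex_lt a ha (fun k => t (i+1+k)) (fun k => t (j-k)) (fun _ => ht _) (fun _ => ht _)
      (fun k => f (i+k)) (fun k => g (j-k)) (Rf i) (Rg j) (fun _ => bf _) (fun _ => bg _) (by simpa using h)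
  have lgf : ∀ i j, g i < f j → ∃ c : ℕ, t (i-c) = 0 ∧ t (j+1+c) = 1 ∧ ∀ r : ℕ, r < c → t (i-r) = t (j+1+r) := by
    intro i j h
    exact lex_lt a ha (fun k => t (i-k)) (fun k => t (j+1+k)) (fun _ => ht _) (fun _ => ht _)
      (fun k => g (i-k)) (fun k => f (j+k)) (Rg i) (Rf j) (fun _ => bg _) (fun _ => bf _) (by simpa using h)
  -- Markoff property
  have M : ∀ j, t j ≠ t (j+1) → ∃ r0 : ℤ, 1 ≤ r0 ∧ t (j+1+r0) = t j ∧ t (j-r0) = t (j+1) ∧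
      ∀ r, 1 ≤ r → r < r0 → t (j+1+r) = t (j-r) := by
    intro j hj
    have h1 := hf j
    have h2 := hg j
    have h3 := hM1 j
    rcases ht j with hh | hh <;> rcases ht (j+1) with hh' | hh'
    · omega
    · rw [hh] at h2; rw [hh'] at h1
      push_cast at h1 h2
      obtain ⟨c, c1, c2, c3⟩ := lfg (j+1) (j-1) (by nlinarith)
      refine ⟨c+1, by omega, ?_, ?_, ?_⟩
      · rw [hh]; exact (congrArg t (by ring)).trans c1
      · rw [hh']; exact (congrArg t (by ring)).trans c2
      · intro r hr1 hr2
        have := c3 (r-1).toNat (by omega)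
        rw [Int.toNat_of_nonneg (by omega)] at this
        rw [show j+1+r = j+1+1+(r-1) by ring, this]; congr 1; ring
    · rw [hh] at h2; rw [hh'] at h1
      push_cast at h1 h2
      obtain ⟨c, c1, c2, c3⟩ := lgf (j-1) (j+1) (by nlinarith)
      refine ⟨c+1, by omega, ?_, ?_, ?_⟩
      · rw [hh]; exact (congrArg t (by ring)).trans c2
      · rw [hh']; exact (congrArg t (by ring)).trans c1
      · intro r hr1 hr2
        have := c3 (r-1).toNat (by omega)
        rw [Int.toNat_of_nonneg (by omega)] at this
        rw [show j+1+r = j+1+1+(r-1) by ring, ← this]; congr 1; ring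
    · omega
  obtain ⟨H, hH⟩ := exists_H t
  have bal := bal_all t H ht hH M
  have hH' : ∀ k, H k = H (k-1) + t k := by
    intro k; have := hH (k-1); simpa using this
  -- equal stretches have equal heights
  have eFF : ∀ i j : ℤ, ∀ c : ℕ, (∀ r : ℕ, r < c → t (i+1+r) = t (j+1+r)) →
      H (i+c) - H i = H (j+c) - H j := by
    intro i j c
    induction c with
    | zero => intro _; simp
    | succ c ih =>
      intro h
      have h1 := ih (fun r hr => h r (by omega))
      have h2 := h c (by omega)
      have h3 := hH (i+c)
      have h4 := hH (j+c)
      push_cast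
      rw [show i+1+(c:ℤ) = i+c+1 by ring, show j+1+(c:ℤ) = j+c+1 by ring] at h2
      rw [show i+((c:ℤ)+1) = i+c+1 by ring, show j+((c:ℤ)+1) = j+c+1 by ring]
      omega
  have eGG : ∀ i j : ℤ, ∀ c : ℕ, (∀ r : ℕ, r < c → t (i-r) = t (j-r)) →
      H i - H (i-c) = H j - H (j-c) := by
    intro i j c
    induction c with
    | zero => intro _; simp
    | succ c ih =>
      intro h
      have h1 := ih (fun r hr => h r (by omega))
      have h2 := h c (by omega)
      have h3 := hH' (i-c)
      have h4 := hH' (j-c)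
      push_cast
      rw [show i-((c:ℤ)+1) = i-c-1 by ring, show j-((c:ℤ)+1) = j-c-1 by ring]
      omega
  have eFG : ∀ i j : ℤ, ∀ c : ℕ, (∀ r : ℕ, r < c → t (i+1+r) = t (j-r)) →
      H (i+c) - H i = H j - H (j-c) := by
    intro i j c
    induction c with
    | zero => intro _; simp
    | succ c ih =>
      intro h
      have h1 := ih (fun r hr => h r (by omega))
      have h2 := h c (by omega)
      have h3 := hH (i+c)
      have h4 := hH' (j-c)
      push_cast
      rw [show i+1+(c:ℤ) = i+c+1 by ring] at h2
      rw [show i+((c:ℤ)+1) = i+c+1 by ring, show j-((c:ℤ)+1) = j-c-1 by ring]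
      omega
  have anti1 : ∀ i j, f i < f j → g j ≤ g i := by
    intro i j h
    by_contra hg'
    push Not at hg'
    obtain ⟨c, c1, c2, c3⟩ := lff i j h
    obtain ⟨d, d1, d2, d3⟩ := lgg i j hg'
    have h1 := eFF i j c c3
    have h2 := eGG i j d d3
    have h3 := bal (c+d+2) (i-d-1) (j-d-1)
    have h4 := hH (i+c)
    have h5 := hH (j+c)
    have h6 := hH' (i-d)
    have h7 := hH' (j-d)
    push_cast at h3
    rw [show j-d-1+((c:ℤ)+d+2) = j+c+1 by ring, show i-d-1+((c:ℤ)+d+2) = i+c+1 by ring] at h3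
    rw [show i+1+(c:ℤ) = i+c+1 by ring] at c1
    rw [show j+1+(c:ℤ) = j+c+1 by ring] at c2
    omega
  have anti2 : ∀ i j, f i < g j → f j ≤ g i := by
    intro i j h
    by_contra hg'
    push Not at hg'
    obtain ⟨c, c1, c2, c3⟩ := lfg i j h
    obtain ⟨d, d1, d2, d3⟩ := lgf i j hg'
    have h1 := eFG i j c c3
    have h2 := eFG j i d (fun r hr => (d3 r hr).symm)
    have h3 := bal (c+d+2) (i-d-1) (j-c-1)
    have h4 := hH (i+c)
    have h5 := hH (j+d)
    have h6 := hH' (i-d)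
    have h7 := hH' (j-c)
    push_cast at h3
    rw [show j-c-1+((c:ℤ)+d+2) = j+d+1 by ring, show i-d-1+((c:ℤ)+d+2) = i+c+1 by ring] at h3
    rw [show i+1+(c:ℤ) = i+c+1 by ring] at c1
    rw [show j+1+(d:ℤ) = j+d+1 by ring] at d2
    omega
  have hmax' : ∀ n, f n - g n ≤ f 0 - g 0 ∧ g n - f n ≤ f 0 - g 0 := by
    intro n
    have := abs_le.1 (hmax n)
    constructor <;> linarith
  have fA : ∀ n, f n ≤ f 0 := by
    intro n; by_contra h; push Not at h
    have := anti1 0 n h; have := hmax' n; linarith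
  have gA : ∀ n, g n ≤ f 0 := by
    intro n; by_contra h; push Not at h
    have := anti2 0 n h; have := hmax' n; linarith
  have gB : ∀ n, g 0 ≤ g n := by
    intro n; by_contra h; push Not at h
    by_contra h'
    rcases lt_or_ge (f n) (f 0) with h2 | h2
    · have := anti1 n 0 h2; linarith
    · have := hmax' n; linarith
  have fB : ∀ n, g 0 ≤ f n := by
    intro n; by_contra h; push Not at h
    have := anti2 n 0 h; have := hmax' n; linarith
  have f0 := hf 0
  have g0 := hg 0
  simp only [zero_add, t1, t0, zero_sub] at f0 g0
  push_cast at f0 g0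
  have AB : f 1 < g (-1) := by have := hM1 0; nlinarith
  have pf1 : ∀ n, t n = 1 → f n ≤ f 1 := by
    intro n h
    have h1 := hf (n-1)
    have h2 := fA (n-1)
    rw [sub_add_cancel, h] at h1
    push_cast at h1
    nlinarith
  have pf0 : ∀ n, t n = 0 → g (-1) ≤ f n := by
    intro n h
    have h1 := hf (n-1)
    have h2 := fB (n-1)
    rw [sub_add_cancel, h] at h1
    push_cast at h1
    nlinarith
  have pg1 : ∀ n, t (n+1) = 1 → g n ≤ f 1 := by
    intro n h
    have h1 := hg (n+1)
    have h2 := gA (n+1)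
    rw [add_sub_cancel_right, h] at h1
    push_cast at h1
    nlinarith
  have pg0 : ∀ n, t (n+1) = 0 → g (-1) ≤ g n := by
    intro n h
    have h1 := hg (n+1)
    have h2 := gB (n+1)
    rw [add_sub_cancel_right, h] at h1
    push_cast at h1
    nlinarith
  obtain ⟨m, m1, m2, m3⟩ := lfg 1 (-1) AB
  have gapf : ∀ j : ℕ, j ≤ m → ∀ n, ¬ (f (1+j) < f n ∧ f n < g (-1-j)) := by
    intro j
    induction j with
    | zero =>
      rintro _ n ⟨h1, h2⟩
      simp only [Nat.cast_zero, add_zero, sub_zero] at h1 h2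
      rcases ht n with h | h
      · have := pf0 n h; linarith
      · have := pf1 n h; linarith
    | succ j ih =>
      rintro hj n ⟨h1, h2⟩
      push_cast at h1 h2
      have k1 := hf (1+j)
      have k2 := hg (-1-j)
      have k3 := hf (n-1)
      have k4 := m3 j (by omega)
      have k5 := ih (by omega) (n-1)
      rw [show (1:ℤ)+((j:ℤ)+1) = 1+j+1 by ring] at h1
      rw [show -1-((j:ℤ)+1) = -1-j-1 by ring] at h2
      rw [sub_add_cancel] at k3
      rw [show (1:ℤ)+1+(j:ℤ) = 1+j+1 by ring] at k4
      have k6 : t n = t (-1-j) := by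
        rcases ht (-1-j) with h | h
        · rw [h]
          rw [h] at k4
          have c1 : g (-1) ≤ f (1+j+1) := pf0 _ k4
          rcases ht n with h' | h'
          · exact h'
          · have := pf1 n h'; linarith
        · rw [h]
          have c1 : g (-1-j-1) ≤ f 1 := pg1 _ (by rw [sub_add_cancel]; exact h)
          rcases ht n with h' | h'
          · have := pf0 n h'; linarith
          · exact h'
      rw [k4] at k1
      rw [k6] at k3
      apply k5
      constructor <;> nlinarith
  have gapg : ∀ j : ℕ, j ≤ m → ∀ n, ¬ (f (1+j) < g n ∧ g n < g (-1-j)) := by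
    intro j
    induction j with
    | zero =>
      rintro _ n ⟨h1, h2⟩
      simp only [Nat.cast_zero, add_zero, sub_zero] at h1 h2
      rcases ht (n+1) with h | h
      · have := pg0 n h; linarith
      · have := pg1 n h; linarith
    | succ j ih =>
      rintro hj n ⟨h1, h2⟩
      push_cast at h1 h2
      have k1 := hf (1+j)
      have k2 := hg (-1-j)
      have k3 := hg (n+1)
      have k4 := m3 j (by omega)
      have k5 := ih (by omega) (n+1)
      rw [show (1:ℤ)+((j:ℤ)+1) = 1+j+1 by ring] at h1
      rw [show -1-((j:ℤ)+1) = -1-j-1 by ring] at h2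
      rw [add_sub_cancel_right] at k3
      rw [show (1:ℤ)+1+(j:ℤ) = 1+j+1 by ring] at k4
      have k6 : t (n+1) = t (-1-j) := by
        rcases ht (-1-j) with h | h
        · rw [h]
          rw [h] at k4
          have c1 : g (-1) ≤ f (1+j+1) := pf0 _ k4
          rcases ht (n+1) with h' | h'
          · exact h'
          · have := pg1 n h'; linarith
        · rw [h]
          have c1 : g (-1-j-1) ≤ f 1 := pg1 _ (by rw [sub_add_cancel]; exact h)
          rcases ht (n+1) with h' | h'
          · have := pg0 n h'; linarith
          · exact h'
      rw [k4] at k1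
      rw [k6] at k3
      apply k5
      constructor <;> nlinarith
  have fm := hf (1+m)
  have gm := hg (-1-m)
  rw [show (1:ℤ)+m+1 = 1+1+m by ring, m1] at fm
  rw [m2] at gm
  simp only [Int.cast_zero, Int.cast_one] at fm gm
  have eA : f (1+1+m) = f 0 := by
    refine le_antisymm (fA _) ?_
    by_contra h
    push Not at h
    have k := gapf m le_rfl (-1)
    have q := hf (-1)
    rw [neg_add_cancel, t0] at q
    push_cast at q
    apply k
    have := bf 0
    have := bg (-1-m-1)
    constructor <;> nlinarith
  have eB : g (-1-m-1) = g 0 := by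
    refine le_antisymm ?_ (gB _)
    by_contra h
    push Not at h
    have k := gapg m le_rfl 1
    have q := hg 1
    rw [sub_self, t1] at q
    push_cast at q
    apply k
    have := bf 0
    have := bg 0
    constructor <;> nlinarith
  have dd := rec_diff a (fun k => t (1+1+k)) (fun k => t (-1-k)) (fun k => f (1+k)) (fun k => g (-1-k))
    (Rf 1) (Rg (-1)) m m3
  simp only [Nat.cast_zero, add_zero, sub_zero] at dd
  refine ⟨m, ?_⟩
  rw [eA] at fm
  rw [eB] at gm
  have e1 : a^(m+1) * (f 1 - g (-1)) = f 0 - 1 - g 0 := by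
    rw [pow_succ]; linear_combination a * dd + fm - gm
  have e2 : a^(m+2) * (f 0 - g 0) = a^(m+1) + a^(m+1) * (f 1 - g (-1)) := by
    rw [show m+2 = m+1+1 by ring, pow_succ]; linear_combination a^(m+1) * (f0 - g0)
  linear_combination e2 + e1


set_option maxHeartbeats 4000000 in
theorem core1 (a : ℝ) (b : ℤ) (ha : 3 < a) (hab : a^2 - b*a + 1 = 0) (e : ℤ → ℝ) (s : ℤ → ℤ)
    (hs : ∀ k, e (k+1) - b * e k + e (k-1) = - s k) (l : ℝ) (hl : 0 < l) (h0 : e 0 = l)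
    (hle : ∀ k, |e k| ≤ l) (hl1 : l < 1 / (1+a)) :
    ∃ m : ℕ, l = a * (a^(m+1) - 1) / ((1+a) * (a^(m+2) - 1)) := by
  have a0 : 0 < a := by linarith
  have a1 : 0 < a - 1 := by linarith
  obtain ⟨c, hc⟩ : ∃ c, c = 1 / a := ⟨_, rfl⟩
  have hac : a * c = 1 := by rw [hc]; field_simp
  have c0 : 0 < c := by rw [hc]; positivity
  have c1 : c < 1/3 := by nlinarith
  have hb : (b:ℝ) = a + c := by
    have : a * (b - a - c) = 0 := by linear_combination - hab - hac
    rcases mul_eq_zero.1 this with h | h <;> linarith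
  have hl2 : (1+a) * l < 1 := by
    rw [lt_div_iff₀ (by linarith)] at hl1; linarith
  have hlc : (1 + c) * l < c := by nlinarith
  -- stable and unstable parts
  obtain ⟨R, hR⟩ : ∃ R : ℤ → ℝ, ∀ k, R k = e (k+1) - c * e k := ⟨_, fun _ => rfl⟩
  obtain ⟨L, hL⟩ : ∃ L : ℤ → ℝ, ∀ k, L k = e (k-1) - c * e k := ⟨_, fun _ => rfl⟩
  have Rb : ∀ k, -c < R k ∧ R k < c := by
    intro k
    have h1 := abs_le.1 (hle k)
    have h2 := abs_le.1 (hle (k+1))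
    rw [hR]
    constructor <;> nlinarith
  have Lb : ∀ k, -c < L k ∧ L k < c := by
    intro k
    have h1 := abs_le.1 (hle k)
    have h2 := abs_le.1 (hle (k-1))
    rw [hL]
    constructor <;> nlinarith
  have Rr : ∀ k, a * R (k-1) = s k + R k := by
    intro k
    have := hs k
    rw [hb] at this
    rw [hR, hR, sub_add_cancel]
    linear_combination -this - e (k-1) * hac
  have Lr : ∀ k, a * L (k+1) = s k + L k := by
    intro k
    have := hs k
    rw [hb] at this
    rw [hL, hL, add_sub_cancel_right]
    linear_combination -this - e (k+1) * hac
  have sRL : ∀ k, s k + R k + L k = (a - c) * e k := by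
    intro k
    have := hs k
    rw [hb] at this
    rw [hR, hL]
    linear_combination this
  have s3 : ∀ k, s k = -1 ∨ s k = 0 ∨ s k = 1 := by
    intro k
    have h1 := Rr k
    have h2 := Rb k
    have h3 := Rb (k-1)
    have h4 : (s k : ℝ) < 2 := by nlinarith
    have h5 : (-2 : ℝ) < s k := by nlinarith
    have h6 : s k < 2 := by exact_mod_cast h4
    have h7 : -2 < s k := by exact_mod_cast h5
    omega
  have key : (a - c) * l < 1 - c := by nlinarith
  have ac0 : 0 < a - c := by linarith
  have sR1 : ∀ k, s k = 1 → R k < 0 := by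
    intro k h
    have h1 := sRL k
    have h2 := abs_le.1 (hle k)
    have h3 := Lb k
    rw [h] at h1
    push_cast at h1
    nlinarith
  have sRm : ∀ k, s k = -1 → 0 < R k := by
    intro k h
    have h1 := sRL k
    have h2 := abs_le.1 (hle k)
    have h3 := Lb k
    rw [h] at h1
    push_cast at h1
    nlinarith
  have s0 : s 0 = 1 := by
    have h1 := hs 0
    have h2 := abs_le.1 (hle (0+1))
    have h3 := abs_le.1 (hle (0-1))
    rw [h0] at h1
    have h4 : (0:ℝ) < s 0 := by nlinarith
    have h5 : 0 < s 0 := by exact_mod_cast h4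
    have := s3 0
    omega
  have Rn : ∀ k, R k ≠ 0 := by
    have fwd : ∀ k, R (k-1) = 0 → R k = 0 := by
      intro k h
      have h1 := Rr k
      have h2 := Rb k
      rw [h] at h1
      rcases s3 k with h3 | h3 | h3 <;> rw [h3] at h1 <;> push_cast at h1 <;> linarith
    have bwd : ∀ k, R k = 0 → R (k-1) = 0 := by
      intro k h
      have h1 := Rr k
      rcases s3 k with h3 | h3 | h3
      · have := sRm k h3; linarith
      · rw [h, h3] at h1; push_cast at h1
        rw [add_zero] at h1
        rcases mul_eq_zero.1 h1 with h | h
        · linarith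
        · exact h
      · have := sR1 k h3; linarith
    have iff : ∀ k, R k = 0 ↔ R 0 = 0 := by
      intro k
      induction k using Int.induction_on with
      | zero => rfl
      | succ i ih => rw [← ih]; have := fwd (i+1); have := bwd (i+1); simp only [add_sub_cancel_right] at *; tauto
      | pred i ih => rw [← ih]; exact ⟨fwd _, bwd _⟩
    intro k hk
    have := (iff k).1 hk
    have := sR1 0 s0
    linarith
  classical
  obtain ⟨t, htd⟩ : ∃ t : ℤ → ℤ, ∀ k, t k = if R (k-1) < 0 then 1 else 0 := ⟨_, fun _ => rfl⟩
  have ht : ∀ k, t k = 0 ∨ t k = 1 := by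
    intro k; rw [htd]; split_ifs <;> simp
  have tR1 : ∀ k, t (k+1) = 1 → R k < 0 := by
    intro k h; rw [htd, add_sub_cancel_right] at h; by_contra hh; rw [if_neg hh] at h; omega
  have tR0 : ∀ k, t (k+1) = 0 → 0 < R k := by
    intro k h; rw [htd, add_sub_cancel_right] at h
    rcases lt_or_ge (R k) 0 with hh | hh
    · rw [if_pos hh] at h; omega
    · exact lt_of_le_of_ne hh (Rn k).symm
  have hst : ∀ k, s k = t (k+1) - t k := by
    intro k
    have h1 := Rr k
    have h2 := Rb k
    have hneg : R k < 0 → t (k+1) = 1 := by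
      intro h; rw [htd, add_sub_cancel_right, if_pos h]
    have hpos : 0 < R k → t (k+1) = 0 := by
      intro h; rw [htd, add_sub_cancel_right, if_neg (by linarith)]
    have hneg' : R (k-1) < 0 → t k = 1 := by
      intro h; rw [htd, if_pos h]
    have hpos' : 0 < R (k-1) → t k = 0 := by
      intro h; rw [htd, if_neg (by linarith)]
    rcases s3 k with h3 | h3 | h3
    · rw [hpos (sRm k h3), hneg' (by rw [h3] at h1; push_cast at h1; nlinarith)]; omega
    · rw [h3] at h1; push_cast at h1
      rcases lt_or_gt_of_ne (Rn k) with h | h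
      · rw [hneg h, hneg' (by nlinarith)]; omega
      · rw [hpos h, hpos' (by nlinarith)]; omega
    · rw [hneg (sR1 k h3), hpos' (by rw [h3] at h1; push_cast at h1; nlinarith)]; omega
  have hstR : ∀ k, (s k : ℝ) = t (k+1) - t k := by
    intro k; rw [hst]; push_cast; ring
  obtain ⟨f, hfd⟩ : ∃ f : ℤ → ℝ, ∀ k, (a-1) * f k = R k + t (k+1) :=
    ⟨fun k => (R k + t (k+1)) / (a-1), fun k => by field_simp⟩
  obtain ⟨g, hgd⟩ : ∃ g : ℤ → ℝ, ∀ k, (a-1) * g k = t k - L k :=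
    ⟨fun k => (t k - L k) / (a-1), fun k => by field_simp⟩
  have hf : ∀ n, a * f n = t (n+1) + f (n+1) := by
    intro n
    have h1 := hfd n
    have h2 := hfd (n+1)
    have h3 := Rr (n+1)
    rw [hstR, add_sub_cancel_right] at h3
    have : (a-1) * (a * f n - (t (n+1) + f (n+1))) = 0 := by
      linear_combination a * h1 - h2 + h3
    rcases mul_eq_zero.1 this with h | h <;> linarith
  have hg : ∀ n, a * g n = t n + g (n-1) := by
    intro n
    have h1 := hgd n
    have h2 := hgd (n-1)
    have h3 := Lr (n-1)
    rw [hstR, sub_add_cancel] at h3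
    have : (a-1) * (a * g n - (t n + g (n-1))) = 0 := by
      linear_combination a * h1 - h2 - h3
    rcases mul_eq_zero.1 this with h | h <;> linarith
  have tb : ∀ k, (0:ℝ) ≤ t k ∧ (t k:ℝ) ≤ 1 := by
    intro k; rcases ht k with h | h <;> rw [h] <;> norm_num
  have bf : ∀ k, 0 ≤ f k ∧ f k < 1 := by
    intro k
    have h1 := hfd k
    have h2 := Rb k
    have h3 := tb (k+1)
    constructor
    · rcases ht (k+1) with h | h
      · have := tR0 k h; rw [h] at h1; push_cast at h1; nlinarith
      · rw [h] at h1; push_cast at h1; nlinarith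
    · nlinarith
  have bg1 : ∀ k, -1 ≤ g k ∧ g k < 1 := by
    intro k
    have h1 := hgd k
    have h2 := Lb k
    have h3 := tb k
    constructor <;> nlinarith
  have bg : ∀ k, 0 ≤ g k ∧ g k < 1 := by
    intro k
    refine ⟨?_, (bg1 k).2⟩
    have := le_zero_of_pow_bd a (by linarith) (- g k) 1 (by
      intro n
      have : ∀ n : ℕ, a^n * (- g k) ≤ - g (k-n) := by
        intro n
        induction n with
        | zero => simp
        | succ n ih =>
          have h1 := hg (k-n)
          have h2 := tb (k-n)
          push_cast
          rw [show k-((n:ℤ)+1) = k-n-1 by ring, pow_succ]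
          nlinarith
      have := this n
      have := bg1 (k-n)
      linarith)
    linarith
  have hD : ∀ n, f n - g n = (1 + c) * e n := by
    intro n
    have h1 := hfd n
    have h2 := hgd n
    have h3 := sRL n
    rw [hstR] at h3
    have : (a-1) * (f n - g n - (1+c) * e n) = 0 := by
      linear_combination h1 - h2 + h3 - e n * hac
    rcases mul_eq_zero.1 this with h | h <;> linarith
  have ts := hst 0
  have t01 : t 0 = 0 ∧ t 1 = 1 := by
    rw [s0, zero_add] at ts
    have := ht 0
    have := ht 1
    omega
  obtain ⟨m, hm⟩ := core2 a (by linarith) t ht f g hf hg bf bg (by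
      intro n
      rw [hD, abs_mul, abs_of_pos (by linarith : 0 < 1 + c), ← hc]
      have := hle n
      nlinarith) (by
      intro n
      rw [hD, hD, abs_mul, abs_of_pos (by linarith : 0 < 1 + c), h0]
      exact mul_le_mul_of_nonneg_left (hle n) (by linarith)) t01.1 t01.2
  refine ⟨m, ?_⟩
  have hp : 1 < a^(m+2) := one_lt_pow₀ (by linarith) (by omega)
  have : 0 < a^(m+2) - 1 := by linarith
  rw [eq_div_iff (by positivity)]
  rw [hD, h0] at hm
  linear_combination a * hm - l * (a^(m+2) - 1) * hac


theorem forward_dir (a : ℝ) (b : ℤ) (ha : 3 < a) (hab : a^2 - b*a + 1 = 0) (ξ l : ℝ)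
    (h : limsupDist a ξ = l) (hl : 0 < l) (hl1 : l < 1/(1+a)) :
    ∃ m : ℕ, l = a*(a^(m+1)-1)/((1+a)*(a^(m+2)-1)) := by
  obtain ⟨ε, hε⟩ : ∃ ε : ℕ → ℝ, ∀ n, ε n = ξ * a^n - round (ξ * a^n) := ⟨_, fun _ => rfl⟩
  have hlim : Filter.limsup (fun n : ℕ => |ε n|) Filter.atTop = l := by
    rw [← h]
    unfold limsupDist distNearestInt
    simp only [hε]
  have hb2 : ∀ n, |ε n| ≤ 1/2 := by
    intro n
    rw [hε]
    exact abs_sub_round _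
  have bdd : Filter.IsBoundedUnder (· ≤ ·) Filter.atTop (fun n : ℕ => |ε n|) :=
    Filter.isBoundedUnder_of ⟨1/2, hb2⟩
  have cobdd : Filter.IsCoboundedUnder (· ≤ ·) Filter.atTop (fun n : ℕ => |ε n|) :=
    Filter.IsBoundedUnder.isCoboundedUnder_le (Filter.isBoundedUnder_of ⟨0, fun n => abs_nonneg (ε n)⟩)
  have hev : ∀ δ > 0, ∀ᶠ n in Filter.atTop, |ε n| < l + δ := by
    intro δ hδ
    exact Filter.eventually_lt_of_limsup_lt (by rw [hlim]; linarith) bdd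
  have hfr : ∀ δ > 0, ∃ᶠ n in Filter.atTop, l - δ < |ε n| := by
    intro δ hδ
    exact Filter.frequently_lt_of_lt_limsup cobdd (by rw [hlim]; linarith)
  have hcl : MapClusterPt l Filter.atTop (fun n : ℕ => |ε n|) := by
    rw [mapClusterPt_iff_frequently]
    intro s hs
    obtain ⟨δ, hδ, hball⟩ := Metric.mem_nhds_iff.1 hs
    refine ((hfr δ hδ).and_eventually (hev δ hδ)).mono ?_
    rintro n ⟨h1, h2⟩
    apply hball
    rw [Metric.mem_ball, Real.dist_eq, abs_lt]
    constructor <;> linarith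
  rw [mapClusterPt_iff_ultrafilter] at hcl
  obtain ⟨U, hU, hUl⟩ := hcl
  have hex : ∀ k : ℤ, ∃ x : ℝ, Filter.Tendsto (fun n : ℕ => ε ((n:ℤ)+k).toNat) U (nhds x) := by
    intro k
    have hc : IsCompact (Set.Icc (-(1/2):ℝ) (1/2)) := isCompact_Icc
    obtain ⟨x, -, hx⟩ := hc.ultrafilter_le_nhds (U.map (fun n : ℕ => ε ((n:ℤ)+k).toNat)) (by
      rw [Filter.le_principal_iff]
      refine Filter.Eventually.of_forall (f := (U : Filter ℕ)) (p := fun n : ℕ => ε ((n:ℤ)+k).toNat ∈ Set.Icc (-(1/2):ℝ) (1/2)) ?_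
      intro n
      exact abs_le.1 (hb2 _))
    exact ⟨x, hx⟩
  choose e he using hex
  have hat : ∀ k : ℤ, Filter.Tendsto (fun n : ℕ => ((n:ℤ)+k).toNat) U Filter.atTop := by
    intro k
    refine Filter.Tendsto.mono_left ?_ hU
    rw [Filter.tendsto_atTop]
    intro m
    filter_upwards [Filter.eventually_ge_atTop (m + k.natAbs)] with n hn
    omega
  have hle : ∀ k, |e k| ≤ l := by
    intro k
    refine le_of_forall_pos_le_add fun δ hδ => ?_
    refine le_of_tendsto (he k).abs ?_
    exact ((hat k).eventually (hev δ hδ)).mono fun n hn => hn.le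
  have h0 : |e 0| = l := by
    refine tendsto_nhds_unique (he 0).abs ?_
    simpa using hUl
  have hint : ∀ k, ∃ s : ℤ, e (k+1) - b * e k + e (k-1) = - (s:ℝ) := by
    intro k
    have ht : Filter.Tendsto (fun n : ℕ => ε ((n:ℤ)+(k+1)).toNat - b * ε ((n:ℤ)+k).toNat + ε ((n:ℤ)+(k-1)).toNat) U
        (nhds (e (k+1) - b * e k + e (k-1))) :=
      ((he (k+1)).sub ((he k).const_mul _)).add (he (k-1))
    have hcl : IsClosed (Set.range ((↑) : ℤ → ℝ)) := Int.isClosedEmbedding_coe_real.isClosed_range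
    have hm := hcl.mem_of_tendsto ht (by
      have : ∀ᶠ n : ℕ in Filter.atTop, k.natAbs + 1 ≤ n := Filter.eventually_ge_atTop _
      refine (this.filter_mono hU).mono ?_
      intro n hn
      obtain ⟨m, hm⟩ : ∃ m : ℕ, (n:ℤ) + (k-1) = m := ⟨((n:ℤ)+(k-1)).toNat, by omega⟩
      have e1 : ((n:ℤ)+(k-1)).toNat = m := by omega
      have e2 : ((n:ℤ)+k).toNat = m+1 := by omega
      have e3 : ((n:ℤ)+(k+1)).toNat = m+2 := by omega
      rw [e1, e2, e3, hε, hε, hε]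
      refine ⟨- round (ξ * a^(m+2)) + b * round (ξ * a^(m+1)) - round (ξ * a^m), ?_⟩
      push_cast
      linear_combination (- ξ * a^m) * hab)
    obtain ⟨s, hs⟩ := hm
    exact ⟨-s, by rw [← hs]; push_cast; ring⟩
  choose s hs using hint
  rcases abs_eq hl.le |>.1 h0 with h1 | h1
  · exact core1 a b ha hab e s hs l hl h1 hle hl1
  · refine core1 a b ha hab (fun k => - e k) (fun k => - s k) ?_ l hl (by simp [h1]) (by simpa using hle) hl1
    intro k
    push_cast
    linear_combination - hs k


theorem alpha_facts (b : ℤ) (hb : 4 ≤ b) (α : ℝ)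
    (hα : α = ((b : ℝ) + Real.sqrt ((b : ℝ) ^ 2 - 4)) / 2) : 3 < α ∧ α^2 - b*α + 1 = 0 := by
  have hb' : (4:ℝ) ≤ b := by exact_mod_cast hb
  have h1 := Real.sq_sqrt (show (0:ℝ) ≤ (b:ℝ)^2 - 4 by nlinarith)
  have h2 : (b:ℝ) - 2 < Real.sqrt ((b : ℝ) ^ 2 - 4) := by
    apply Real.lt_sqrt_of_sq_lt
    nlinarith
  constructor
  · rw [hα]; linarith
  · rw [hα]; linear_combination h1 / 4

theorem closed_even (a : ℝ) (b : ℤ) (hab : a^2 - b*a + 1 = 0) (p q : ℕ → ℤ)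
    (hp0 : p 0 = 0) (hp2 : p 2 = 1)
    (hpeven : ∀ n : ℕ, p (2 * n + 4) = b * p (2 * n + 2) - p (2 * n))
    (hq0 : q 0 = 1) (hq2 : q 2 = 1 + b)
    (hqeven : ∀ n : ℕ, q (2 * n + 4) = b * q (2 * n + 2) - q (2 * n)) (n : ℕ) :
    ((p (2*n) : ℝ) * (a^2-1) * a^n = a * (a^(2*n) - 1) ∧ (q (2*n) : ℝ) * (a-1) * a^n = a^(2*n+1) - 1) ∧
    ((p (2*n+2) : ℝ) * (a^2-1) * a^(n+1) = a * (a^(2*n+2) - 1) ∧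
      (q (2*n+2) : ℝ) * (a-1) * a^(n+1) = a^(2*n+3) - 1) := by
  induction n with
  | zero =>
    simp only [mul_zero, zero_add, hp0, hq0, hp2, hq2]
    push_cast
    refine ⟨⟨by ring, by ring⟩, by ring, ?_⟩
    linear_combination (1-a) * hab
  | succ n ih =>
    obtain ⟨⟨h1, h2⟩, h3, h4⟩ := ih
    have e1 : 2*(n+1) = 2*n+2 := by ring
    refine ⟨⟨?_, ?_⟩, ?_, ?_⟩
    · rw [e1]; exact h3
    · rw [e1]; exact h4
    · rw [show 2*(n+1)+2 = 2*n+4 by ring, hpeven]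
      push_cast
      have hbb : (b:ℝ) * a = a^2+1 := by linarith
      linear_combination (a*b) * h3 - a^2 * h1 + (a * (a^(2*n+2)-1)) * hbb
    · rw [show 2*(n+1)+2 = 2*n+4 by ring, hqeven]
      push_cast
      have hbb : (b:ℝ) * a = a^2+1 := by linarith
      linear_combination (a*b) * h4 - a^2 * h2 + (a^(2*n+3)-1) * hbb

theorem closed_form (a : ℝ) (b : ℤ) (ha : 3 < a) (hab : a^2 - b*a + 1 = 0) (p q : ℕ → ℤ)
    (hp0 : p 0 = 0) (hp2 : p 2 = 1)
    (hpeven : ∀ n : ℕ, p (2 * n + 4) = b * p (2 * n + 2) - p (2 * n))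
    (hpodd : ∀ n : ℕ, p (2 * n + 1) = p (2 * n) + p (2 * n + 2))
    (hq0 : q 0 = 1) (hq2 : q 2 = 1 + b)
    (hqeven : ∀ n : ℕ, q (2 * n + 4) = b * q (2 * n + 2) - q (2 * n))
    (hqodd : ∀ n : ℕ, q (2 * n + 1) = q (2 * n) + q (2 * n + 2)) (n : ℕ) :
    (p n : ℝ) / q n = a*(a^n-1)/((1+a)*(a^(n+1)-1)) := by
  have h1 : (1:ℝ) < a^(n+1) := one_lt_pow₀ (by linarith) (by omega)
  have a1 : 0 < a - 1 := by linarith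
  have a2 : 0 < a + 1 := by linarith
  have a3 : a^2 - 1 ≠ 0 := by nlinarith
  obtain ⟨m, hm | hm⟩ := Nat.even_or_odd' n
  · subst hm
    obtain ⟨⟨h2, h3⟩, -⟩ := closed_even a b hab p q hp0 hp2 hpeven hq0 hq2 hqeven m
    have am : 0 < a^m := by positivity
    have hp : (p (2*m) : ℝ) = a*(a^(2*m)-1)/((a^2-1)*a^m) := by
      field_simp; linarith
    have hq : (q (2*m) : ℝ) = (a^(2*m+1)-1)/((a-1)*a^m) := by
      field_simp; linarith
    have h5 : a^(2*m+1) - 1 ≠ 0 := by linarith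
    rw [hp, hq, show a^2 - 1 = (a-1)*(1+a) by ring]
    have : 1 + a ≠ 0 := by linarith
    generalize a^(2*m+1) - 1 = z at *
    generalize a^(2*m) - 1 = y at *
    field_simp
  · subst hm
    obtain ⟨⟨h2, h3⟩, h2', h3'⟩ := closed_even a b hab p q hp0 hp2 hpeven hq0 hq2 hqeven m
    have am : 0 < a^m := by positivity
    have hp : (p (2*m+1) : ℝ) = a*(a^(2*m+1)-1)/((a-1)*a^(m+1)) := by
      have : a + 1 ≠ 0 := by linarith
      rw [hpodd]; push_cast
      rw [eq_div_iff (by positivity)]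
      apply mul_left_cancel₀ this
      linear_combination a * h2 + h2'
    have hq : (q (2*m+1) : ℝ) = (1+a)*(a^(2*m+1+1)-1)/((a-1)*a^(m+1)) := by
      rw [hqodd]; push_cast
      rw [eq_div_iff (by positivity)]
      linear_combination a * h3 + h3'
    have h5 : a^(2*m+1+1) - 1 ≠ 0 := by linarith
    rw [hp, hq]
    have : 1 + a ≠ 0 := by linarith
    generalize a^(2*m+1+1) - 1 = z at *
    generalize a^(2*m+1) - 1 = y at *
    field_simp

theorem r_mono (a : ℝ) (ha : 3 < a) : StrictMono (fun n : ℕ => a*(a^n-1)/((1+a)*(a^(n+1)-1))) := by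
  apply strictMono_nat_of_lt_succ
  intro n
  have h0 : (1:ℝ) ≤ a^n := one_le_pow₀ (by linarith)
  rw [show n+1+1 = n+2 by ring, pow_add, pow_add, pow_one]
  generalize a^n = x at *
  have h1 : 0 < x*a - 1 := by nlinarith
  have h2 : 0 < x*a^2 - 1 := by nlinarith
  rw [div_lt_div_iff₀ (by positivity) (by positivity)]
  have : (x-1)*(x*a^2-1) < (x*a-1)*(x*a-1) := by nlinarith [mul_pos (by linarith : 0 < x) (by nlinarith : 0 < (a-1)^2)]
  have h3 : 0 < a*(1+a) := by positivity
  nlinarith [mul_lt_mul_of_pos_left this h3]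

theorem r_lim (a : ℝ) (ha : 3 < a) :
    Filter.Tendsto (fun n : ℕ => a*(a^n-1)/((1+a)*(a^(n+1)-1))) Filter.atTop (nhds (1/(1+a))) := by
  have hc : Filter.Tendsto (fun n : ℕ => (1/a)^n) Filter.atTop (nhds 0) :=
    tendsto_pow_atTop_nhds_zero_of_lt_one (by positivity) (by rw [div_lt_one (by linarith)]; linarith)
  have h2 : Filter.Tendsto (fun n : ℕ => a*(1-(1/a)^n)/((1+a)*(a-(1/a)^n))) Filter.atTop
      (nhds (a*(1-0)/((1+a)*(a-0)))) := by
    apply Filter.Tendsto.div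
    · exact (tendsto_const_nhds.sub hc).const_mul _
    · exact (tendsto_const_nhds.sub hc).const_mul _
    · have : (1+a)*(a-0) > 0 := by simp only [sub_zero]; positivity
      exact this.ne'
  have e1 : a*(1-0)/((1+a)*(a-0)) = 1/(1+a) := by
    have : 1 + a ≠ 0 := by linarith
    have h9 : a ≠ 0 := by linarith
    rw [sub_zero, sub_zero]
    field_simp
  rw [e1] at h2
  refine h2.congr fun n => ?_
  have h0 : (1:ℝ) ≤ a^n := one_le_pow₀ (by linarith)
  rw [one_div_pow, pow_succ]
  generalize a^n = x at *
  have h1 : 0 < x*a - 1 := by nlinarith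
  have h3 : a - 1/x = (x*a-1)/x := by field_simp
  have h4 : 1 - 1/x = (x-1)/x := by field_simp
  rw [h3, h4]
  have : 1 + a ≠ 0 := by linarith
  field_simp

theorem r_lt (a : ℝ) (ha : 3 < a) (n : ℕ) : a*(a^n-1)/((1+a)*(a^(n+1)-1)) < 1/(1+a) := by
  have h0 : (1:ℝ) ≤ a^n := one_le_pow₀ (by linarith)
  rw [pow_succ]
  generalize a^n = x at *
  have h1 : 0 < x*a - 1 := by nlinarith
  rw [div_lt_div_iff₀ (by positivity) (by positivity)]
  nlinarith

theorem r_nonneg (a : ℝ) (ha : 3 < a) (n : ℕ) : 0 ≤ a*(a^n-1)/((1+a)*(a^(n+1)-1)) := by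
  have h0 : (1:ℝ) ≤ a^n := one_le_pow₀ (by linarith)
  rw [pow_succ]
  generalize a^n = x at *
  have h1 : 0 < x*a - 1 := by nlinarith
  have h2 : 0 ≤ x - 1 := by linarith
  positivity


theorem realize_s4 (a : ℝ) (b : ℤ) (ha : 3 < a) (hab : a^2 - b*a + 1 = 0) (e : ℕ → ℝ) (s : ℕ → ℤ)
    (hs : ∀ n, e (n+2) - b * e (n+1) + e n = - s n) (l : ℝ) (hl : l < 1/2)
    (hup : ∀ δ > 0, ∀ᶠ n in Filter.atTop, |e n| ≤ l + δ)
    (hlo : ∀ δ > 0, ∃ᶠ n in Filter.atTop, l - δ ≤ |e n|) :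
    limsupDist a ((e 1 - e 0 / a) / (a - 1/a)) = l := by
  have a0 : a ≠ 0 := by linarith
  have hc1 : 1/a < 1 := by rw [div_lt_one (by linarith)]; linarith
  have hd : a - 1/a ≠ 0 := by linarith
  obtain ⟨P, hP⟩ : ∃ P, P = (e 1 - e 0 / a) / (a - 1/a) := ⟨_, rfl⟩
  rw [← hP]
  obtain ⟨Q, hQ⟩ : ∃ Q, Q = e 0 - P := ⟨_, rfl⟩
  have hbb : (b:ℝ) = a + 1/a := by field_simp; linarith
  have hP1 : P * (a - 1/a) = e 1 - e 0 / a := by rw [hP, div_mul_cancel₀ _ hd]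
  have hx : ∀ n, ∃ v w : ℤ, P * a^n = v + (e n - Q * (1/a)^n) ∧
      P * a^(n+1) = w + (e (n+1) - Q * (1/a)^(n+1)) := by
    intro n
    induction n with
    | zero =>
      refine ⟨0, 0, ?_, ?_⟩
      · rw [hQ]; simp
      · rw [hQ]; simp only [zero_add, pow_one, Int.cast_zero]
        linear_combination hP1
    | succ n ih =>
      obtain ⟨v, w, h1, h2⟩ := ih
      refine ⟨w, b * w - v + s n, h2, ?_⟩
      have h3 := hs n
      push_cast
      have h4 : P * a^(n+1+1) = b * (P * a^(n+1)) - P * a^n := by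
        linear_combination P * a^n * hab
      have h5 : Q * (1/a)^(n+1+1) = b * (Q * (1/a)^(n+1)) - Q * (1/a)^n := by
        have : (1/a)*a = 1 := by field_simp
        rw [hbb]
        linear_combination (-(Q * (1/a)^n)) * this
      rw [h4, h5, h1, h2]
      linear_combination - h3
  have hsm : ∀ δ > 0, ∀ᶠ n : ℕ in Filter.atTop, |Q * (1/a)^n| < δ := by
    intro δ hδ
    have : Filter.Tendsto (fun n : ℕ => |Q * (1/a)^n|) Filter.atTop (nhds |Q * 0|) :=
      ((tendsto_pow_atTop_nhds_zero_of_lt_one (by positivity) hc1).const_mul Q).abs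
    rw [mul_zero, abs_zero] at this
    exact this.eventually (gt_mem_nhds hδ)
  have hdist : ∀ n, |e n - Q * (1/a)^n| < 1/2 → distNearestInt (P * a^n) = |e n - Q * (1/a)^n| := by
    intro n hn
    obtain ⟨v, w, h1, -⟩ := hx n
    rw [h1]
    unfold distNearestInt
    generalize e n - Q * (1/a)^n = y at *
    have h2 : round y = 0 := by
      rw [round_eq_zero_iff]
      have := abs_lt.1 hn
      constructor <;> linarith
    rw [round_intCast_add, h2]
    push_cast
    congr 1
    ring
  have hnn : ∀ x, 0 ≤ distNearestInt x := fun x => abs_nonneg _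
  have hb2 : ∀ x, distNearestInt x ≤ 1/2 := fun x => abs_sub_round x
  have hup2 : ∀ δ > 0, ∀ᶠ n in Filter.atTop, |e n - Q * (1/a)^n| ≤ l + δ := by
    intro δ hδ
    filter_upwards [hup (δ/2) (by linarith), hsm (δ/2) (by linarith)] with n h1 h2
    have := abs_sub (e n) (Q * (1/a)^n)
    linarith
  have hhalf : ∀ᶠ n in Filter.atTop, |e n - Q * (1/a)^n| < 1/2 := by
    filter_upwards [hup2 ((1/2 - l)/2) (by linarith)] with n h1
    linarith
  unfold limsupDist
  apply le_antisymm
  · refine le_of_forall_pos_le_add fun δ hδ => ?_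
    refine Filter.limsup_le_of_le ?_ ?_
    · exact Filter.IsBoundedUnder.isCoboundedUnder_le (Filter.isBoundedUnder_of ⟨0, fun n => hnn _⟩)
    · filter_upwards [hup2 δ hδ, hhalf] with n h1 h2
      rw [hdist n h2]
      exact h1
  · refine le_of_forall_pos_le_add fun δ hδ => ?_
    rw [← sub_le_iff_le_add]
    refine Filter.le_limsup_of_frequently_le ?_ (Filter.isBoundedUnder_of ⟨1/2, fun n => hb2 _⟩)
    refine ((hlo (δ/2) (by linarith)).and_eventually ((hsm (δ/2) (by linarith)).and hhalf)).mono ?_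
    rintro n ⟨h1, h2, h3⟩
    rw [hdist n h3]
    have := abs_sub_abs_le_abs_sub (e n) (Q * (1/a)^n)
    linarith

theorem periodic_real (a : ℝ) (b : ℤ) (ha : 3 < a) (hab : a^2 - b*a + 1 = 0) (n : ℕ) :
    ∃ ξ : ℝ, limsupDist a ξ = a*(a^(n+1)-1)/((1+a)*(a^(n+2)-1)) := by
  have h1 : (1:ℝ) < a^(n+2) := one_lt_pow₀ (by linarith) (by omega)
  have h2 : (0:ℝ) < 1 + a := by linarith
  have h3 : (0:ℝ) < a^(n+2) - 1 := by linarith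
  obtain ⟨K, hK⟩ : ∃ K, K = a / ((1+a)*(a^(n+2)-1)) := ⟨_, rfl⟩
  have hK0 : 0 < K := by rw [hK]; positivity
  have hK1 : K * (1+a) * (a^(n+2)-1) = a := by rw [hK]; field_simp
  obtain ⟨e, he⟩ : ∃ e : ℕ → ℝ, ∀ i, e i = K * (a^(i % (n+2)) - a^(n+1 - i % (n+2))) := ⟨_, fun _ => rfl⟩
  have hint : ∀ i, ∃ s : ℤ, e (i+2) - b * e (i+1) + e i = - (s:ℝ) := by
    intro i
    have hj := Nat.mod_lt i (show 0 < n+2 by omega)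
    rw [he, he, he, Nat.add_mod i 2, Nat.add_mod i 1]
    generalize i % (n+2) = j at *
    have hbb : (b:ℝ) * a = a^2+1 := by linarith
    rcases Nat.lt_or_ge (j+2) (n+2) with h | h
    · obtain ⟨r, hr⟩ : ∃ r, n = j + 1 + r := ⟨n - (j+1), by omega⟩
      have e1 : (j + 1 % (n+2)) % (n+2) = j+1 := by
        rw [Nat.mod_eq_of_lt (show 1 < n+2 by omega), Nat.mod_eq_of_lt (by omega)]
      have e2 : (j + 2 % (n+2)) % (n+2) = j+2 := by
        rw [Nat.mod_eq_of_lt (show 2 < n+2 by omega), Nat.mod_eq_of_lt (by omega)]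
      rw [e1, e2, show n+1-(j+2) = r by omega, show n+1-(j+1) = r+1 by omega, show n+1-j = r+2 by omega]
      refine ⟨0, ?_⟩
      push_cast
      linear_combination (K * a^j - K * a^r) * hab
    · have h4 : j = n ∨ j = n+1 := by omega
      rcases h4 with h4 | h4
      · have e1 : (j + 1 % (n+2)) % (n+2) = n+1 := by
          rw [Nat.mod_eq_of_lt (show 1 < n+2 by omega), Nat.mod_eq_of_lt (by omega), h4]
        have e2 : (j + 2 % (n+2)) % (n+2) = 0 := by
          rw [h4, Nat.add_mod_mod, Nat.mod_self]
        rw [e1, e2, h4, show n+1-(n+1) = 0 by omega, show n+1-n = 1 by omega, show n+1-0 = n+1 by omega]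
        refine ⟨1, ?_⟩
        push_cast
        have a0 : a ≠ 0 := by linarith
        apply mul_left_cancel₀ a0
        have h5 : K * (1+a) * (a^n*a^2-1) = a := by rw [← pow_add]; exact hK1
        simp only [pow_succ, pow_zero] at h5 ⊢
        linear_combination (- h5) - K * (a^n * a - 1) * hbb
      · have e1 : (j + 1 % (n+2)) % (n+2) = 0 := by
          rw [h4, Nat.add_mod_mod, Nat.mod_self]
        have e2 : (j + 2 % (n+2)) % (n+2) = 1 := by
          rw [h4, Nat.add_mod_mod, show n+1+2 = 1 + (n+2) by ring, Nat.add_mod_right,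
            Nat.mod_eq_of_lt (by omega)]
        rw [e1, e2, h4, show n+1-(n+1) = 0 by omega, show n+1-1 = n by omega, show n+1-0 = n+1 by omega]
        refine ⟨-1, ?_⟩
        push_cast
        have a0 : a ≠ 0 := by linarith
        apply mul_left_cancel₀ a0
        have h5 : K * (1+a) * (a^n*a^2-1) = a := by rw [← pow_add]; exact hK1
        simp only [pow_succ, pow_zero] at h5 ⊢
        linear_combination h5 - K * (1 - a^n * a) * hbb
  choose s hs using hint
  have hr := r_lt a ha (n+1)
  have hq : 1/(1+a) < 1/2 := by
    rw [div_lt_div_iff₀ h2 (by norm_num)]; linarith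
  have hval : a*(a^(n+1)-1)/((1+a)*(a^(n+2)-1)) = K * (a^(n+1) - 1) := by rw [hK]; ring
  refine ⟨_, realize_s4 a b ha hab e s hs _ (by linarith) ?_ ?_⟩
  · intro δ hδ
    refine Filter.Eventually.of_forall fun i => ?_
    have hj := Nat.mod_lt i (show 0 < n+2 by omega)
    rw [hval, he]
    generalize i % (n+2) = j at *
    have a1 : (1:ℝ) ≤ a := by linarith
    have b1 : (1:ℝ) ≤ a^j := one_le_pow₀ a1
    have b2 : (1:ℝ) ≤ a^(n+1-j) := one_le_pow₀ a1
    have b3 : a^j ≤ a^(n+1) := pow_le_pow_right₀ a1 (by omega)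
    have b4 : a^(n+1-j) ≤ a^(n+1) := pow_le_pow_right₀ a1 (by omega)
    rw [abs_mul, abs_of_pos hK0]
    have : |a^j - a^(n+1-j)| ≤ a^(n+1) - 1 := by
      rw [abs_le]; constructor <;> linarith
    nlinarith
  · intro δ hδ
    rw [Filter.frequently_atTop]
    intro i
    refine ⟨n+1 + (n+2)*i, by nlinarith, ?_⟩
    rw [hval, he, Nat.add_mul_mod_self_left, Nat.mod_eq_of_lt (show n+1 < n+2 by omega), Nat.sub_self, pow_zero]
    have := le_abs_self (K * (a^(n+1)-1))
    linarith

theorem zero_real (a : ℝ) : limsupDist a 0 = 0 := by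
  unfold limsupDist distNearestInt
  simp


theorem exists_tail (a : ℝ) (ha : 3 < a) (t : ℕ → ℤ) (ht : ∀ k, t k = 0 ∨ t k = 1) :
    ∃ f : ℕ → ℝ, (∀ n, a * f n = t (n+1) + f (n+1)) ∧ ∀ n, 0 ≤ f n ∧ f n ≤ 1/2 := by
  have a0 : 0 < a := by linarith
  have hc0 : 0 ≤ 1/a := by positivity
  have hc1 : 1/a < 1 := by rw [div_lt_one a0]; linarith
  have ht0 : ∀ k, (0:ℝ) ≤ t k := by
    intro k; rcases ht k with h | h <;> rw [h] <;> norm_num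
  have ht1 : ∀ k, (t k : ℝ) ≤ 1 := by
    intro k; rcases ht k with h | h <;> rw [h] <;> norm_num
  have hg : Summable (fun k : ℕ => (1/a)^k * (1/a)) :=
    (summable_geometric_of_lt_one hc0 hc1).mul_right _
  have hsum : ∀ n, Summable (fun k : ℕ => (t (n+1+k) : ℝ) * ((1/a)^k * (1/a))) := by
    intro n
    refine Summable.of_nonneg_of_le (fun k => mul_nonneg (ht0 _) (by positivity)) (fun k => ?_) hg
    exact mul_le_of_le_one_left (by positivity) (ht1 _)
  refine ⟨fun n => ∑' k : ℕ, (t (n+1+k) : ℝ) * ((1/a)^k * (1/a)), ?_, ?_⟩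
  · intro n
    simp only
    rw [(hsum n).tsum_eq_zero_add, mul_add, ← tsum_mul_left]
    congr 1
    · simp only [add_zero, pow_zero, one_mul]
      field_simp
    · congr 1
      funext k
      rw [show n+1+(k+1) = n+1+1+k by ring, pow_succ]
      field_simp
  · intro n
    refine ⟨tsum_nonneg (fun k => mul_nonneg (ht0 _) (by positivity)), ?_⟩
    have h1 : ∑' k : ℕ, (t (n+1+k) : ℝ) * ((1/a)^k * (1/a)) ≤ ∑' k : ℕ, (1/a)^k * (1/a) :=
      (hsum n).tsum_le_tsum (fun k => mul_le_of_le_one_left (by positivity) (ht1 _)) hg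
    refine h1.trans ?_
    rw [tsum_mul_right, tsum_geometric_of_lt_one hc0 hc1]
    have h2 : (1 - 1/a)⁻¹ * (1/a) = 1/(a-1) := by
      have : a - 1 ≠ 0 := by linarith
      have h3 : 1 - 1/a = (a-1)/a := by field_simp
      rw [h3]
      field_simp
    rw [h2, div_le_div_iff₀ (by linarith) (by norm_num)]
    linarith

theorem sparse_real (a : ℝ) (b : ℤ) (ha : 3 < a) (hab : a^2 - b*a + 1 = 0) (t : ℕ → ℤ)
    (ht : ∀ k, t k = 0 ∨ t k = 1) (t1 : t 1 = 0)
    (hsp : ∀ L : ℕ, ∃ M, ∀ n ≥ M, t n = 1 → ∀ j, 0 < j → j ≤ L → t (n+j) = 0)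
    (hinf : ∀ M, ∃ n ≥ M, t n = 1)
    (f : ℕ → ℝ) (hf : ∀ n, a * f n = t (n+1) + f (n+1)) (bf : ∀ n, 0 ≤ f n ∧ f n ≤ 1/2) :
    limsupDist a (a/(1+a) * f 0) = 1/(1+a) := by
  have a0 : 0 < a := by linarith
  have a0' : a ≠ 0 := by linarith
  have a1 : 0 < 1 + a := by linarith
  obtain ⟨g, g0, hg⟩ : ∃ g : ℕ → ℝ, g 0 = 0 ∧ ∀ n, a * g (n+1) = t (n+1) + g n := by
    refine ⟨fun n => Nat.rec 0 (fun k x => ((t (k+1) : ℝ) + x)/a) n, rfl, ?_⟩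
    intro n
    simp only
    field_simp
  have bg : ∀ n, 0 ≤ g n ∧ g n ≤ 1/2 := by
    intro n
    induction n with
    | zero => rw [g0]; norm_num
    | succ n ih =>
      have := hg n
      rcases ht (n+1) with h | h <;> rw [h] at this <;> push_cast at this <;>
        constructor <;> nlinarith
  have fz : ∀ L n, (∀ j, 0 < j → j ≤ L → t (n+j) = 0) → a^L * f n = f (n+L) := by
    intro L n
    induction L with
    | zero => intro _; simp
    | succ L ih =>
      intro h
      have h1 := ih (fun j h1 h2 => h j h1 (by omega))
      have h2 := hf (n+L)
      have h3 := h (L+1) (by omega) le_rfl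
      rw [add_assoc, h3] at h2
      rw [pow_succ, mul_right_comm, h1, mul_comm, h2]
      simp
  have gz : ∀ L n, (∀ j, 0 < j → j ≤ L → t (n+j) = 0) → a^L * g (n+L) = g n := by
    intro L n
    induction L with
    | zero => intro _; simp
    | succ L ih =>
      intro h
      have h1 := ih (fun j h1 h2 => h j h1 (by omega))
      have h2 := hg (n+L)
      have h3 := h (L+1) (by omega) le_rfl
      rw [add_assoc, h3] at h2
      rw [pow_succ, mul_assoc, h2, Int.cast_zero, zero_add, h1]
  obtain ⟨e, he⟩ : ∃ e : ℕ → ℝ, ∀ n, e n = a/(1+a) * (f n - g n) := ⟨_, fun _ => rfl⟩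
  have hP : (e 1 - e 0 / a) / (a - 1/a) = a/(1+a) * f 0 := by
    have h1 := hf 0
    have h2 := hg 0
    rw [zero_add, t1, g0] at h2
    rw [zero_add, t1] at h1
    have g1 : g 1 = 0 := by
      have : a * g 1 = 0 := by rw [h2]; simp
      rcases mul_eq_zero.1 this with h | h
      · exact absurd h a0'
      · exact h
    have f1 : f 1 = a * f 0 := by rw [h1]; simp
    have hc1 : 1/a < 1 := by rw [div_lt_one (by linarith)]; linarith
    have hd : a - 1/a ≠ 0 := by linarith
    rw [div_eq_iff hd, he, he, f1, g1, g0]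
    ring
  have hs : ∀ n, e (n+2) - b * e (n+1) + e n = - ((t (n+2) - t (n+1) : ℤ) : ℝ) := by
    intro n
    have f1 := hf n
    have f2 := hf (n+1)
    have g1 := hg n
    have g2 := hg (n+1)
    rw [show n+1+1 = n+2 by ring] at f2 g2
    have hbb : (b:ℝ) * a = a^2+1 := by linarith
    rw [he, he, he]
    push_cast
    have h9 : a * (1+a) ≠ 0 := by positivity
    apply mul_left_cancel₀ h9
    have h10 : a * (1+a) * (a/(1+a) * (f (n+2) - g (n+2)) - b * (a/(1+a) * (f (n+1) - g (n+1))) + a/(1+a) * (f n - g n))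
       = a * (a * (f (n+2) - g (n+2)) - (b * a) * (f (n+1) - g (n+1)) + a * (f n - g n)) := by
      field_simp
    rw [h10, hbb]
    linear_combination a * f1 - a^2 * f2 + a^2 * g1 - a * g2
  have hA : a/(1+a) * (1/a) = 1/(1+a) := by field_simp
  have hA1 : 0 < a/(1+a) := by positivity
  have hA2 : a/(1+a) < 1 := by rw [div_lt_one a1]; linarith
  have hsmall : ∀ δ > 0, ∃ L : ℕ, 1 ≤ δ * a^L := by
    intro δ hδ
    obtain ⟨L, hL⟩ := pow_unbounded_of_one_lt (1/δ) (show 1 < a by linarith)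
    refine ⟨L, ?_⟩
    rw [div_lt_iff₀ hδ] at hL
    linarith
  have hfl : ∀ δ > 0, ∃ M, ∀ n ≥ M, f n ≤ 1/a + δ ∧ g n ≤ 1/a + δ ∧ (t (n+1) = 1 → g n ≤ δ) := by
    intro δ hδ
    obtain ⟨L, hL⟩ := hsmall δ hδ
    obtain ⟨M, hM⟩ := hsp (L+1)
    have haL : 0 < a^L := by positivity
    have key : ∀ x y : ℝ, a^L * x = y → y ≤ 1/2 → x ≤ δ := by
      intro x y h1 h2
      by_contra h
      push Not at h
      nlinarith
    have key2 : ∀ x y : ℝ, a * x = 1 + y → y ≤ δ → x ≤ 1/a + δ := by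
      intro x y h1 h2
      have : x = 1/a + y/a := by field_simp; linarith
      rw [this]
      have : y/a ≤ δ := by rw [div_le_iff₀ a0]; nlinarith
      linarith
    have key3 : ∀ x y : ℝ, a * x = 0 + y → y ≤ 1/2 → x ≤ 1/a + δ := by
      intro x y h1 h2
      have h3 : x = y/a := by field_simp; linarith
      have : y/a ≤ 1/a := by gcongr; linarith
      linarith
    have gback : ∀ n ≥ M + L + 1, t (n+1) = 1 → g n ≤ δ := by
      intro n hn h1
      obtain ⟨m, hm⟩ : ∃ m, n = m + L := ⟨n - L, by omega⟩
      have := gz L m (by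
        intro j h2 h3
        rcases ht (m+j) with h | h
        · exact h
        · have := hM (m+j) (by omega) h (n+1-(m+j)) (by omega) (by omega)
          rw [show m+j+(n+1-(m+j)) = n+1 by omega, h1] at this
          omega)
      rw [← hm] at this
      exact key _ _ this (bg m).2
    refine ⟨M + L + 2, ?_⟩
    intro n hn
    refine ⟨?_, ?_, gback n (by omega)⟩
    · rcases ht (n+1) with h | h
      · have h1 := hf n
        rw [h, Int.cast_zero] at h1
        exact key3 _ _ h1 (bf _).2
      · have h1 := hf n
        rw [h, Int.cast_one] at h1
        refine key2 _ _ h1 ?_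
        refine key _ _ (fz L (n+1) ?_) (bf _).2
        intro j h2 h3
        exact hM (n+1) (by omega) h j h2 (by omega)
    · obtain ⟨m, rfl⟩ : ∃ m, n = m+1 := ⟨n-1, by omega⟩
      rcases ht (m+1) with h | h
      · have h1 := hg m
        rw [h, Int.cast_zero] at h1
        exact key3 _ _ h1 (bg _).2
      · have h1 := hg m
        rw [h, Int.cast_one] at h1
        exact key2 _ _ h1 (gback m (by omega) h)
  rw [← hP]
  refine realize_s4 a b ha hab e _ hs _ ?_ ?_ ?_
  · rw [div_lt_div_iff₀ a1 (by norm_num)]; linarith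
  · intro δ hδ
    obtain ⟨M, hM⟩ := hfl δ hδ
    filter_upwards [Filter.eventually_ge_atTop M] with n hn
    obtain ⟨h1, h2, -⟩ := hM n hn
    have : |f n - g n| ≤ 1/a + δ := by
      have := bf n
      have := bg n
      rw [abs_le]; constructor <;> linarith
    rw [he, abs_mul, abs_of_pos hA1, ← hA]
    nlinarith
  · intro δ hδ
    obtain ⟨M, hM⟩ := hfl δ hδ
    rw [Filter.frequently_atTop]
    intro i
    obtain ⟨n, hn, h1⟩ := hinf (M+i+1)
    obtain ⟨m, rfl⟩ : ∃ m, n = m+1 := ⟨n-1, by omega⟩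
    refine ⟨m, by omega, ?_⟩
    obtain ⟨-, -, h2⟩ := hM m (by omega)
    have h3 := h2 h1
    have h4 := hf m
    rw [h1, Int.cast_one] at h4
    have h5 : 1/a ≤ f m := by
      rw [div_le_iff₀ a0]
      have := (bf (m+1)).1
      linarith
    have h6 : 1/a - δ ≤ f m - g m := by linarith
    refine le_trans ?_ (le_abs_self _)
    rw [he, ← hA]
    nlinarith

open Classical in
theorem uncount (a : ℝ) (b : ℤ) (ha : 3 < a) (hab : a^2 - b*a + 1 = 0) :
    ¬ Set.Countable {ξ : ℝ | limsupDist a ξ = 1/(1+a)} := by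
  obtain ⟨t, htdef⟩ : ∃ t : Set ℕ → ℕ → ℤ, ∀ σ n, t σ n =
      if ∃ m, n = 2^(m+1) ∧ (Even m ∨ m/2 ∈ σ) then 1 else 0 := ⟨_, fun _ _ => rfl⟩
  have ht : ∀ σ k, t σ k = 0 ∨ t σ k = 1 := by
    intro σ k
    rw [htdef]
    split_ifs <;> simp
  have ht1 : ∀ σ n, t σ n = 1 ↔ ∃ m, n = 2^(m+1) ∧ (Even m ∨ m/2 ∈ σ) := by
    intro σ n
    rw [htdef]
    split_ifs with h <;> simp [h]
  have hex := fun σ => exists_tail a ha (t σ) (ht σ)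
  choose f hf bf using hex
  have hval : ∀ σ, limsupDist a (a/(1+a) * f σ 0) = 1/(1+a) := by
    intro σ
    refine sparse_real a b ha hab (t σ) (ht σ) ?_ ?_ ?_ (f σ) (hf σ) (bf σ)
    · rcases ht σ 1 with h | h
      · exact h
      · exfalso
        obtain ⟨m, hm, -⟩ := (ht1 σ 1).1 h
        have := Nat.one_lt_two_pow (show m+1 ≠ 0 by omega)
        omega
    · intro L
      refine ⟨L+1, ?_⟩
      intro n hn h j hj hjL
      rcases ht σ (n+j) with h' | h'
      · exact h'
      · exfalso
        obtain ⟨m, hm, -⟩ := (ht1 σ n).1 h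
        obtain ⟨m', hm', -⟩ := (ht1 σ (n+j)).1 h'
        have h1 : 2^(m+1) < 2^(m'+1) := by omega
        have h2 : m+1 < m'+1 := (Nat.pow_lt_pow_iff_right (by norm_num)).1 h1
        have h3 : 2^(m+1+1) ≤ 2^(m'+1) := Nat.pow_le_pow_right (by norm_num) (by omega)
        rw [pow_succ] at h3
        omega
    · intro M
      refine ⟨2^(2*M+1), ?_, (ht1 σ _).2 ⟨2*M, rfl, Or.inl (by simp)⟩⟩
      have : 2*M+1 < 2^(2*M+1) := Nat.lt_two_pow_self
      omega
  have hinj : Function.Injective (fun σ => a/(1+a) * f σ 0) := by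
    intro σ τ h
    have hA1 : a/(1+a) ≠ 0 := by
      have : 0 < 1 + a := by linarith
      have : 0 < a := by linarith
      positivity
    have h0 : f σ 0 = f τ 0 := mul_left_cancel₀ hA1 h
    have hall : ∀ c, t σ (c+1) = t τ (c+1) := by
      intro c
      induction c using Nat.strong_induction_on with
      | _ c ih =>
        have h1 := rec_diff a (fun k => t σ (k+1)) (fun k => t τ (k+1)) (f σ) (f τ) (hf σ) (hf τ) c ih
        rw [h0, sub_self, mul_zero] at h1
        have h2 := hf σ c
        have h3 := hf τ c
        have h4 := bf σ (c+1)
        have h5 := bf τ (c+1)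
        have h6 : f σ c = f τ c := by linarith
        rw [h6] at h2
        have h7 : (t σ (c+1) : ℝ) < t τ (c+1) + 1 := by linarith
        have h8 : (t τ (c+1) : ℝ) < t σ (c+1) + 1 := by linarith
        have h7' : t σ (c+1) < t τ (c+1) + 1 := by exact_mod_cast h7
        have h8' : t τ (c+1) < t σ (c+1) + 1 := by exact_mod_cast h8
        omega
    have hmem : ∀ σ k, k ∈ σ ↔ t σ (2^(2*k+1+1)) = 1 := by
      intro σ k
      rw [ht1]
      constructor
      · intro h
        refine ⟨2*k+1, rfl, Or.inr ?_⟩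
        rwa [show (2*k+1)/2 = k by omega]
      · rintro ⟨m, hm, h⟩
        have h1 := Nat.pow_right_injective le_rfl hm
        have h2 : m = 2*k+1 := by omega
        rw [h2] at h
        rcases h with h | h
        · exfalso
          rw [Nat.even_iff] at h
          omega
        · rwa [show (2*k+1)/2 = k by omega] at h
    ext k
    rw [hmem, hmem]
    obtain ⟨c, hc⟩ : ∃ c, 2^(2*k+1+1) = c+1 := ⟨2^(2*k+1+1) - 1, by
      have : 0 < 2^(2*k+1+1) := by positivity
      omega⟩
    rw [hc, hall]
  intro hcount
  have : Countable {ξ : ℝ | limsupDist a ξ = 1/(1+a)} := hcount.to_subtype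
  have hinj2 : Function.Injective (fun σ : Set ℕ => (⟨a/(1+a) * f σ 0, hval σ⟩ : {ξ : ℝ | limsupDist a ξ = 1/(1+a)})) := by
    intro σ τ h
    exact hinj (congrArg Subtype.val h)
  have hC : Countable (Set ℕ) := hinj2.countable
  obtain ⟨F, hF⟩ := exists_injective_nat (Set ℕ)
  exact Function.cantor_injective F hF

theorem stmt4 (b : ℤ) (hb : 4 ≤ b) (α : ℝ)
    (hα : α = ((b : ℝ) + Real.sqrt ((b : ℝ) ^ 2 - 4)) / 2)
    (p q : ℕ → ℤ)
    (hp0 : p 0 = 0) (hp2 : p 2 = 1)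
    (hpeven : ∀ n : ℕ, p (2 * n + 4) = b * p (2 * n + 2) - p (2 * n))
    (hpodd : ∀ n : ℕ, p (2 * n + 1) = p (2 * n) + p (2 * n + 2))
    (hq0 : q 0 = 1) (hq2 : q 2 = 1 + b)
    (hqeven : ∀ n : ℕ, q (2 * n + 4) = b * q (2 * n + 2) - q (2 * n))
    (hqodd : ∀ n : ℕ, q (2 * n + 1) = q (2 * n) + q (2 * n + 2)) :
    StrictMono (fun n : ℕ => (p n : ℝ) / (q n : ℝ)) ∧
    Filter.Tendsto (fun n : ℕ => (p n : ℝ) / (q n : ℝ)) Filter.atTop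
      (nhds (1 / (1 + α))) ∧
    (specL α ∩ Set.Icc 0 (1 / (1 + α)) =
      {x : ℝ | ∃ n : ℕ, x = (p n : ℝ) / (q n : ℝ)} ∪ {1 / (1 + α)}) ∧
    ¬ Set.Countable {ξ : ℝ | limsupDist α ξ = 1 / (1 + α)} := by
  obtain ⟨ha, hab⟩ := alpha_facts b hb α hα
  have hcf := closed_form α b ha hab p q hp0 hp2 hpeven hpodd hq0 hq2 hqeven hqodd
  have hfun : (fun n : ℕ => (p n : ℝ) / (q n : ℝ)) = fun n : ℕ => α*(α^n-1)/((1+α)*(α^(n+1)-1)) :=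
    funext hcf
  have hu := uncount α b ha hab
  refine ⟨?_, ?_, ?_, hu⟩
  · rw [hfun]; exact r_mono α ha
  · rw [hfun]; exact r_lim α ha
  · ext x
    constructor
    · rintro ⟨⟨ξ, hξ⟩, h0, h1⟩
      rcases h1.lt_or_eq with h1 | h1
      · left
        rcases h0.lt_or_eq with h0 | h0
        · obtain ⟨m, hm⟩ := forward_dir α b ha hab ξ x hξ h0 h1
          exact ⟨m+1, by rw [hcf, hm]⟩
        · exact ⟨0, by rw [hp0, ← h0]; simp⟩
      · right
        exact h1
    · rintro (⟨n, hn⟩ | hx)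
      · rw [hn, hcf]
        refine ⟨?_, r_nonneg α ha n, (r_lt α ha n).le⟩
        cases n with
        | zero => exact ⟨0, by rw [zero_real]; simp⟩
        | succ n => exact periodic_real α b ha hab n
      · rw [Set.mem_singleton_iff] at hx
        rw [hx]
        have h1 : (0:ℝ) < 1 + α := by linarith
        refine ⟨?_, by positivity, le_rfl⟩
        by_contra hne
        apply hu
        have : {ξ : ℝ | limsupDist α ξ = 1/(1+α)} = ∅ := by
          ext ξ
          simp only [Set.mem_setOf_eq, Set.mem_empty_iff_false, iff_false]
          intro h
          exact hne ⟨ξ, h⟩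
        rw [this]
        exact Set.countable_empty
end

section
/- Let b ≥ 4 be an integer and α = (b+√(b²−4))/2, with conjugate α₂ = 1/α. Then: (1) { ξ ∈ ℝ : limsup_{n→∞} ‖ξ·α^n‖ = 0 } equals X₀ := (1/(α−α₂))·ℤ[α]; (2) { ξ ∈ ℝ : limsup_{n→∞} ‖ξ·α^n‖ = 1/(2+b) } equals X₁ := { ±(α−1)/(b²−4) + x : x ∈ X₀ }; (3) for every ξ ∈ ℝ ∖ X₀ one has limsup_{n→∞} ‖ξ·α^n‖ ≥ 1/(2+b); and (4) for every ξ ∈ ℝ ∖ (X₀ ∪ X₁) one has limsup_{n→∞} ‖ξ·α^n‖ ≥ 1/(1+b). -/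
namespace S5

lemma adj {α b : ℝ} {B : ℤ} (hB : b = B) (h : α * (b - α) = 1) (y : ℝ) :
    y ∈ Algebra.adjoin ℤ ({α} : Set ℝ) ↔ ∃ p q : ℤ, y = p + q * α := by
  constructor
  · intro hy
    induction hy using Algebra.adjoin_induction with
    | mem x hx =>
      rw [Set.mem_singleton_iff] at hx
      exact ⟨0, 1, by simp [hx]⟩
    | algebraMap r => exact ⟨r, 0, by simp⟩
    | add x y _ _ hx hy =>
      obtain ⟨p, q, rfl⟩ := hx
      obtain ⟨p', q', rfl⟩ := hy
      exact ⟨p + p', q + q', by push_cast; ring⟩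
    | mul x y _ _ hx hy =>
      obtain ⟨p, q, rfl⟩ := hx
      obtain ⟨p', q', rfl⟩ := hy
      refine ⟨p * p' - q * q', p * q' + q * p' + q * q' * B, ?_⟩
      push_cast
      rw [← hB]
      linear_combination (-(q * q' : ℝ)) * h
  · rintro ⟨p, q, rfl⟩
    have h1 : α ∈ Algebra.adjoin ℤ ({α} : Set ℝ) := Algebra.subset_adjoin rfl
    exact add_mem (intCast_mem _ p) (mul_mem (intCast_mem _ q) h1)

def Q (α β b : ℝ) (t : ℤ) (ξ : ℝ) : Prop :=
  ∃ v0 v1 : ℤ, ξ * (α - β) = v1 - β * v0 - t / (b + 2) * (1 + β)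

lemma Q_back {α β b : ℝ} {B : ℤ} (hB : b = B) (hb : 4 ≤ b) (h1 : α + β = b) (h2 : α * β = 1)
    (n : ℕ) : ∀ (t : ℤ) (ξ : ℝ), Q α β b t (ξ * α ^ n) → Q α β b (t * (-1) ^ n) ξ := by
  have hb2 : b + 2 ≠ 0 := by linarith
  induction n with
  | zero => intro t ξ h; simpa using h
  | succ n ih =>
    intro t ξ h
    have h' : Q α β b t ((ξ * α) * α ^ n) := by
      rw [pow_succ'] at h
      rwa [mul_assoc]
    obtain ⟨v0, v1, hv⟩ := ih _ _ h'
    generalize hs : t * (-1) ^ n = s at hv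
    rw [pow_succ, ← mul_assoc, hs]
    refine ⟨B * v0 - v1 + s, v0, ?_⟩
    push_cast
    rw [← hB]
    have e : β ^ 2 = b * β - 1 := by rw [← h1]; linear_combination -h2
    have hs2 : (s : ℝ) = s / (b + 2) * (b + 2) := by field_simp
    generalize (s : ℝ) / (b + 2) = c at hv hs2
    rw [hs2]
    have e3 : (c * (b + 2)) * -1 / (b + 2) = -c := by field_simp
    rw [e3]
    linear_combination β * hv - ξ * (α - β) * h2 - (v0 + c) * e

lemma dist_tendsto {α β b : ℝ} {B : ℤ} (hB : b = B) (hb : 4 ≤ b) (h1 : α + β = b)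
    (h2 : α * β = 1) (hβ : 0 < β) (hβ1 : β < 1) (t : ℤ) (ht : t = 0 ∨ t = 1 ∨ t = -1)
    (ξ : ℝ) (h : Q α β b t ξ) : limsupDist α ξ = |(t : ℝ)| / (b + 2) := by
  have hb2 : b + 2 ≠ 0 := by linarith
  obtain ⟨v0, v1, hv⟩ := h
  obtain ⟨c, hc⟩ : ∃ c, c = (t : ℝ) / (b + 2) := ⟨_, rfl⟩
  have hct : (t : ℝ) = c * (b + 2) := by rw [hc]; field_simp
  rw [← hc] at hv
  set C := ξ - v0 - c with hC
  have key : ∀ n : ℕ, ∃ v v' : ℤ, ξ * α ^ n - C * β ^ n = v + c * (-1) ^ n ∧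
      ξ * α ^ (n + 1) - C * β ^ (n + 1) = v' - c * (-1) ^ n := by
    intro n
    induction n with
    | zero =>
      refine ⟨v0, v1, by simp [hC]; ring, ?_⟩
      simp only [zero_add, pow_one, pow_zero, hC]
      linear_combination hv
    | succ n ih =>
      obtain ⟨v, v', e1, e2⟩ := ih
      refine ⟨v', B * v' - v - t * (-1) ^ n, by rw [e2]; ring, ?_⟩
      push_cast
      rw [← hB, hct]
      have ea : α ^ 2 = b * α - 1 := by rw [← h1]; linear_combination -h2
      have eb : β ^ 2 = b * β - 1 := by rw [← h1]; linear_combination -h2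
      linear_combination b * e2 - e1 + ξ * α ^ n * ea - C * β ^ n * eb
  have hcb : |c| < 1 / 2 := by
    have : |(t : ℝ)| ≤ 1 := by rcases ht with rfl | rfl | rfl <;> simp
    rw [hc, abs_div, abs_of_pos (by linarith : 0 < b + 2), div_lt_iff₀ (by linarith)]
    linarith
  have hlim : Filter.Tendsto (fun n : ℕ => |c + C * (-β) ^ n|) Filter.atTop (nhds |c|) := by
    have h0 : Filter.Tendsto (fun n : ℕ => (-β) ^ n) Filter.atTop (nhds 0) :=
      tendsto_pow_atTop_nhds_zero_of_abs_lt_one (by rw [abs_neg, abs_of_pos hβ]; exact hβ1)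
    have := ((h0.const_mul C).const_add c).abs
    simpa using this
  have hfin : Filter.Tendsto (fun n : ℕ => distNearestInt (ξ * α ^ n)) Filter.atTop (nhds |c|) := by
    refine hlim.congr' ?_
    filter_upwards [hlim.eventually (gt_mem_nhds hcb)] with n hn
    obtain ⟨v, v', e1, -⟩ := key n
    have e : ξ * α ^ n = v + (-1) ^ n * (c + C * (-β) ^ n) := by
      have : (-β) ^ n = (-1) ^ n * β ^ n := by rw [neg_pow]
      have h3 : ((-1 : ℝ) ^ n) * (-1) ^ n = 1 := by rw [← mul_pow]; simp
      rw [this]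
      linear_combination e1 - C * β ^ n * h3
    have habs : |(-1) ^ n * (c + C * (-β) ^ n)| = |c + C * (-β) ^ n| := by
      rw [abs_mul]; simp
    rw [← habs] at hn ⊢
    rw [e]
    generalize (-1) ^ n * (c + C * (-β) ^ n) = x at hn
    have hr : round x = 0 := by
      rw [round_eq_zero_iff]
      exact ⟨by linarith [(abs_lt.1 hn).1], (abs_lt.1 hn).2⟩
    simp [distNearestInt, round_intCast_add, hr]
  rw [limsupDist, hfin.limsup_eq, hc, abs_div, abs_of_pos (by linarith : 0 < b + 2)]

/-- local step -/
lemma step {b : ℝ} (hb : 4 ≤ b) (e0 e1 e2 e3 : ℝ) (s : ℤ)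
    (h0 : |e0| < 1 / (b + 1)) (h1 : |e1| < 1 / (b + 1)) (h2 : |e2| < 1 / (b + 1))
    (h3 : |e3| < 1 / (b + 1)) (r0 : b * e1 - e0 - e2 = 1) (r1 : b * e2 - e1 - e3 = s) :
    s = -1 := by
  obtain ⟨d, hd⟩ : ∃ d, d = 1 / (b + 1) := ⟨_, rfl⟩
  have hdb : d * (b + 1) = 1 := by rw [hd]; field_simp
  rw [← hd] at h0 h1 h2 h3
  rw [abs_lt] at h0 h1 h2 h3
  have hd0 : 0 < d := by rw [hd]; positivity
  have hd5 : d ≤ 1 / 5 := by nlinarith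
  have n1 : b * e1 < b * d := by nlinarith
  have e2neg : e2 < 0 := by linarith
  have hbe2 : b * e2 < 0 := by nlinarith
  have hbe2' : - (b * d) < b * e2 := by nlinarith
  have e1pos : 0 < e1 := by
    by_contra hh
    have : b * e1 ≤ 0 := by nlinarith
    linarith
  have hs1 : (s : ℝ) < 1 := by linarith
  have hs2 : (-2 : ℝ) < s := by linarith
  have hs1' : s < 1 := by exact_mod_cast hs1
  have hs2' : -2 < s := by exact_mod_cast hs2
  have hs : s = -1 ∨ s = 0 := by omega
  rcases hs with h | h
  · exact h
  · exfalso
    rw [h] at r1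
    have a1 : b * e1 > 1 - d + e2 := by linarith
    have a2 : b * e2 > e1 - d := by push_cast at r1; linarith
    have a3 : b * (b * e2) > b * e1 - b * d := by nlinarith
    nlinarith

lemma main {α β b : ℝ} {B : ℤ} (hB : b = B) (hb : 4 ≤ b) (h1 : α + β = b)
    (h2 : α * β = 1) (hα : 1 < α) (ξ : ℝ) (hL : limsupDist α ξ < 1 / (b + 1)) :
    ∃ t : ℤ, (t = 0 ∨ t = 1 ∨ t = -1) ∧ Q α β b t ξ := by
  have hb2 : b + 2 ≠ 0 := by linarith
  set u : ℕ → ℤ := fun n => round (ξ * α ^ n) with hu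
  set e : ℕ → ℝ := fun n => ξ * α ^ n - u n with he
  set s : ℕ → ℤ := fun n => u (n + 2) - B * u (n + 1) + u n with hs
  have rec0 : ∀ n, b * e (n + 1) - e n - e (n + 2) = s n := by
    intro n
    simp only [he, hs]
    push_cast
    rw [← hB]
    have ea : α ^ 2 = b * α - 1 := by rw [← h1]; linear_combination -h2
    linear_combination -(ξ * α ^ n) * ea
  have hev : ∀ᶠ n in Filter.atTop, |e n| < 1 / (b + 1) := by
    refine Filter.eventually_lt_of_limsup_lt hL ?_
    refine Filter.isBoundedUnder_of ⟨1 / 2, fun n => ?_⟩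
    exact abs_sub_round _
  obtain ⟨N, hN⟩ := Filter.eventually_atTop.1 hev
  have st1 : ∀ n ≥ N, s n = 1 → s (n + 1) = -1 := by
    intro n hn h
    refine step hb (e n) (e (n+1)) (e (n+2)) (e (n+3)) _ (hN _ hn) (hN _ (by omega))
      (hN _ (by omega)) (hN _ (by omega)) ?_ (rec0 (n + 1))
    rw [rec0, h]; simp
  have st2 : ∀ n ≥ N, s n = -1 → s (n + 1) = 1 := by
    intro n hn h
    have := step hb (-e n) (-e (n+1)) (-e (n+2)) (-e (n+3)) (- s (n + 1))
      (by rw [abs_neg]; exact hN _ hn) (by rw [abs_neg]; exact hN _ (by omega))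
      (by rw [abs_neg]; exact hN _ (by omega)) (by rw [abs_neg]; exact hN _ (by omega)) ?_ ?_
    · omega
    · have := rec0 n
      rw [h] at this
      push_cast at this
      linarith
    · have := rec0 (n + 1)
      push_cast
      rw [← this]; ring
  have st0 : ∀ n ≥ N, s n = 0 ∨ s n = 1 ∨ s n = -1 := by
    intro n hn
    have a0 := abs_lt.1 (hN n hn)
    have a1 := abs_lt.1 (hN (n + 1) (by omega))
    have a2 := abs_lt.1 (hN (n + 2) (by omega))
    have r := rec0 n
    obtain ⟨d, hd⟩ : ∃ d, d = 1 / (b + 1) := ⟨_, rfl⟩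
    have hdb : d * (b + 1) = 1 := by rw [hd]; field_simp
    rw [← hd] at a0 a1 a2
    have hd0 : 0 < d := by rw [hd]; positivity
    have hd5 : d ≤ 1 / 5 := by nlinarith
    have c1 : b * e (n + 1) < b * d := by nlinarith
    have c2 : -(b * d) < b * e (n + 1) := by nlinarith
    have c3 : (s n : ℝ) < 2 := by linarith
    have c4 : (-2 : ℝ) < s n := by linarith
    have c3' : s n < 2 := by exact_mod_cast c3
    have c4' : -2 < s n := by exact_mod_cast c4
    omega
  have hM : ∃ M ≥ N, ∃ t : ℤ, (t = 0 ∨ t = 1 ∨ t = -1) ∧ ∀ k, s (M + k) = t * (-1) ^ k := by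
    by_cases hz : ∀ n ≥ N, s n = 0
    · exact ⟨N, le_rfl, 0, Or.inl rfl, fun k => by rw [hz _ (by omega)]; simp⟩
    · push Not at hz
      obtain ⟨M, hMN, hM⟩ := hz
      have hM1 : s M = 1 ∨ s M = -1 := by have := st0 M hMN; tauto
      refine ⟨M, hMN, s M, Or.inr hM1, fun k => ?_⟩
      have : (s (M + k) = 1 ∨ s (M + k) = -1) ∧ s (M + k) = s M * (-1) ^ k := by
        induction k with
        | zero => simpa using hM1
        | succ k ih =>
          obtain ⟨i1, i2⟩ := ih
          rw [pow_succ, ← mul_assoc, ← i2, ← add_assoc]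
          rcases i1 with i1 | i1
          · rw [st1 _ (by omega) i1, i1]; simp
          · rw [st2 _ (by omega) i1, i1]; simp
      exact this.2
  obtain ⟨M, hMN, t, ht, hst⟩ := hM
  obtain ⟨c, hc⟩ : ∃ c, c = (t : ℝ) / (b + 2) := ⟨_, rfl⟩
  have hct : (t : ℝ) = c * (b + 2) := by rw [hc]; field_simp
  -- w k = e (M+k) + c (-1)^k
  set d : ℕ → ℝ := fun k => (e (M + k + 1) - c * (-1) ^ k) - β * (e (M + k) + c * (-1) ^ k) with hd
  have hdrec : ∀ k, d (k + 1) = α * d k := by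
    intro k
    have r := rec0 (M + k)
    rw [hst k] at r
    push_cast at r
    rw [hct] at r
    have r2 : e (M + k + 2) = b * e (M + k + 1) - e (M + k) - c * (b + 2) * (-1) ^ k := by linarith
    simp only [hd]
    rw [show M + (k + 1) + 1 = M + k + 2 by ring, show M + (k + 1) = M + k + 1 by ring, r2, pow_succ,
      ← h1]
    linear_combination (e (M + k) + c * (-1) ^ k) * h2
  have hdpow : ∀ k, d k = α ^ k * d 0 := by
    intro k
    induction k with
    | zero => simp
    | succ k ih => rw [hdrec, ih]; ring
  have hebd : ∀ n, |e n| ≤ 1 / 2 := fun n => abs_sub_round _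
  have hdb : ∀ k, |d k| ≤ (1 / 2 + |c|) + |β| * (1 / 2 + |c|) := by
    intro k
    have hck : |c * (-1) ^ k| = |c| := by rw [abs_mul]; simp
    refine (abs_sub _ _).trans ?_
    rw [abs_mul]
    have q1 : |e (M + k + 1) - c * (-1) ^ k| ≤ 1 / 2 + |c| := by
      refine (abs_sub _ _).trans ?_
      rw [hck]; linarith [hebd (M + k + 1)]
    have q2 : |e (M + k) + c * (-1) ^ k| ≤ 1 / 2 + |c| := by
      refine (abs_add_le _ _).trans ?_
      rw [hck]; linarith [hebd (M + k)]
    have := mul_le_mul_of_nonneg_left q2 (abs_nonneg β)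
    linarith
  have hd0 : d 0 = 0 := by
    by_contra hne
    have hpos : 0 < |d 0| := abs_pos.2 hne
    obtain ⟨k, hk⟩ := pow_unbounded_of_one_lt (((1 / 2 + |c|) + |β| * (1 / 2 + |c|)) / |d 0|) hα
    rw [div_lt_iff₀ hpos] at hk
    have := hdb k
    rw [hdpow, abs_mul, abs_of_pos (by positivity : 0 < α ^ k)] at this
    linarith
  have hQ : Q α β b (-t) (ξ * α ^ M) := by
    refine ⟨u M, u (M + 1), ?_⟩
    simp only [hd, he, add_zero, pow_zero] at hd0
    push_cast
    rw [neg_div, ← hc]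
    linear_combination hd0
  refine ⟨-t * (-1) ^ M, ?_, Q_back hB hb h1 h2 M _ _ hQ⟩
  rcases neg_one_pow_eq_or ℤ M with h | h <;> rw [h] <;> omega

end S5

theorem stmt5 (b : ℤ) (hb : 4 ≤ b) (α α₂ : ℝ)
    (hα : α = ((b : ℝ) + Real.sqrt ((b : ℝ) ^ 2 - 4)) / 2) (hα₂ : α₂ = 1 / α)
    (X₀ X₁ : Set ℝ)
    (hX₀ : X₀ = {x : ℝ | ∃ y ∈ Algebra.adjoin ℤ ({α} : Set ℝ), x = (1 / (α - α₂)) * y})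
    (hX₁ : X₁ = {x : ℝ | ∃ ε : ℝ, (ε = 1 ∨ ε = -1) ∧
      ∃ y ∈ X₀, x = ε * ((α - 1) / ((b : ℝ) ^ 2 - 4)) + y}) :
    ({ξ : ℝ | limsupDist α ξ = 0} = X₀) ∧
    ({ξ : ℝ | limsupDist α ξ = 1 / (2 + (b : ℝ))} = X₁) ∧
    (∀ ξ : ℝ, ξ ∉ X₀ → 1 / (2 + (b : ℝ)) ≤ limsupDist α ξ) ∧
    (∀ ξ : ℝ, ξ ∉ X₀ ∪ X₁ → 1 / (1 + (b : ℝ)) ≤ limsupDist α ξ) := by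

  have hbR : (4 : ℝ) ≤ b := by exact_mod_cast hb
  have hD : (0 : ℝ) < (b : ℝ) ^ 2 - 4 := by nlinarith
  have hsq := Real.sq_sqrt hD.le
  have hspos := Real.sqrt_pos.2 hD
  have hα1 : 1 < α := by rw [hα]; linarith
  have hm : α * ((b : ℝ) - α) = 1 := by rw [hα]; linear_combination -hsq / 4
  have hβ : α₂ = b - α := by
    rw [hα₂, eq_comm, eq_div_iff (by linarith)]; linarith
  have h1 : α + α₂ = b := by rw [hβ]; ring
  have h2 : α * α₂ = 1 := by rw [hβ]; exact hm
  have hβ0 : 0 < α₂ := by rw [hα₂]; positivity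
  have hβ1 : α₂ < 1 := by nlinarith
  have hd : 0 < α - α₂ := by linarith
  have hd2 : (α - α₂) ^ 2 = (b : ℝ) ^ 2 - 4 := by rw [← h1]; linear_combination -4 * h2
  have hb2 : (b : ℝ) + 2 ≠ 0 := by linarith
  clear hα₂ hα
  have hQ0 : ∀ ξ, ξ ∈ X₀ ↔ S5.Q α α₂ b 0 ξ := by
    intro ξ
    rw [hX₀]
    simp only [Set.mem_ofPred_eq, S5.adj (B := b) rfl hm, S5.Q]
    constructor
    · rintro ⟨y, ⟨p, q, rfl⟩, rfl⟩
      refine ⟨q, p + q * b, ?_⟩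
      push_cast
      rw [← h1]
      field_simp
      ring
    · rintro ⟨v0, v1, h⟩
      refine ⟨_, ⟨v1 - b * v0, v0, rfl⟩, ?_⟩
      rw [one_div_mul_eq_div, eq_div_iff hd.ne', h, hβ]
      push_cast
      ring
  have hkey : (1 : ℝ) / (b + 2) * (1 + α₂) = - ((α - 1) / ((b : ℝ) ^ 2 - 4)) * (α - α₂) + 1 := by
    have e : (α - 1) / ((b : ℝ) ^ 2 - 4) * (α - α₂) = (α - 1) / (α - α₂) := by
      rw [← hd2]; field_simp
    rw [neg_mul, e]
    rw [← h1] at hb2 ⊢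
    field_simp
    linear_combination 2 * h2
  have hshift : ∀ (t : ℤ) (x : ℝ), S5.Q α α₂ b t (t * ((α - 1) / ((b : ℝ) ^ 2 - 4)) + x) ↔
      S5.Q α α₂ b 0 x := by
    intro t x
    have hk : (t : ℝ) / (b + 2) * (1 + α₂) =
      t * (- ((α - 1) / ((b : ℝ) ^ 2 - 4)) * (α - α₂) + 1) := by rw [← hkey]; ring
    unfold S5.Q
    rw [hk]
    constructor
    · rintro ⟨v0, v1, h⟩
      refine ⟨v0, v1 - t, ?_⟩
      push_cast
      linear_combination h
    · rintro ⟨v0, v1, h⟩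
      refine ⟨v0, v1 + t, ?_⟩
      push_cast at h ⊢
      linear_combination h
  have hQ1 : ∀ ξ, ξ ∈ X₁ ↔ S5.Q α α₂ b 1 ξ ∨ S5.Q α α₂ b (-1) ξ := by
    intro ξ
    rw [hX₁]
    simp only [Set.mem_ofPred_eq]
    constructor
    · rintro ⟨ε, h | h, y, hy, rfl⟩
      · left
        rw [h]
        simpa using (hshift 1 y).2 ((hQ0 y).1 hy)
      · right
        rw [h]
        simpa using (hshift (-1) y).2 ((hQ0 y).1 hy)
    · rintro (h | h)
      · refine ⟨1, Or.inl rfl, ξ - (α - 1) / ((b : ℝ) ^ 2 - 4), ?_, by ring⟩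
        rw [hQ0, ← hshift 1]
        simpa using h
      · refine ⟨-1, Or.inr rfl, ξ + (α - 1) / ((b : ℝ) ^ 2 - 4), ?_, by ring⟩
        rw [hQ0, ← hshift (-1)]
        simpa using h
  have L0 : ∀ ξ ∈ X₀, limsupDist α ξ = 0 := by
    intro ξ h
    have := S5.dist_tendsto (B := b) rfl hbR h1 h2 hβ0 hβ1 0 (by simp) ξ ((hQ0 ξ).1 h)
    simpa using this
  have L1 : ∀ ξ ∈ X₁, limsupDist α ξ = 1 / (2 + (b : ℝ)) := by
    intro ξ h
    rw [add_comm (2 : ℝ)]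
    rcases (hQ1 ξ).1 h with h | h
    · have := S5.dist_tendsto (B := b) rfl hbR h1 h2 hβ0 hβ1 1 (by simp) ξ h
      simpa using this
    · have := S5.dist_tendsto (B := b) rfl hbR h1 h2 hβ0 hβ1 (-1) (by simp) ξ h
      simpa using this
  have L2 : ∀ ξ : ℝ, ξ ∉ X₀ ∪ X₁ → 1 / (1 + (b : ℝ)) ≤ limsupDist α ξ := by
    intro ξ h
    by_contra hlt
    rw [not_le, add_comm (1 : ℝ)] at hlt
    obtain ⟨t, ht, hq⟩ := S5.main (B := b) rfl hbR h1 h2 hα1 ξ hlt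
    apply h
    rcases ht with rfl | rfl | rfl
    · exact Or.inl ((hQ0 ξ).2 hq)
    · exact Or.inr ((hQ1 ξ).2 (Or.inl hq))
    · exact Or.inr ((hQ1 ξ).2 (Or.inr hq))
  have p2 : (0 : ℝ) < 1 / (2 + (b : ℝ)) := by positivity
  have p1 : 1 / (2 + (b : ℝ)) < 1 / (1 + (b : ℝ)) :=
    one_div_lt_one_div_of_lt (by linarith) (by linarith)
  refine ⟨?_, ?_, ?_, L2⟩
  · ext ξ
    refine ⟨fun h => ?_, L0 ξ⟩
    rw [Set.mem_ofPred_eq] at h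
    by_contra h0
    by_cases hx : ξ ∈ X₁
    · linarith [L1 ξ hx]
    · have := L2 ξ (by simp [h0, hx])
      linarith
  · ext ξ
    refine ⟨fun h => ?_, L1 ξ⟩
    rw [Set.mem_ofPred_eq] at h
    by_contra hx
    by_cases h0 : ξ ∈ X₀
    · linarith [L0 ξ h0]
    · have := L2 ξ (by simp [h0, hx])
      linarith
  · intro ξ h0
    by_cases hx : ξ ∈ X₁
    · exact (L1 ξ hx).ge
    · have := L2 ξ (by simp [h0, hx])
      linarith
end
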